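/- arXiv:1509.07067 — 14 statements merged into one kernel-verified Lean document; each statement's English description precedes it below -/
import Mathlib

section
/- Let R be a commutative unital ring and let (C_k, d_i^+, d_i^-, s_i) be a weak skew cubical structure in R-modules. Fix α, β ∈ R and set ∂_k := α·∑_{i=1}^{k}(−1)^{i−1} d_i^+ + β·∑_{i=1}^{k}(−1)^{i−1} d_i^-. Then the submodules C_k^D := ∑_{i=1}^{k−1} range(s_i : C_{k−1} → C_k) satisfy ∂_k(C_k^D) ⊆ C_{k−1}^D; that is, the degenerate parts form a subcomplex of (C_k, ∂_k). -/
/-- The degenerate submodule `C_k^D = ∑_{i=1}^{k-1} Im(s_i : C_{k-1} → C_k)`.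
Here `s k i : C (k+1) → C (k+2)` corresponds to the classical degeneracy
`s_i : C_{k+1} → C_{k+2}`, `1 ≤ i ≤ k+1`. -/
def degSub {R : Type*} [CommRing R] {C : ℕ → Type*}
    [∀ k, AddCommGroup (C k)] [∀ k, Module R (C k)]
    (s : (k : ℕ) → ℕ → (C (k + 1) →ₗ[R] C (k + 2))) : (k : ℕ) → Submodule R (C k)
  | 0 => ⊥
  | 1 => ⊥
  | (k + 2) => ⨆ i ∈ Finset.Icc 1 (k + 1), LinearMap.range (s k i)

theorem altSum_mem {R M : Type*} [CommRing R] [AddCommGroup M] [Module R M]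
    (N : Submodule R M) (f : ℕ → M) (n j : ℕ) (hj : j + 1 < n) (hf : f j = f (j + 1))
    (h : ∀ i < n, i ≠ j → i ≠ j + 1 → f i ∈ N) :
    ∑ i ∈ Finset.range n, ((-1 : R) ^ i) • f i ∈ N := by
  have hsub : ({j, j + 1} : Finset ℕ) ⊆ Finset.range n := by
    intro x hx
    simp only [Finset.mem_insert, Finset.mem_singleton] at hx
    rw [Finset.mem_range]
    omega
  rw [← Finset.sum_sdiff hsub, Finset.sum_pair (by omega), hf, pow_succ]
  have h0 : (-1 : R) ^ j • f (j + 1) + ((-1 : R) ^ j * -1) • f (j + 1) = 0 := by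
    rw [← add_smul]; simp
  rw [h0, add_zero]
  refine Submodule.sum_mem _ fun i hi => N.smul_mem _ ?_
  simp only [Finset.mem_sdiff, Finset.mem_range, Finset.mem_insert, Finset.mem_singleton,
    not_or] at hi
  exact h i hi.1 hi.2.1 hi.2.2

/-- For a weak skew cubical structure in `R`-modules, the degenerate
parts `C_k^D = ∑_{i=1}^{k-1} Im s_i` form a subcomplex of `(C_k, ∂_k^{(α,β)})`. -/
theorem statement_1 {R : Type*} [CommRing R] (C : ℕ → Type*)
    [∀ k, AddCommGroup (C k)] [∀ k, Module R (C k)]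
    (dp dm : (k : ℕ) → ℕ → (C (k + 1) →ₗ[R] C k))
    (s : (k : ℕ) → ℕ → (C (k + 1) →ₗ[R] C (k + 2)))
    (hpre : ∀ (ε ζ : Bool) (k i j : ℕ), 1 ≤ i → i < j → j ≤ k + 2 →
      ((cond ε dp dm) k i).comp ((cond ζ dp dm) (k + 1) j)
        = ((cond ζ dp dm) k (j - 1)).comp ((cond ε dp dm) (k + 1) i))
    (hds1 : ∀ (ε : Bool) (k i j : ℕ), 1 ≤ i → i < j → j ≤ k + 2 →
      ((cond ε dp dm) (k + 2) i).comp (s (k + 1) j)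
        = (s k (j - 1)).comp ((cond ε dp dm) (k + 1) i))
    (hds2 : ∀ (ε : Bool) (k i j : ℕ), 1 ≤ j → j + 1 < i → i ≤ k + 3 →
      ((cond ε dp dm) (k + 2) i).comp (s (k + 1) j)
        = (s k j).comp ((cond ε dp dm) (k + 1) (i - 1)))
    (hds3 : ∀ (ε : Bool) (k i : ℕ), 1 ≤ i → i ≤ k + 1 →
      ((cond ε dp dm) (k + 1) i).comp (s k i)
        = ((cond ε dp dm) (k + 1) (i + 1)).comp (s k i))
    (α β : R)
    (D : (k : ℕ) → C (k + 1) →ₗ[R] C k)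
    (hD : ∀ k, D k
        = α • (∑ i ∈ Finset.range (k + 1), ((-1 : R) ^ i) • dp k (i + 1))
        + β • (∑ i ∈ Finset.range (k + 1), ((-1 : R) ^ i) • dm k (i + 1))) :
    ∀ k, Submodule.map (D k) (degSub s (k + 1)) ≤ degSub s k := by
  have key : ∀ (ε : Bool) (k j : ℕ), 1 ≤ j → j ≤ k + 1 → ∀ x : C (k + 1),
      ∑ i ∈ Finset.range (k + 1 + 1),
        ((-1 : R) ^ i) • (cond ε dp dm) (k + 1) (i + 1) (s k j x) ∈ degSub s (k + 1) := by
    intro ε k j hj1 hj2 x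
    obtain ⟨j, rfl⟩ : ∃ m, j = m + 1 := ⟨j - 1, by omega⟩
    refine altSum_mem _ (fun i => (cond ε dp dm) (k + 1) (i + 1) (s k (j + 1) x)) _ j
      (by omega) (LinearMap.congr_fun (hds3 ε k (j + 1) hj1 hj2) x) ?_
    intro i hi h1 h2
    cases k with
    | zero => omega
    | succ k =>
      have hmem : ∀ m, 1 ≤ m → m ≤ k + 1 → ∀ y, s k m y ∈ degSub s (k + 1 + 1) := by
        intro m hm1 hm2 y
        exact Submodule.mem_iSup_of_mem m (Submodule.mem_iSup_of_mem
          (Finset.mem_Icc.2 ⟨hm1, hm2⟩) ⟨y, rfl⟩)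
      rcases lt_or_gt_of_ne h1 with hlt | hgt
      · have e := LinearMap.congr_fun (hds1 ε k (i + 1) (j + 1) (by omega) (by omega) hj2) x
        simp only [LinearMap.comp_apply] at e
        change (cond ε dp dm) (k + 2) (i + 1) (s (k + 1) (j + 1) x) ∈ _
        rw [e]
        exact hmem _ (by omega) (by omega) _
      · have e := LinearMap.congr_fun (hds2 ε k (i + 1) (j + 1) hj1 (by omega) (by omega)) x
        simp only [LinearMap.comp_apply] at e
        change (cond ε dp dm) (k + 2) (i + 1) (s (k + 1) (j + 1) x) ∈ _
        rw [e]
        exact hmem _ (by omega) (by omega) _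
  intro k
  cases k with
  | zero => simp [degSub]
  | succ k =>
    rw [Submodule.map_le_iff_le_comap]
    change (⨆ i ∈ Finset.Icc 1 (k + 1), LinearMap.range (s k i)) ≤ _
    refine iSup₂_le fun j hj => ?_
    rw [Finset.mem_Icc] at hj
    rintro _ ⟨x, rfl⟩
    rw [Submodule.mem_comap, hD]
    simp only [LinearMap.add_apply, LinearMap.smul_apply, LinearMap.sum_apply]
    exact Submodule.add_mem _ (Submodule.smul_mem _ _ (key true k j hj.1 hj.2 x))
      (Submodule.smul_mem _ _ (key false k j hj.1 hj.2 x))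
end

section
/- Let R be a commutative unital ring and let (C_k, d_i^+, d_i^-, s_i) be a semi-strong skew cubical structure in R-modules. Define η_k := (Id − s_1∘d_2^+)∘(Id − s_2∘d_3^+)∘⋯∘(Id − s_{k−1}∘d_k^+) : C_k → C_k, and set C_k^D := ∑_{i=1}^{k−1} range(s_i : C_{k−1} → C_k) and C_k^N := range(η_k). Then C_k is the internal direct sum C_k^D ⊕ C_k^N of R-submodules, and for every α, β ∈ R the differential ∂_k := α·∑_{i=1}^{k}(−1)^{i−1} d_i^+ + β·∑_{i=1}^{k}(−1)^{i−1} d_i^- maps C_k^D into C_{k−1}^D and C_k^N into C_{k−1}^N. -/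
/-- The map `η_k = (Id - s_1 d_2^+)(Id - s_2 d_3^+) ⋯ (Id - s_{k-1} d_k^+) : C_k → C_k`
(trivial for `k = 0, 1`). -/
def etaMap {R : Type*} [CommRing R] {C : ℕ → Type*}
    [∀ k, AddCommGroup (C k)] [∀ k, Module R (C k)]
    (dp : (k : ℕ) → ℕ → (C (k + 1) →ₗ[R] C k))
    (s : (k : ℕ) → ℕ → (C (k + 1) →ₗ[R] C (k + 2))) : (k : ℕ) → (C k →ₗ[R] C k)
  | 0 => LinearMap.id
  | 1 => LinearMap.id
  | (k + 2) => (List.range (k + 1)).foldl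
      (fun acc i =>
        acc.comp (LinearMap.id - (s k (i + 1)).comp (dp (k + 1) (i + 2))))
      LinearMap.id

/-- Partial products of `etaMap`. -/
def etaPart {R : Type*} [CommRing R] {C : ℕ → Type*}
    [∀ k, AddCommGroup (C k)] [∀ k, Module R (C k)]
    (dp : (k : ℕ) → ℕ → (C (k + 1) →ₗ[R] C k))
    (s : (k : ℕ) → ℕ → (C (k + 1) →ₗ[R] C (k + 2))) (k m : ℕ) : C (k + 2) →ₗ[R] C (k + 2) :=
  (List.range m).foldl
      (fun acc i =>
        acc.comp (LinearMap.id - (s k (i + 1)).comp (dp (k + 1) (i + 2))))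
      LinearMap.id

theorem etaPart_zero {R : Type*} [CommRing R] {C : ℕ → Type*}
    [∀ k, AddCommGroup (C k)] [∀ k, Module R (C k)]
    (dp : (k : ℕ) → ℕ → (C (k + 1) →ₗ[R] C k))
    (s : (k : ℕ) → ℕ → (C (k + 1) →ₗ[R] C (k + 2))) (k : ℕ) (x : C (k + 2)) :
    etaPart dp s k 0 x = x := rfl

theorem etaPart_succ {R : Type*} [CommRing R] {C : ℕ → Type*}
    [∀ k, AddCommGroup (C k)] [∀ k, Module R (C k)]
    (dp : (k : ℕ) → ℕ → (C (k + 1) →ₗ[R] C k))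
    (s : (k : ℕ) → ℕ → (C (k + 1) →ₗ[R] C (k + 2))) (k m : ℕ) (x : C (k + 2)) :
    etaPart dp s k (m + 1) x
      = etaPart dp s k m (x - s k (m + 1) (dp (k + 1) (m + 2) x)) := by
  unfold etaPart
  rw [List.range_succ, List.foldl_append]
  rfl

theorem etaMap_two {R : Type*} [CommRing R] {C : ℕ → Type*}
    [∀ k, AddCommGroup (C k)] [∀ k, Module R (C k)]
    (dp : (k : ℕ) → ℕ → (C (k + 1) →ₗ[R] C k))
    (s : (k : ℕ) → ℕ → (C (k + 1) →ₗ[R] C (k + 2))) (k : ℕ) :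
    etaMap dp s (k + 2) = etaPart dp s k (k + 1) := rfl

theorem degSub_two {R : Type*} [CommRing R] {C : ℕ → Type*}
    [∀ k, AddCommGroup (C k)] [∀ k, Module R (C k)]
    (s : (k : ℕ) → ℕ → (C (k + 1) →ₗ[R] C (k + 2))) (k : ℕ) :
    degSub s (k + 2) = ⨆ i ∈ Finset.Icc 1 (k + 1), LinearMap.range (s k i) := rfl

theorem s_mem_degSub {R : Type*} [CommRing R] {C : ℕ → Type*}
    [∀ k, AddCommGroup (C k)] [∀ k, Module R (C k)]
    (s : (k : ℕ) → ℕ → (C (k + 1) →ₗ[R] C (k + 2))) (k i : ℕ) (h1 : 1 ≤ i) (h2 : i ≤ k + 1)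
    (z : C (k + 1)) : s k i z ∈ degSub s (k + 2) := by
  rw [degSub_two]
  exact Submodule.mem_iSup_of_mem i
    (Submodule.mem_iSup_of_mem (Finset.mem_Icc.2 ⟨h1, h2⟩) ⟨z, rfl⟩)

/-- A sum with alternating signs in which only two equal adjacent terms may fall outside a submodule. -/
theorem altsum_mem {R M : Type*} [CommRing R] [AddCommGroup M] [Module R M] (N : Submodule R M)
    (f : ℕ → M) (n j : ℕ) (hj : j + 1 < n) (h : ∀ i < n, i ≠ j → i ≠ j + 1 → f i ∈ N)
    (he : f j = f (j + 1)) : ∑ i ∈ Finset.range n, ((-1 : R) ^ i) • f i ∈ N := by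
  rw [← Finset.add_sum_erase _ _ (Finset.mem_range.2 (show j < n by omega)),
    ← Finset.add_sum_erase _ _ (Finset.mem_erase.2
      ⟨show j + 1 ≠ j by omega, Finset.mem_range.2 hj⟩), ← add_assoc, he, ← add_smul]
  have : (-1 : R) ^ j + (-1) ^ (j + 1) = 0 := by ring
  rw [this, zero_smul, zero_add]
  refine Submodule.sum_mem _ fun i hi => Submodule.smul_mem _ _ ?_
  simp only [Finset.mem_erase, Finset.mem_range] at hi
  exact h i hi.2.2 hi.2.1 hi.1

/-- For a semi-strong skew cubical structure in `R`-modules, with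
`C_k^D = ∑_{i=1}^{k-1} Im s_i` and `C_k^N = Im η_k`, one has the internal direct
sum decomposition `C_k = C_k^D ⊕ C_k^N`, and for all `α, β ∈ R` the differential
`∂_k^{(α,β)}` maps `C_k^D` into `C_{k-1}^D` and `C_k^N` into `C_{k-1}^N`. -/
theorem statement_2 {R : Type*} [CommRing R] (C : ℕ → Type*)
    [∀ k, AddCommGroup (C k)] [∀ k, Module R (C k)]
    (dp dm : (k : ℕ) → ℕ → (C (k + 1) →ₗ[R] C k))
    (s : (k : ℕ) → ℕ → (C (k + 1) →ₗ[R] C (k + 2)))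
    (hpre : ∀ (ε ζ : Bool) (k i j : ℕ), 1 ≤ i → i < j → j ≤ k + 2 →
      ((cond ε dp dm) k i).comp ((cond ζ dp dm) (k + 1) j)
        = ((cond ζ dp dm) k (j - 1)).comp ((cond ε dp dm) (k + 1) i))
    (hds1 : ∀ (ε : Bool) (k i j : ℕ), 1 ≤ i → i < j → j ≤ k + 2 →
      ((cond ε dp dm) (k + 2) i).comp (s (k + 1) j)
        = (s k (j - 1)).comp ((cond ε dp dm) (k + 1) i))
    (hds2 : ∀ (ε : Bool) (k i j : ℕ), 1 ≤ j → j + 1 < i → i ≤ k + 3 →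
      ((cond ε dp dm) (k + 2) i).comp (s (k + 1) j)
        = (s k j).comp ((cond ε dp dm) (k + 1) (i - 1)))
    (hds3 : ∀ (ε : Bool) (k i : ℕ), 1 ≤ i → i ≤ k + 1 →
      ((cond ε dp dm) (k + 1) i).comp (s k i)
        = ((cond ε dp dm) (k + 1) (i + 1)).comp (s k i))
    (hss : ∀ (k i j : ℕ), 1 ≤ i → i ≤ j → j ≤ k + 1 →
      (s (k + 1) i).comp (s k j) = (s (k + 1) (j + 1)).comp (s k i))
    (hid : ∀ (k i : ℕ), 1 ≤ i → i ≤ k + 1 →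
      (dp (k + 1) i).comp (s k i) = LinearMap.id ∧
      (dp (k + 1) (i + 1)).comp (s k i) = LinearMap.id)
    (D : R → R → (k : ℕ) → C (k + 1) →ₗ[R] C k)
    (hD : ∀ α β k, D α β k
        = α • (∑ i ∈ Finset.range (k + 1), ((-1 : R) ^ i) • dp k (i + 1))
        + β • (∑ i ∈ Finset.range (k + 1), ((-1 : R) ^ i) • dm k (i + 1))) :
    (∀ k, degSub s k ⊔ LinearMap.range (etaMap dp s k) = ⊤ ∧
          degSub s k ⊓ LinearMap.range (etaMap dp s k) = ⊥) ∧
    (∀ (α β : R) (k : ℕ),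
        Submodule.map (D α β k) (degSub s (k + 1)) ≤ degSub s k ∧
        Submodule.map (D α β k) (LinearMap.range (etaMap dp s (k + 1)))
          ≤ LinearMap.range (etaMap dp s k)) := by
  have hpre' : ∀ (ε ζ : Bool) (k i j : ℕ) (x : C (k + 2)), 1 ≤ i → i < j → j ≤ k + 2 →
      (cond ε dp dm) k i ((cond ζ dp dm) (k + 1) j x)
        = (cond ζ dp dm) k (j - 1) ((cond ε dp dm) (k + 1) i x) :=
    fun ε ζ k i j x h1 h2 h3 => LinearMap.congr_fun (hpre ε ζ k i j h1 h2 h3) x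
  have hds1' : ∀ (ε : Bool) (k i j : ℕ) (x : C (k + 2)), 1 ≤ i → i < j → j ≤ k + 2 →
      (cond ε dp dm) (k + 2) i (s (k + 1) j x)
        = s k (j - 1) ((cond ε dp dm) (k + 1) i x) :=
    fun ε k i j x h1 h2 h3 => LinearMap.congr_fun (hds1 ε k i j h1 h2 h3) x
  have hds2' : ∀ (ε : Bool) (k i j : ℕ) (x : C (k + 2)), 1 ≤ j → j + 1 < i → i ≤ k + 3 →
      (cond ε dp dm) (k + 2) i (s (k + 1) j x)
        = s k j ((cond ε dp dm) (k + 1) (i - 1) x) :=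
    fun ε k i j x h1 h2 h3 => LinearMap.congr_fun (hds2 ε k i j h1 h2 h3) x
  have hds3' : ∀ (ε : Bool) (k i : ℕ) (x : C (k + 1)), 1 ≤ i → i ≤ k + 1 →
      (cond ε dp dm) (k + 1) i (s k i x) = (cond ε dp dm) (k + 1) (i + 1) (s k i x) :=
    fun ε k i x h1 h2 => LinearMap.congr_fun (hds3 ε k i h1 h2) x
  have hss' : ∀ (k i j : ℕ) (x : C (k + 1)), 1 ≤ i → i ≤ j → j ≤ k + 1 →
      s (k + 1) i (s k j x) = s (k + 1) (j + 1) (s k i x) :=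
    fun k i j x h1 h2 h3 => LinearMap.congr_fun (hss k i j h1 h2 h3) x
  have hid' : ∀ (k i : ℕ) (x : C (k + 1)), 1 ≤ i → i ≤ k + 1 →
      dp (k + 1) (i + 1) (s k i x) = x :=
    fun k i x h1 h2 => LinearMap.congr_fun (hid k i h1 h2).2 x
  -- elements killed by `d_j^+` stay so under the first factors
  have hA : ∀ (k j m : ℕ), m + 1 < j → j ≤ k + 2 → ∀ y : C (k + 2), dp (k + 1) j y = 0 →
      dp (k + 1) j (etaPart dp s k m y) = 0 := by
    intro k j m
    induction m with
    | zero => intro _ _ y hy; exact hy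
    | succ m ih =>
      intro h1 h2 y hy
      rw [etaPart_succ]
      apply ih (by omega) h2
      obtain ⟨k, rfl⟩ : ∃ k', k = k' + 1 := ⟨k - 1, by omega⟩
      have e1 := hds2' true k j (m + 1) (dp (k + 2) (m + 2) y) (by omega) (by omega) (by omega)
      have e2 := hpre' true true (k + 1) (m + 2) j y (by omega) (by omega) (by omega)
      simp only [cond_true] at e1 e2
      rw [map_sub, hy, e1, ← e2, hy]
      simp
  have hB : ∀ (k m : ℕ), m ≤ k + 1 → ∀ j, 2 ≤ j → j ≤ m + 1 → ∀ x : C (k + 2),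
      dp (k + 1) j (etaPart dp s k m x) = 0 := by
    intro k m
    induction m with
    | zero => intro _ j _ _; omega
    | succ m ih =>
      intro hm j h2 hj x
      rw [etaPart_succ]
      by_cases h : j ≤ m + 1
      · exact ih (by omega) j h2 h _
      · obtain rfl : j = m + 2 := by omega
        apply hA k (m + 2) m (by omega) (by omega)
        rw [map_sub, hid' k (m + 1) _ (by omega) (by omega), sub_self]
  have hS : ∀ (k m : ℕ), m ≤ k + 1 → ∀ j, 1 ≤ j → j ≤ m → ∀ z : C (k + 1),
      etaPart dp s k m (s k j z) = 0 := by
    intro k m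
    induction m with
    | zero => intro _ j _ _; omega
    | succ m ih =>
      intro hm j h1 hj z
      rw [etaPart_succ]
      by_cases h : j ≤ m
      · obtain ⟨k, rfl⟩ : ∃ k', k = k' + 1 := ⟨k - 1, by omega⟩
        have e1 := hds2' true k (m + 2) j z h1 (by omega) (by omega)
        simp only [cond_true] at e1
        have e2 := hss' k j m (dp (k + 1) (m + 1) z) h1 h (by omega)
        rw [e1, show m + 2 - 1 = m + 1 by omega, ← e2, ← map_sub]
        exact ih (by omega) j h1 h _
      · obtain rfl : j = m + 1 := by omega
        rw [hid' k (m + 1) _ (by omega) (by omega), sub_self, map_zero]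
  have hC : ∀ (k m : ℕ), m ≤ k + 1 → ∀ x : C (k + 2),
      x - etaPart dp s k m x ∈ degSub s (k + 2) := by
    intro k m
    induction m with
    | zero => intro _ x; rw [etaPart_zero, sub_self]; exact Submodule.zero_mem _
    | succ m ih =>
      intro hm x
      rw [etaPart_succ]
      have := Submodule.add_mem _ (ih (by omega) (x - s k (m + 1) (dp (k + 1) (m + 2) x)))
        (s_mem_degSub s k (m + 1) (by omega) hm (dp (k + 1) (m + 2) x))
      convert this using 1
      abel
  have hF : ∀ (k m : ℕ) (x : C (k + 2)), (∀ j, 2 ≤ j → j ≤ m + 1 → dp (k + 1) j x = 0) →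
      etaPart dp s k m x = x := by
    intro k m x
    induction m with
    | zero => intro _; rfl
    | succ m ih =>
      intro h
      rw [etaPart_succ, h (m + 2) (by omega) (by omega), map_zero, sub_zero]
      exact ih fun j h1 h2 => h j h1 (by omega)
  have hK : ∀ k, degSub s (k + 2) ≤ LinearMap.ker (etaPart dp s k (k + 1)) := by
    intro k
    rw [degSub_two]
    refine iSup₂_le fun i hi => ?_
    rw [Finset.mem_Icc] at hi
    rintro _ ⟨z, rfl⟩
    exact hS k (k + 1) le_rfl i hi.1 hi.2 z
  refine ⟨?_, ?_⟩
  · rintro (_ | _ | k)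
    · simp [degSub, etaMap]
    · simp [degSub, etaMap]
    · rw [etaMap_two]
      constructor
      · rw [eq_top_iff]
        intro x _
        have := Submodule.add_mem_sup (hC k (k + 1) le_rfl x)
          (LinearMap.mem_range_self (etaPart dp s k (k + 1)) x)
        rwa [sub_add_cancel] at this
      · rw [eq_bot_iff]
        rintro x ⟨h1, y, rfl⟩
        have h2 := hK k h1
        rw [LinearMap.mem_ker, hF k (k + 1) _ fun j h2 h3 => hB k (k + 1) le_rfl j h2 h3 y] at h2
        exact h2
  · intro α β k
    constructor
    · rcases k with _ | k
      · simp [degSub]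
      · rw [Submodule.map_le_iff_le_comap, degSub_two]
        refine iSup₂_le fun j hj => ?_
        rw [Finset.mem_Icc] at hj
        rintro _ ⟨z, rfl⟩
        have key : ∀ ε : Bool, ∑ i ∈ Finset.range (k + 1 + 1),
            ((-1 : R) ^ i) • (cond ε dp dm) (k + 1) (i + 1) (s k j z) ∈ degSub s (k + 1) := by
          intro ε
          refine altsum_mem _ (fun i => (cond ε dp dm) (k + 1) (i + 1) (s k j z)) _ (j - 1)
            (by omega) ?_ ?_
          · intro i hi n1 n2
            obtain ⟨k, rfl⟩ : ∃ k', k = k' + 1 := ⟨k - 1, by omega⟩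
            by_cases h : i + 1 < j
            · skip
              rw [hds1' ε k (i + 1) j z (by omega) h (by omega)]
              exact s_mem_degSub s k _ (by omega) (by omega) _
            · skip
              rw [hds2' ε k (i + 1) j z (by omega) (by omega) (by omega)]
              exact s_mem_degSub s k _ (by omega) (by omega) _
          · skip
            rw [show j - 1 + 1 = j by omega]
            exact hds3' ε k j z hj.1 hj.2
        rw [Submodule.mem_comap, hD]
        simp only [LinearMap.add_apply, LinearMap.smul_apply, LinearMap.sum_apply]
        exact Submodule.add_mem _ (Submodule.smul_mem _ _ (key true))
          (Submodule.smul_mem _ _ (key false))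
    · rcases k with _ | _ | k
      · simp [etaMap]
      · simp [etaMap]
      · rw [etaMap_two, etaMap_two]
        rintro _ ⟨_, ⟨x, rfl⟩, rfl⟩
        have hx := fun j h2 h3 => hB (k + 1) (k + 1 + 1) le_rfl j h2 h3 x
        generalize etaPart dp s (k + 1) (k + 1 + 1) x = y at hx
        have key : ∀ (ε : Bool) (i : ℕ), 1 ≤ i → i ≤ k + 3 →
            (cond ε dp dm) (k + 2) i y ∈ LinearMap.range (etaPart dp s k (k + 1)) := by
          intro ε i h1 h2
          refine ⟨_, hF k (k + 1) _ ?_⟩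
          intro j h3 h4
          by_cases h : j < i
          · have e := hpre' true ε (k + 1) j i y (by omega) h (by omega)
            simp only [cond_true] at e
            rw [e, hx j h3 (by omega), map_zero]
          · have e := hpre' ε true (k + 1) i (j + 1) y h1 (by omega) (by omega)
            simp only [cond_true, Nat.add_sub_cancel] at e
            rw [← e, hx (j + 1) (by omega) (by omega), map_zero]
        rw [hD]
        simp only [LinearMap.add_apply, LinearMap.smul_apply, LinearMap.sum_apply]
        refine Submodule.add_mem _ (Submodule.smul_mem _ _ ?_) (Submodule.smul_mem _ _ ?_)
        · refine Submodule.sum_mem _ fun i hi => Submodule.smul_mem _ _ ?_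
          rw [Finset.mem_range] at hi
          exact key true (i + 1) (by omega) (by omega)
        · refine Submodule.sum_mem _ fun i hi => Submodule.smul_mem _ _ ?_
          rw [Finset.mem_range] at hi
          exact key false (i + 1) (by omega) (by omega)
end

section
/- Let (X, σ) be a braided set, M a right module and N a left module over (X, σ). On C_n := M × Xⁿ × N define, for 1 ≤ i ≤ n, the maps d_i^{l,+} := ρ_0 ∘ σ_1 ∘ ⋯ ∘ σ_{i−1} and d_i^{r,−} := λ_n ∘ σ_{n−1} ∘ ⋯ ∘ σ_i from C_n to C_{n−1} (σ_{i−1} applied first, and σ_i applied first, respectively; d_1^{l,+} = ρ_0 and d_n^{r,−} = λ_n). Then: (1) these maps satisfy the pre-cubical relations d_i^ε ∘ d_j^ζ = d_{j−1}^ζ ∘ d_i^ε for all 1 ≤ i < j ≤ n and all ε, ζ ∈ {(l,+), (r,−)}; (2) if moreover σ is bijective and one also defines d_i^{l,−} := ρ_0 ∘ σ_1^{−1} ∘ ⋯ ∘ σ_{i−1}^{−1} and d_i^{r,+} := λ_n ∘ σ_{n−1}^{−1} ∘ ⋯ ∘ σ_i^{−1}, then for every choice ε, ζ ∈ {l, r}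 the pair of families (d_i^{ε,+}, d_i^{ζ,−}) satisfies the same pre-cubical relations. -/
/-- `σ` applied at positions 1,2 of `X × X × X`. -/
def s12 {X : Type*} (σ : X × X → X × X) : X × X × X → X × X × X :=
  fun p => ((σ (p.1, p.2.1)).1, (σ (p.1, p.2.1)).2, p.2.2)

/-- `σ` applied at positions 2,3 of `X × X × X`. -/
def s23 {X : Type*} (σ : X × X → X × X) : X × X × X → X × X × X :=
  fun p => (p.1, σ p.2)

/-- Apply `σ` at (1-based) positions `i, i+1` of a list. -/
def applyAt {X : Type*} (σ : X × X → X × X) : ℕ → List X → List X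
  | 1, a :: b :: t => (σ (a, b)).1 :: (σ (a, b)).2 :: t
  | n + 2, a :: t => a :: applyAt σ (n + 1) t
  | _, l => l

/-- `σ_1 ∘ σ_2 ∘ ⋯ ∘ σ_j` (with `σ_j` applied first). -/
def chainLow {X : Type*} (σ : X × X → X × X) : ℕ → List X → List X
  | 0, l => l
  | j + 1, l => chainLow σ j (applyAt σ (j + 1) l)

/-- `σ_{i+c-1} ∘ ⋯ ∘ σ_{i+1} ∘ σ_i` (with `σ_i` applied first). -/
def chainHigh {X : Type*} (σ : X × X → X × X) : ℕ → ℕ → List X → List X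
  | _, 0, l => l
  | i, c + 1, l => chainHigh σ (i + 1) c (applyAt σ i l)

/-- `ρ_0`: act with the first `X`-entry on the `M`-component. -/
def rho0 {X M N : Type*} (actM : M → X → M) :
    M × List X × N → M × List X × N
  | (m, x :: t, ν) => (actM m x, t, ν)
  | p => p

/-- `λ_n`: act with the last `X`-entry on the `N`-component. -/
def lamN {X M N : Type*} (actN : X → N → N) :
    M × List X × N → M × List X × N :=
  fun p =>
    match p.2.1.getLast? with
    | some a => (p.1, p.2.1.dropLast, actN a p.2.2)
    | none => p

/-- The braided boundary `d_i^{l,+} = ρ_0 ∘ σ_1 ∘ ⋯ ∘ σ_{i-1}`. -/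
def dLP {X M N : Type*} (σ : X × X → X × X) (actM : M → X → M) (i : ℕ) :
    M × List X × N → M × List X × N :=
  fun p => rho0 actM (p.1, chainLow σ (i - 1) p.2.1, p.2.2)

/-- The braided boundary `d_i^{r,-} = λ_n ∘ σ_{n-1} ∘ ⋯ ∘ σ_i`. -/
def dRM {X M N : Type*} (σ : X × X → X × X) (actN : X → N → N) (n i : ℕ) :
    M × List X × N → M × List X × N :=
  fun p => lamN actN (p.1, chainHigh σ i (n - i) p.2.1, p.2.2)

theorem A_len {X : Type*} (σ : X × X → X × X) (k : ℕ) (l : List X) :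
    (applyAt σ k l).length = l.length := by
  fun_induction applyAt σ k l <;> simp_all

theorem A_succ {X : Type*} (σ : X × X → X × X) (k : ℕ) (hk : 1 ≤ k) (x : X) (l : List X) :
    applyAt σ (k + 1) (x :: l) = x :: applyAt σ k l := by
  obtain ⟨k, rfl⟩ : ∃ j, k = j + 1 := ⟨k - 1, by omega⟩
  simp [applyAt]

theorem A_one {X : Type*} (σ : X × X → X × X) (a b : X) (t : List X) :
    applyAt σ 1 (a :: b :: t) = (σ (a, b)).1 :: (σ (a, b)).2 :: t := by
  simp [applyAt]

theorem A_split {X : Type*} (σ : X × X → X × X) (u : List X) (a b : X) (v : List X) :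
    applyAt σ (u.length + 1) (u ++ a :: b :: v)
      = u ++ (σ (a, b)).1 :: (σ (a, b)).2 :: v := by
  induction u with
  | nil => simp [applyAt]
  | cons x u ih =>
    simp only [List.length_cons, List.cons_append]
    rw [A_succ _ _ (by omega), ih]

theorem ex_split {X : Type*} (k : ℕ) (l : List X) (hk : 1 ≤ k) (h : k + 1 ≤ l.length) :
    ∃ u a b v, l = u ++ a :: b :: v ∧ k = u.length + 1 := by
  induction l generalizing k with
  | nil => simp at h
  | cons x l ih =>
    rcases Nat.lt_or_ge 1 k with h1 | h1
    · obtain ⟨u, a, b, v, rfl, hk'⟩ := ih (k - 1) (by omega) (by simp at h; omega)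
      exact ⟨x :: u, a, b, v, rfl, by simp; omega⟩
    · cases l with
      | nil => simp at h; omega
      | cons y l => exact ⟨[], x, y, l, rfl, by simp; omega⟩

theorem A_comm {X : Type*} (σ τ : X × X → X × X) (k j : ℕ) (l : List X)
    (hk : 1 ≤ k) (h : k + 2 ≤ j) :
    applyAt σ k (applyAt τ j l) = applyAt τ j (applyAt σ k l) := by
  induction l generalizing k j with
  | nil => simp [applyAt]
  | cons x l ih =>
    obtain ⟨j, rfl⟩ : ∃ i, j = i + 1 := ⟨j - 1, by omega⟩
    rw [A_succ _ _ (by omega)]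
    rcases Nat.lt_or_ge 1 k with h1 | h1
    · obtain ⟨k, rfl⟩ : ∃ i, k = i + 1 := ⟨k - 1, by omega⟩
      rw [A_succ _ _ (by omega), A_succ _ _ (by omega), A_succ _ _ (by omega),
        ih _ _ (by omega) (by omega)]
    · obtain rfl : k = 1 := by omega
      obtain ⟨j, rfl⟩ : ∃ i, j = i + 1 := ⟨j - 1, by omega⟩
      cases l with
      | nil => simp [applyAt]
      | cons y l =>
        have hj : 1 ≤ j := by omega
        rw [A_succ τ j hj y l, A_one, A_one, A_succ τ (j + 1) (by omega), A_succ τ j hj]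

def MYB {X : Type*} (σ τ : X × X → X × X) : Prop :=
  ∀ q, s23 σ (s12 τ (s23 τ q)) = s12 τ (s23 τ (s12 σ q))

theorem A_yb {X : Type*} {σ τ : X × X → X × X} (H : MYB σ τ) (k : ℕ) (l : List X)
    (hk : 1 ≤ k) (h : k + 2 ≤ l.length) :
    applyAt σ (k + 1) (applyAt τ k (applyAt τ (k + 1) l))
      = applyAt τ k (applyAt τ (k + 1) (applyAt σ k l)) := by
  induction l generalizing k with
  | nil => simp at h
  | cons x l ih =>
    simp only [List.length_cons] at h
    rcases Nat.lt_or_ge 1 k with h1 | h1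
    · obtain ⟨k, rfl⟩ : ∃ i, k = i + 1 := ⟨k - 1, by omega⟩
      have hk' : 1 ≤ k := by omega
      simp only [A_succ _ _ hk', A_succ _ _ hk]
      rw [ih _ hk' (by omega)]
    · obtain rfl : k = 1 := by omega
      match l, h with
      | y :: z :: l, _ =>
        have := H (x, y, z)
        simp only [s12, s23, Prod.mk.injEq] at this
        obtain ⟨h1, h2⟩ := this
        have h3 := congrArg Prod.fst h2
        have h4 := congrArg Prod.snd h2
        simp only at h3 h4
        simp only [A_succ _ 1 le_rfl, A_one, h1, h3, h4]

theorem CL_len {X : Type*} (σ : X × X → X × X) (c : ℕ) (l : List X) :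
    (chainLow σ c l).length = l.length := by
  induction c generalizing l with
  | zero => rfl
  | succ c ih => rw [chainLow, ih, A_len]

theorem CH_len {X : Type*} (σ : X × X → X × X) (i c : ℕ) (l : List X) :
    (chainHigh σ i c l).length = l.length := by
  induction c generalizing i l with
  | zero => rfl
  | succ c ih => rw [chainHigh, ih, A_len]

theorem CL_comm {X : Type*} (σ τ : X × X → X × X) (c k : ℕ) (l : List X) (h : c + 2 ≤ k) :
    applyAt σ k (chainLow τ c l) = chainLow τ c (applyAt σ k l) := by
  induction c generalizing l with
  | zero => rfl
  | succ c ih =>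
    rw [chainLow, ih _ (by omega), chainLow, A_comm τ σ (c + 1) k l (by omega) (by omega)]

theorem CL_A {X : Type*} {σ τ : X × X → X × X} (H : MYB σ τ) (c k : ℕ) (l : List X)
    (hk : 1 ≤ k) (hc : k + 1 ≤ c) (h : c + 1 ≤ l.length) :
    applyAt σ (k + 1) (chainLow τ c l) = chainLow τ c (applyAt σ k l) := by
  induction c generalizing l with
  | zero => omega
  | succ c ih =>
    rcases Nat.lt_or_ge k c with h1 | h1
    · rw [chainLow, ih _ (by omega) (by rw [A_len]; omega), chainLow,
        A_comm _ _ _ _ _ (by omega) (by omega)]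
    · obtain rfl : k = c := by omega
      obtain ⟨k, rfl⟩ : ∃ i, k = i + 1 := ⟨k - 1, by omega⟩
      rw [chainLow, chainLow, CL_comm _ _ _ _ _ (by omega), A_yb H _ _ (by omega) (by omega)]
      rfl

theorem CL_cons {X : Type*} (τ : X × X → X × X) (c : ℕ) (x : X) (t : List X) :
    chainLow τ (c + 1) (x :: t) = applyAt τ 1 (x :: chainLow τ c t) := by
  induction c generalizing t with
  | zero => rfl
  | succ c ih => rw [chainLow, A_succ _ _ (by omega), ih, chainLow]

theorem CL_CL {X : Type*} {σ τ : X × X → X × X} (H : MYB σ τ) (c d : ℕ) (l : List X)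
    (x : X) (t : List X) (hc : c < d) (h : d + 1 ≤ l.length) (e : chainLow τ d l = x :: t) :
    x :: chainLow σ c t = chainLow τ d (chainLow σ c l) := by
  induction c generalizing l t with
  | zero => exact e.symm
  | succ c ih =>
    rw [chainLow, chainLow]
    apply ih _ _ (by omega) (by rw [A_len]; omega)
    rw [← CL_A H _ _ _ (by omega) (by omega) h, e, A_succ _ _ (by omega)]

theorem exists_cons {X : Type*} (l : List X) (h : 1 ≤ l.length) : ∃ x t, l = x :: t := by
  cases l with
  | nil => simp at h
  | cons x t => exact ⟨x, t, rfl⟩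

theorem exists_concat {X : Type*} (l : List X) (h : 1 ≤ l.length) : ∃ t x, l = t ++ [x] := by
  rcases List.eq_nil_or_concat l with h' | ⟨t, x, h'⟩
  · simp [h'] at h
  · exact ⟨t, x, by simpa using h'⟩

theorem LL {X M N : Type*} {σ τ : X × X → X × X} (H : MYB σ τ) (actM : M → X → M)
    (hM : ∀ (m : M) (a b : X),
      actM (actM m a) b = actM (actM m (τ (a, b)).1) (τ (a, b)).2)
    (n i j : ℕ) (p : M × List X × N) (hp : p.2.1.length = n)
    (hi : 1 ≤ i) (hij : i < j) (hj : j ≤ n) :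
    dLP σ actM i (dLP τ actM j p) = dLP τ actM (j - 1) (dLP σ actM i p) := by
  obtain ⟨m, l, ν⟩ := p
  simp only at hp
  obtain ⟨i, rfl⟩ : ∃ k, i = k + 1 := ⟨i - 1, by omega⟩
  obtain ⟨j, rfl⟩ : ∃ k, j = k + 1 + 1 := ⟨j - 2, by omega⟩
  simp only [dLP, Nat.add_sub_cancel]
  obtain ⟨x, t, e⟩ := exists_cons (chainLow τ (j + 1) l) (by rw [CL_len]; omega)
  have key := CL_CL H i (j + 1) l x t (by omega) (by omega) e
  obtain ⟨y, s, e2⟩ := exists_cons (chainLow σ i l) (by rw [CL_len]; omega)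
  have hs : s.length + 1 = n := by
    have := congrArg List.length e2
    rw [CL_len] at this
    simp at this; omega
  obtain ⟨z, u, e3⟩ := exists_cons (chainLow τ j s) (by rw [CL_len]; omega)
  rw [e2, CL_cons, e3, A_one] at key
  injection key with k1 k2
  simp only [e, e2, rho0, e3, k2]
  rw [hM m y z, k1]

theorem CH_cons {X : Type*} (σ : X × X → X × X) (i c : ℕ) (hi : 1 ≤ i) (x : X) (t : List X) :
    chainHigh σ (i + 1) c (x :: t) = x :: chainHigh σ i c t := by
  induction c generalizing i t with
  | zero => rfl
  | succ c ih => rw [chainHigh, A_succ _ _ hi, ih _ (by omega), chainHigh]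

theorem A_concat {X : Type*} (σ : X × X → X × X) (k : ℕ) (l : List X) (x : X)
    (hk : 1 ≤ k) (h : k + 1 ≤ l.length) :
    applyAt σ k (l ++ [x]) = applyAt σ k l ++ [x] := by
  obtain ⟨u, a, b, v, rfl, rfl⟩ := ex_split k l hk h
  have := A_split σ u a b (v ++ [x])
  rw [A_split]
  simpa using this

theorem CL_concat {X : Type*} (σ : X × X → X × X) (c : ℕ) (l : List X) (x : X)
    (h : c + 1 ≤ l.length) :
    chainLow σ c (l ++ [x]) = chainLow σ c l ++ [x] := by
  induction c generalizing l with
  | zero => rfl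
  | succ c ih =>
    rw [chainLow, A_concat _ _ _ _ (by omega) h, ih _ (by rw [A_len]; omega), chainLow]

theorem CH_CL_comm {X : Type*} (σ τ : X × X → X × X) (i c d : ℕ) (l : List X)
    (h : d + 2 ≤ i) :
    chainHigh σ i c (chainLow τ d l) = chainLow τ d (chainHigh σ i c l) := by
  induction c generalizing i l with
  | zero => rfl
  | succ c ih => rw [chainHigh, CL_comm _ _ _ _ _ h, ih _ _ (by omega), chainHigh]

theorem CH_CL {X : Type*} {σ : X × X → X × X} (H : MYB σ σ) (i c d : ℕ) (l : List X)
    (hi : 1 ≤ i) (hid : i ≤ d + 1) (hd : d + 1 ≤ i + c) (h : d + 2 ≤ l.length) :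
    chainHigh σ (i + 1) c (chainLow σ (d + 1) l)
      = chainLow σ d (chainHigh σ i (c + 1) l) := by
  induction c generalizing i l with
  | zero =>
    obtain rfl : i = d + 1 := by omega
    rfl
  | succ c ih =>
    rcases Nat.lt_or_ge i (d + 1) with h1 | h1
    · rw [chainHigh, CL_A H _ _ _ hi (by omega) (by omega),
        ih _ _ (by omega) (by omega) (by omega) (by rw [A_len]; omega)]
      rfl
    · obtain rfl : i = d + 1 := by omega
      rw [chainLow, CH_CL_comm _ _ _ _ _ _ (by omega)]
      rfl

theorem lam_concat {X M N : Type*} (actN : X → N → N) (m : M) (l : List X) (x : X) (ν : N) :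
    lamN actN (m, l ++ [x], ν) = (m, l, actN x ν) := by
  simp [lamN]

theorem LR {X M N : Type*} (σ : X × X → X × X) (actM : M → X → M) (actN : X → N → N)
    (n i j : ℕ) (p : M × List X × N) (hp : p.2.1.length = n)
    (hi : 1 ≤ i) (hij : i < j) (hj : j ≤ n) :
    dLP σ actM i (dRM σ actN n j p) = dRM σ actN (n - 1) (j - 1) (dLP σ actM i p) := by
  obtain ⟨m, l, ν⟩ := p
  simp only at hp
  obtain ⟨i, rfl⟩ : ∃ k, i = k + 1 := ⟨i - 1, by omega⟩
  obtain ⟨j, rfl⟩ : ∃ k, j = k + 1 + 1 := ⟨j - 2, by omega⟩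
  have hn : n - 1 - (j + 1) = n - (j + 1 + 1) := by omega
  simp only [dLP, dRM, Nat.add_sub_cancel, hn]
  generalize n - (j + 1 + 1) = c
  obtain ⟨t, x, e⟩ := exists_concat (chainHigh σ (j + 1 + 1) c l) (by rw [CH_len]; omega)
  have ht : t.length + 1 = n := by
    have := congrArg List.length e
    rw [CH_len] at this
    simp at this; omega
  have key := CH_CL_comm σ σ (j + 1 + 1) c i l (by omega)
  obtain ⟨y, s, e2⟩ := exists_cons (chainLow σ i l) (by rw [CL_len]; omega)
  have hs : s.length + 1 = n := by
    have := congrArg List.length e2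
    rw [CL_len] at this
    simp at this; omega
  obtain ⟨u, z, e3⟩ := exists_concat (chainHigh σ (j + 1) c s) (by rw [CH_len]; omega)
  rw [e2, e, CH_cons _ _ _ (by omega), e3, CL_concat _ _ _ _ (by omega),
    ← List.cons_append] at key
  obtain ⟨k1, k2⟩ := List.append_inj' key rfl
  injection k2 with k2 _
  rw [e, e2]
  simp only [lam_concat, rho0, e3, ← k1, k2]

theorem RL {X M N : Type*} {σ : X × X → X × X} (H : MYB σ σ)
    (actM : M → X → M) (actN : X → N → N)
    (n i j : ℕ) (p : M × List X × N) (hp : p.2.1.length = n)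
    (hi : 1 ≤ i) (hij : i < j) (hj : j ≤ n) :
    dRM σ actN (n - 1) i (dLP σ actM j p) = dLP σ actM (j - 1) (dRM σ actN n i p) := by
  obtain ⟨m, l, ν⟩ := p
  simp only at hp
  obtain ⟨j, rfl⟩ : ∃ k, j = k + 1 + 1 := ⟨j - 2, by omega⟩
  obtain ⟨c, rfl⟩ : ∃ c, n = i + c + 1 := ⟨n - i - 1, by omega⟩
  have hn : i + c + 1 - 1 - i = c := by omega
  have hn' : i + c + 1 - i = c + 1 := by omega
  simp only [dLP, dRM, hn, hn']
  simp only [Nat.add_sub_cancel]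
  have key := CH_CL H i c j l hi (by omega) (by omega) (by omega)
  obtain ⟨x, t, e⟩ := exists_cons (chainLow σ (j + 1) l) (by rw [CL_len]; omega)
  have ht : t.length + 1 = i + c + 1 := by
    have := congrArg List.length e
    rw [CL_len] at this
    simp at this; omega
  obtain ⟨s, z, e2⟩ := exists_concat (chainHigh σ i (c + 1) l) (by rw [CH_len]; omega)
  have hs : s.length + 1 = i + c + 1 := by
    have := congrArg List.length e2
    rw [CH_len] at this
    simp at this; omega
  obtain ⟨u, w, e3⟩ := exists_concat (chainHigh σ i c t) (by rw [CH_len]; omega)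
  rw [e, e2, CH_cons _ _ _ hi, e3, CL_concat _ _ _ _ (by omega), ← List.cons_append] at key
  obtain ⟨k1, k2⟩ := List.append_inj' key rfl
  injection k2 with k2 _
  rw [e, e2]
  simp only [lam_concat, rho0, e3, ← k1, k2]

/-- The mirror image of `σ`. -/
def mir {X : Type*} (σ : X × X → X × X) : X × X → X × X :=
  fun q => (σ q.swap).swap

def flp {X M N : Type*} (p : M × List X × N) : N × List X × M :=
  (p.2.2, p.2.1.reverse, p.1)

theorem A_rev {X : Type*} (σ : X × X → X × X) (k : ℕ) (l : List X)
    (hk : 1 ≤ k) (h : k + 1 ≤ l.length) :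
    (applyAt σ k l).reverse = applyAt (mir σ) (l.length - k) l.reverse := by
  obtain ⟨u, a, b, v, rfl, rfl⟩ := ex_split k l hk h
  have := A_split (mir σ) v.reverse b a u.reverse
  rw [A_split]
  have e : (u ++ a :: b :: v).length - (u.length + 1) = v.reverse.length + 1 := by
    simp; omega
  rw [e]
  simpa [mir] using this.symm

theorem CH_rev {X : Type*} (σ : X × X → X × X) (i c : ℕ) (l : List X)
    (hi : 1 ≤ i) (h : i + c = l.length) :
    (chainHigh σ i c l).reverse = chainLow (mir σ) c l.reverse := by
  induction c generalizing i l with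
  | zero => rfl
  | succ c ih =>
    rw [chainHigh, ih _ _ (by omega) (by rw [A_len]; omega), A_rev _ _ _ hi (by omega), chainLow]
    congr 2
    omega

theorem dRM_eq {X M N : Type*} (σ : X × X → X × X) (actN : X → N → N) (n i : ℕ)
    (p : M × List X × N) (hp : p.2.1.length = n) (hi : 1 ≤ i) (hin : i ≤ n) :
    dRM σ actN n i p = flp (dLP (mir σ) (fun ν x => actN x ν) (n + 1 - i) (flp p)) := by
  obtain ⟨m, l, ν⟩ := p
  simp only at hp
  have hn : n + 1 - i - 1 = n - i := by omega
  simp only [dRM, dLP, flp, hn]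
  rw [← CH_rev σ i (n - i) l hi (by omega)]
  obtain ⟨s, z, e2⟩ := exists_concat (chainHigh σ i (n - i) l) (by rw [CH_len]; omega)
  rw [e2, lam_concat]
  simp [rho0]

theorem dLP_len {X M N : Type*} (σ : X × X → X × X) (actM : M → X → M) (i : ℕ)
    (p : M × List X × N) : (dLP σ actM i p).2.1.length = p.2.1.length - 1 := by
  obtain ⟨m, l, ν⟩ := p
  have := CL_len σ (i - 1) l
  simp only [dLP]
  rw [← this]
  cases chainLow σ (i - 1) l <;> simp [rho0]

theorem RR {X M N : Type*} {σ τ : X × X → X × X} (H : MYB (mir σ) (mir τ)) (actN : X → N → N)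
    (hN : ∀ (a b : X) (n : N),
      actN a (actN b n) = actN (τ (a, b)).1 (actN (τ (a, b)).2 n))
    (n i j : ℕ) (p : M × List X × N) (hp : p.2.1.length = n)
    (hi : 1 ≤ i) (hij : i < j) (hj : j ≤ n) :
    dRM τ actN (n - 1) i (dRM σ actN n j p)
      = dRM σ actN (n - 1) (j - 1) (dRM τ actN n i p) := by
  have ff : ∀ q : N × List X × M, flp (flp q) = q := by
    intro q; simp [flp]
  have hl : (flp p).2.1.length = n := by simp [flp, hp]
  have fl : ∀ q : N × List X × M, (flp q).2.1.length = q.2.1.length := by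
    intro q; simp [flp]
  rw [dRM_eq σ actN n j p hp (by omega) hj, dRM_eq τ actN n i p hp hi (by omega),
    dRM_eq _ _ _ _ _ (by rw [fl, dLP_len, hl]) hi (by omega),
    dRM_eq _ _ _ _ _ (by rw [fl, dLP_len, hl]) (by omega) (by omega), ff, ff]
  have := LL H (fun ν x => actN x ν) (fun m a b => by simpa [mir] using hN b a m)
    n (n + 1 - j) (n + 1 - i) (flp p) hl (by omega) (by omega) (by omega)
  have e1 : n - 1 + 1 - i = n + 1 - i - 1 := by omega
  have e2 : n - 1 + 1 - (j - 1) = n + 1 - j := by omega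
  rw [e1, e2, this]

theorem MYB_self {X : Type*} {σ : X × X → X × X}
    (hYB : s12 σ ∘ s23 σ ∘ s12 σ = s23 σ ∘ s12 σ ∘ s23 σ) : MYB σ σ :=
  fun q => (congrFun hYB q).symm

theorem MYB_mir {X : Type*} {σ : X × X → X × X} (H : MYB σ σ) : MYB (mir σ) (mir σ) := by
  rintro ⟨a, b, c⟩
  have := H (c, b, a)
  simp only [s12, s23, Prod.mk.injEq, mir, Prod.swap] at this ⊢
  obtain ⟨h1, h2⟩ := this
  have h3 := congrArg Prod.fst h2
  have h4 := congrArg Prod.snd h2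
  simp only at h3 h4
  simp [h1, h3, h4]

theorem MYB_inv {X : Type*} {σ σi : X × X → X × X} (H : MYB σ σ)
    (h1 : ∀ q, σ (σi q) = q) (h2 : ∀ q, σi (σ q) = q) :
    MYB σ σi ∧ MYB σi σ ∧ MYB σi σi := by
  let a : Equiv.Perm (X × X × X) :=
    ⟨s12 σ, s12 σi, fun q => by simp [s12, h2], fun q => by simp [s12, h1]⟩
  let b : Equiv.Perm (X × X × X) :=
    ⟨s23 σ, s23 σi, fun q => by simp [s23, h2], fun q => by simp [s23, h1]⟩
  have hab : b * a * b = a * b * a := Equiv.ext H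
  have g1 : b * a⁻¹ * b⁻¹ = a⁻¹ * b⁻¹ * a := by
    rw [mul_inv_eq_iff_eq_mul, mul_inv_eq_iff_eq_mul]
    have : a⁻¹ * b⁻¹ * a * b * a = a⁻¹ * b⁻¹ * (a * b * a) := by group
    rw [this, ← hab]; group
  have g2 : b⁻¹ * a * b = a * b * a⁻¹ := by
    rw [eq_mul_inv_iff_mul_eq]
    have : b⁻¹ * a * b * a = b⁻¹ * (a * b * a) := by group
    rw [this, ← hab]; group
  have g3 : b⁻¹ * a⁻¹ * b⁻¹ = a⁻¹ * b⁻¹ * a⁻¹ := by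
    have := congrArg (fun x => x⁻¹) hab
    simpa [mul_assoc] using this
  exact ⟨fun q => Equiv.congr_fun g1 q, fun q => Equiv.congr_fun g2 q,
    fun q => Equiv.congr_fun g3 q⟩

/-- For a braided set `(X, σ)`, a right module `M` and a left
module `N`, the families `(d_i^{l,+}, d_i^{r,-})` on `M × Xⁿ × N` satisfy the
pre-cubical relations; and if `σ` is bijective, so do `(d_i^{ε,+}, d_i^{ζ,−})`
for every choice `ε, ζ ∈ {l, r}`, where `d_i^{l,−}, d_i^{r,+}` are defined
using `σ⁻¹`. -/
theorem statement_4 {X M N : Type*} (σ : X × X → X × X)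
    (hYB : s12 σ ∘ s23 σ ∘ s12 σ = s23 σ ∘ s12 σ ∘ s23 σ)
    (actM : M → X → M)
    (hM : ∀ (m : M) (a b : X),
      actM (actM m a) b = actM (actM m (σ (a, b)).1) (σ (a, b)).2)
    (actN : X → N → N)
    (hN : ∀ (a b : X) (n : N),
      actN a (actN b n) = actN (σ (a, b)).1 (actN (σ (a, b)).2 n)) :
    (∀ (n i j : ℕ) (p : M × List X × N), p.2.1.length = n →
      1 ≤ i → i < j → j ≤ n →
      dLP σ actM i (dLP σ actM j p) = dLP σ actM (j - 1) (dLP σ actM i p) ∧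
      dLP σ actM i (dRM σ actN n j p)
        = dRM σ actN (n - 1) (j - 1) (dLP σ actM i p) ∧
      dRM σ actN (n - 1) i (dLP σ actM j p)
        = dLP σ actM (j - 1) (dRM σ actN n i p) ∧
      dRM σ actN (n - 1) i (dRM σ actN n j p)
        = dRM σ actN (n - 1) (j - 1) (dRM σ actN n i p)) ∧
    (Function.Bijective σ →
      ∀ σinv : X × X → X × X,
        (∀ q, σ (σinv q) = q) → (∀ q, σinv (σ q) = q) →
        ∀ (ε ζ : Bool)
          (Dp Dm : ℕ → ℕ → (M × List X × N → M × List X × N)),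
          (∀ n i, Dp n i = if ε then dLP σ actM i else dRM σinv actN n i) →
          (∀ n i, Dm n i = if ζ then dLP σinv actM i else dRM σ actN n i) →
          ∀ (n i j : ℕ) (p : M × List X × N), p.2.1.length = n →
            1 ≤ i → i < j → j ≤ n →
            Dp (n - 1) i (Dp n j p) = Dp (n - 1) (j - 1) (Dp n i p) ∧
            Dp (n - 1) i (Dm n j p) = Dm (n - 1) (j - 1) (Dp n i p) ∧
            Dm (n - 1) i (Dp n j p) = Dp (n - 1) (j - 1) (Dm n i p) ∧
            Dm (n - 1) i (Dm n j p) = Dm (n - 1) (j - 1) (Dm n i p)) := by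
  have H := MYB_self hYB
  have H' := MYB_mir H
  refine ⟨fun n i j p hp hi hij hj => ⟨LL H actM hM n i j p hp hi hij hj,
    LR σ actM actN n i j p hp hi hij hj, RL H actM actN n i j p hp hi hij hj,
    RR H' actN hN n i j p hp hi hij hj⟩, ?_⟩
  intro _ σi h1 h2 ε ζ Dp Dm hDp hDm n i j p hp hi hij hj
  obtain ⟨A1, A2, A3⟩ := MYB_inv H h1 h2
  obtain ⟨B1, B2, B3⟩ := MYB_inv (σi := mir σi) H'
    (fun q => by simp [mir, h1]) (fun q => by simp [mir, h2])
  have hMi : ∀ (m : M) (a b : X),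
      actM (actM m a) b = actM (actM m (σi (a, b)).1) (σi (a, b)).2 := by
    intro m a b
    have := hM m (σi (a, b)).1 (σi (a, b)).2
    simp only [Prod.mk.eta, h1] at this
    exact this.symm
  have hNi : ∀ (a b : X) (n : N),
      actN a (actN b n) = actN (σi (a, b)).1 (actN (σi (a, b)).2 n) := by
    intro a b m
    have := hN (σi (a, b)).1 (σi (a, b)).2 m
    simp only [Prod.mk.eta, h1] at this
    exact this.symm
  simp only [hDp, hDm]
  cases ε <;> cases ζ <;> simp only [if_true, if_false, Bool.false_eq_true]
  · exact ⟨RR B3 actN hNi n i j p hp hi hij hj, RR B1 actN hNi n i j p hp hi hij hj,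
      RR B2 actN hN n i j p hp hi hij hj, RR H' actN hN n i j p hp hi hij hj⟩
  · exact ⟨RR B3 actN hNi n i j p hp hi hij hj, RL A3 actM actN n i j p hp hi hij hj,
      LR σi actM actN n i j p hp hi hij hj, LL A3 actM hMi n i j p hp hi hij hj⟩
  · exact ⟨LL H actM hM n i j p hp hi hij hj, LR σ actM actN n i j p hp hi hij hj,
      RL H actM actN n i j p hp hi hij hj, RR H' actN hN n i j p hp hi hij hj⟩
  · exact ⟨LL H actM hM n i j p hp hi hij hj, LL A1 actM hMi n i j p hp hi hij hj,
      LL A2 actM hM n i j p hp hi hij hj, LL A3 actM hMi n i j p hp hi hij hj⟩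
end

section
/- Let (X, σ) be a birack. For n ≥ 1 and 1 ≤ i ≤ n define maps Xⁿ → X^{n−1}: d_i(x₁,…,x_n) := (x_i⊛x₁, …, x_i⊛x_{i−1}, x_i·x_{i+1}, …, x_i·x_n); d'_i(x₁,…,x_n) := (x₁,…,x_{i−1}, x_{i+1},…,x_n); and d_i^⋆(x₁,…,x_n) := (x_i·x₁, …, x_i·x_{i−1}, x_i⊛x_{i+1}, …, x_i⊛x_n). Then the pair of families (d'_i, d_i) forms a pre-cubical structure in Set, i.e., d_i^ε ∘ d_j^ζ = d_{j−1}^ζ ∘ d_i^ε for all 1 ≤ i < j ≤ n, where each of d^ε, d^ζ may independently be taken from {d, d'}; and the same holds with the family d_i replaced throughout by d_i^⋆. -/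
/-- The birack boundary
`d_i(x₁,…,x_n) = (x_i⊛x₁,…,x_i⊛x_{i-1}, x_i·x_{i+1},…,x_i·x_n)`, with
`star x_i x_j = x_i ⊛ x_j` applied to the prefix and `dot x_i x_j = x_i · x_j`
to the suffix (1-based index `i`). -/
def dBr {X : Type*} (star dot : X → X → X) (i : ℕ) (xs : List X) : List X :=
  match xs[i - 1]? with
  | some x => ((xs.take (i - 1)).map (fun a => star x a))
      ++ ((xs.drop i).map (fun a => dot x a))
  | none => xs

/-- The boundary `d'_i(x₁,…,x_n) = (x₁,…,x_{i-1},x_{i+1},…,x_n)`. -/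
def dErase {X : Type*} (i : ℕ) (xs : List X) : List X := xs.eraseIdx (i - 1)

theorem dBr_append {X : Type*} (s d : X → X → X) (i : ℕ) (A C : List X) (x : X)
    (h : i = A.length + 1) :
    dBr s d i (A ++ x :: C) = A.map (s x) ++ C.map (d x) := by
  subst h
  simp [dBr, List.drop_append]

theorem dErase_append {X : Type*} (i : ℕ) (A C : List X) (x : X)
    (h : i = A.length + 1) : dErase i (A ++ x :: C) = A ++ C := by
  subst h
  simp [dErase, List.eraseIdx_append_of_length_le]

theorem split_list {X : Type*} (i j : ℕ) (xs : List X) (hi : 1 ≤ i) (hij : i < j)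
    (hj : j ≤ xs.length) : ∃ (A B C : List X) (x y : X), xs = A ++ x :: (B ++ y :: C) ∧
      i = A.length + 1 ∧ j = A.length + B.length + 2 := by
  have h1 : i - 1 < xs.length := by omega
  have h2 : j - i - 1 < (xs.drop i).length := by simp; omega
  refine ⟨xs.take (i - 1), (xs.drop i).take (j - i - 1), (xs.drop i).drop (j - i - 1 + 1),
    xs[i - 1], (xs.drop i)[j - i - 1], ?_, ?_, ?_⟩
  · rw [← List.drop_eq_getElem_cons h2, List.take_append_drop]
    have := List.drop_eq_getElem_cons h1
    rw [Nat.sub_add_cancel hi] at this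
    rw [← this, List.take_append_drop]
  · simp; omega
  · simp; omega

theorem cubical_aux {X : Type*} (s d : X → X → X)
    (h1 : ∀ x y a, s (s y x) (s y a) = s (d x y) (s x a))
    (h2 : ∀ x y a, d (s y x) (s y a) = s (d x y) (d x a))
    (h3 : ∀ x y a, d (s y x) (d y a) = d (d x y) (d x a))
    (i j : ℕ) (xs : List X) (hi : 1 ≤ i) (hij : i < j) (hj : j ≤ xs.length) :
    dBr s d i (dBr s d j xs) = dBr s d (j - 1) (dBr s d i xs) ∧
        dBr s d i (dErase j xs) = dErase (j - 1) (dBr s d i xs) ∧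
        dErase i (dBr s d j xs) = dBr s d (j - 1) (dErase i xs) ∧
        dErase i (dErase j xs) = dErase (j - 1) (dErase i xs) := by
  obtain ⟨A, B, C, x, y, rfl, hA, hB⟩ := split_list i j xs hi hij hj
  have e : A ++ x :: (B ++ y :: C) = (A ++ x :: B) ++ y :: C := by simp
  have a1 : dBr s d j (A ++ x :: (B ++ y :: C))
      = A.map (s y) ++ s y x :: (B.map (s y) ++ C.map (d y)) := by
    rw [e, dBr_append s d j _ C y (by simp; omega)]; simp
  have a2 : dErase j (A ++ x :: (B ++ y :: C)) = A ++ x :: (B ++ C) := by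
    rw [e, dErase_append j _ C y (by simp; omega)]; simp
  have a3 : dBr s d i (A ++ x :: (B ++ y :: C))
      = (A.map (s x) ++ B.map (d x)) ++ d x y :: C.map (d x) := by
    rw [dBr_append s d i _ _ x hA]; simp
  have a4 : dErase i (A ++ x :: (B ++ y :: C)) = (A ++ B) ++ y :: C := by
    rw [dErase_append i _ _ x hA]; simp
  rw [a1, a2, a3, a4]
  refine ⟨?_, ?_, ?_, ?_⟩
  · rw [dBr_append s d i _ _ _ (by simpa using hA),
      dBr_append s d (j - 1) _ _ _ (by simp; omega)]
    simp [Function.comp_def, h1, h2, h3]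
  · rw [dBr_append s d i _ _ _ hA, dErase_append (j - 1) _ _ _ (by simp; omega)]
    simp
  · rw [dErase_append i _ _ _ (by simpa using hA),
      dBr_append s d (j - 1) _ _ _ (by simp; omega)]
    simp
  · rw [dErase_append i _ _ _ hA, dErase_append (j - 1) _ _ _ (by simp; omega)]
    simp

/-- For a birack `(X, σ)` (with `b⊛a` the inverse of `a ↦ r(a,b)`
and `a·b := l(b⊛a, b)`), the families `(d'_i, d_i)` form a pre-cubical
structure in Set, and the same holds with `d_i` replaced by `d_i^⋆`
(which exchanges the roles of `·` and `⊛`). -/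
theorem statement_5 {X : Type*} (σ : X × X → X × X)
    (hYB : s12 σ ∘ s23 σ ∘ s12 σ = s23 σ ∘ s12 σ ∘ s23 σ)
    (hbij : Function.Bijective σ)
    (hrnd : ∀ b : X, Function.Bijective (fun a => (σ (b, a)).1))
    (star : X → X → X)
    (hstar1 : ∀ a b : X, (σ (star b a, b)).2 = a)
    (hstar2 : ∀ a b : X, star b ((σ (a, b)).2) = a)
    (dot : X → X → X)
    (hdot : ∀ a b : X, dot a b = (σ (star b a, b)).1) :
    ∀ (n i j : ℕ) (xs : List X), xs.length = n → 1 ≤ i → i < j → j ≤ n →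
      (dBr star dot i (dBr star dot j xs)
          = dBr star dot (j - 1) (dBr star dot i xs) ∧
        dBr star dot i (dErase j xs) = dErase (j - 1) (dBr star dot i xs) ∧
        dErase i (dBr star dot j xs) = dBr star dot (j - 1) (dErase i xs) ∧
        dErase i (dErase j xs) = dErase (j - 1) (dErase i xs)) ∧
      (dBr dot star i (dBr dot star j xs)
          = dBr dot star (j - 1) (dBr dot star i xs) ∧
        dBr dot star i (dErase j xs) = dErase (j - 1) (dBr dot star i xs) ∧
        dErase i (dBr dot star j xs) = dBr dot star (j - 1) (dErase i xs)) := by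
  have hs : ∀ a b, σ (star b a, b) = (dot a b, a) := fun a b =>
    Prod.ext (hdot a b).symm (hstar1 a b)
  have key : ∀ x y w : X,
      star (star y x) (star y w) = star (dot x y) (star x w) ∧
      dot (star y w) (star y x) = star (dot w y) (dot w x) ∧
      dot (star x w) (dot x y) = dot (dot w x) (dot w y) := by
    intro x y w
    have h := congrFun hYB (star (star y x) (star y w), star y x, y)
    simp only [Function.comp, s12, s23, hs] at h
    generalize ha : star (star y x) (star y w) = a at h
    simp only [Prod.mk.injEq] at h
    obtain ⟨e1, e2⟩ := h
    have e2' := Prod.ext_iff.1 e2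
    simp only at e2'
    obtain ⟨e3, e4⟩ := e2'
    have f1 : (σ (a, dot x y)).2 = star x w := by
      rw [← hstar2 (σ (a, dot x y)).2 x, ← e4]
    have f2 : a = star (dot x y) (star x w) := by
      rw [← f1, hstar2]
    rw [f1, hs] at e3
    simp only at e3
    have f3 : dot (star y w) (star y x) = star (dot w y) (dot w x) := by
      rw [← e3, hstar2]
    refine ⟨f2, f3, ?_⟩
    rw [f3, f2, hs, hs] at e1
    exact e1.symm
  intro n i j xs hn hi hij hj
  subst hn
  refine ⟨cubical_aux star dot (fun x y a => (key x y a).1) (fun x y a => (key a y x).2.1)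
    (fun x y a => (key y a x).2.2) i j xs hi hij hj, ?_⟩
  obtain ⟨p, q, r, -⟩ := cubical_aux dot star (fun x y a => ((key x a y).2.2).symm)
    (fun x y a => ((key a x y).2.1).symm) (fun x y a => ((key y x a).1).symm) i j xs hi hij hj
  exact ⟨p, q, r⟩
end

section
/- Let (X, σ) be a birack satisfying a·a = a⊛a for all a ∈ X. Define s_i : Xⁿ → X^{n+1} by s_i(x₁,…,x_n) := (x₁,…,x_{i−1}, x_i, x_i, x_{i+1},…,x_n), and let d_i, d'_i, d_i^⋆ be the birack boundary maps d_i(x̄) = (x_i⊛x₁,…,x_i⊛x_{i−1}, x_i·x_{i+1},…,x_i·x_n), d'_i(x̄) = (x₁,…,x_{i−1},x_{i+1},…,x_n), d_i^⋆(x̄) = (x_i·x₁,…,x_i·x_{i−1}, x_i⊛x_{i+1},…,x_i⊛x_n). Then the following relations hold: s_i∘s_j = s_{j+1}∘s_i for i ≤ j; d_i∘s_j = s_{j−1}∘d_i and d'_i∘s_j = s_{j−1}∘d'_i for i < j; d_i∘s_j = s_j∘d_{i−1} and d'_i∘s_j = s_j∘d'_{i−1} for i > j+1; d'_i∘s_i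 = d'_{i+1}∘s_i = id; and d_i∘s_i = d_{i+1}∘s_i. The same relations hold with d_i replaced throughout by d_i^⋆. -/
/-- The degeneracy `s_i(x₁,…,x_n) = (x₁,…,x_{i-1}, x_i, x_i, x_{i+1},…,x_n)`. -/
def sDup {X : Type*} (i : ℕ) (xs : List X) : List X :=
  match xs[i - 1]? with
  | some x => xs.take i ++ x :: xs.drop i
  | none => xs

theorem sDup_get {X : Type*} (i : ℕ) (xs : List X) (h1 : 1 ≤ i) (h2 : i ≤ xs.length) (k : ℕ) :
    (sDup i xs)[k]? = if k < i then xs[k]? else xs[k - 1]? := by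
  have hx : xs[i - 1]? = some (xs[i - 1]'(by omega)) := List.getElem?_eq_getElem (by omega)
  unfold sDup
  rw [hx]
  simp only [List.getElem?_append, List.length_take, List.getElem?_take, List.getElem?_cons,
    List.getElem?_drop]
  have hm : min i xs.length = i := by omega
  rw [hm]
  by_cases hk : k < i
  · simp [hk]
  · rw [if_neg hk, if_neg hk]
    by_cases h0 : k - i = 0
    · have : k - 1 = i - 1 := by omega
      rw [if_pos h0, this, hx]
    · rw [if_neg h0]
      congr 1
      omega

theorem sDup_length {X : Type*} (i : ℕ) (xs : List X) (h1 : 1 ≤ i) (h2 : i ≤ xs.length) :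
    (sDup i xs).length = xs.length + 1 := by
  have hx : xs[i - 1]? = some (xs[i - 1]'(by omega)) := List.getElem?_eq_getElem (by omega)
  unfold sDup
  rw [hx]
  simp
  omega

theorem dBr_get {X : Type*} (f g : X → X → X) (i : ℕ) (xs : List X) (x : X) (h1 : 1 ≤ i)
    (hx : xs[i - 1]? = some x) (k : ℕ) :
    (dBr f g i xs)[k]? = if k < i - 1 then xs[k]?.map (f x) else xs[k + 1]?.map (g x) := by
  have hl : i - 1 < xs.length := (List.getElem?_eq_some_iff.1 hx).1
  unfold dBr
  rw [hx]
  simp only [List.getElem?_append, List.length_take, List.getElem?_take, List.getElem?_map,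
    List.getElem?_drop, List.length_map]
  have hm : min (i - 1) xs.length = i - 1 := by omega
  rw [hm]
  by_cases hk : k < i - 1
  · simp [hk]
  · rw [if_neg hk, if_neg hk]
    have : i + (k - (i - 1)) = k + 1 := by omega
    rw [this]

theorem dBr_length {X : Type*} (f g : X → X → X) (i : ℕ) (xs : List X) (h1 : 1 ≤ i)
    (h2 : i ≤ xs.length) : (dBr f g i xs).length = xs.length - 1 := by
  have hx : xs[i - 1]? = some (xs[i - 1]'(by omega)) := List.getElem?_eq_getElem (by omega)
  unfold dBr
  rw [hx]
  simp
  omega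

theorem dErase_eq {X : Type*} (i : ℕ) (xs : List X) (h1 : 1 ≤ i) (h2 : i ≤ xs.length) :
    dErase i xs = dBr (fun _ a => a) (fun _ a => a) i xs := by
  have hx : xs[i - 1]? = some (xs[i - 1]'(by omega)) := List.getElem?_eq_getElem (by omega)
  apply List.ext_getElem?
  intro k
  rw [dBr_get _ _ i xs _ h1 hx, dErase, List.getElem?_eraseIdx]
  simp

theorem dBr_sDup_lt {X : Type*} (f g : X → X → X) (i j : ℕ) (xs : List X) (h1 : 1 ≤ i)
    (h2 : i < j) (h3 : j ≤ xs.length) :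
    dBr f g i (sDup j xs) = sDup (j - 1) (dBr f g i xs) := by
  have hx : xs[i - 1]? = some (xs[i - 1]'(by omega)) := List.getElem?_eq_getElem (by omega)
  have hy : (sDup j xs)[i - 1]? = some (xs[i - 1]'(by omega)) := by
    rw [sDup_get j xs (by omega) h3, if_pos (by omega), hx]
  have hl := dBr_length f g i xs h1 (by omega)
  apply List.ext_getElem?
  intro k
  rw [dBr_get f g i _ _ h1 hy, sDup_get (j - 1) _ (by omega) (by omega),
    sDup_get j xs (by omega) h3, sDup_get j xs (by omega) h3,
    dBr_get f g i xs _ h1 hx, dBr_get f g i xs _ h1 hx]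
  have e : ¬ k < j - 1 → k - 1 + 1 = k + 1 - 1 := by omega
  split_ifs <;> first | rfl | omega | (rw [e (by omega)])

theorem dBr_sDup_gt {X : Type*} (f g : X → X → X) (i j : ℕ) (xs : List X) (h1 : 1 ≤ j)
    (h2 : j + 1 < i) (h3 : i ≤ xs.length + 1) :
    dBr f g i (sDup j xs) = sDup j (dBr f g (i - 1) xs) := by
  have hx : xs[i - 1 - 1]? = some (xs[i - 1 - 1]'(by omega)) :=
    List.getElem?_eq_getElem (by omega)
  have hy : (sDup j xs)[i - 1]? = some (xs[i - 1 - 1]'(by omega)) := by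
    rw [sDup_get j xs (by omega) (by omega), if_neg (by omega), hx]
  have hl := dBr_length f g (i - 1) xs (by omega) (by omega)
  apply List.ext_getElem?
  intro k
  rw [dBr_get f g i _ _ (by omega) hy, sDup_get j (dBr f g (i - 1) xs) (by omega) (by omega),
    sDup_get j xs (by omega) (by omega), sDup_get j xs (by omega) (by omega),
    dBr_get f g (i - 1) xs _ (by omega) hx, dBr_get f g (i - 1) xs _ (by omega) hx]
  have e : ¬ k < j → k - 1 + 1 = k + 1 - 1 := by omega
  split_ifs <;> first | rfl | omega | (rw [e (by omega)])

theorem dBr_sDup_self {X : Type*} (f g : X → X → X) (hfg : ∀ a, f a a = g a a) (i : ℕ)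
    (xs : List X) (h1 : 1 ≤ i) (h3 : i ≤ xs.length) :
    dBr f g i (sDup i xs) = dBr f g (i + 1) (sDup i xs) := by
  have hx : xs[i - 1]? = some (xs[i - 1]'(by omega)) := List.getElem?_eq_getElem (by omega)
  have hy : (sDup i xs)[i - 1]? = some (xs[i - 1]'(by omega)) := by
    rw [sDup_get i xs (by omega) h3, if_pos (by omega), hx]
  have hz : (sDup i xs)[i + 1 - 1]? = some (xs[i - 1]'(by omega)) := by
    rw [sDup_get i xs (by omega) h3, if_neg (by omega), Nat.add_sub_cancel, hx]
  apply List.ext_getElem?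
  intro k
  rw [dBr_get f g i _ _ h1 hy, dBr_get f g (i + 1) _ _ (by omega) hz]
  by_cases hk : k = i - 1
  · have e : k + 1 = i + 1 - 1 := by omega
    rw [if_neg (by omega), if_pos (by omega), e, hz, hk, hy]
    simp [hfg]
  · split_ifs <;> first | rfl | omega

theorem dErase_sDup_self {X : Type*} (i : ℕ) (xs : List X) (h1 : 1 ≤ i) (h3 : i ≤ xs.length) :
    dErase i (sDup i xs) = xs := by
  apply List.ext_getElem?
  intro k
  rw [dErase, List.getElem?_eraseIdx, sDup_get i xs h1 h3, sDup_get i xs h1 h3]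
  split_ifs <;> first | rfl | omega

theorem sDup_sDup {X : Type*} (i j : ℕ) (xs : List X) (h1 : 1 ≤ i) (h2 : i ≤ j)
    (h3 : j ≤ xs.length) : sDup i (sDup j xs) = sDup (j + 1) (sDup i xs) := by
  have hl := sDup_length j xs (by omega) h3
  have hl2 := sDup_length i xs (by omega) (by omega)
  apply List.ext_getElem?
  intro k
  rw [sDup_get i (sDup j xs) h1 (by omega), sDup_get (j + 1) _ (by omega) (by omega)]
  simp only [sDup_get j xs (by omega) h3, sDup_get i xs h1 (by omega : i ≤ xs.length)]
  split_ifs <;> first | rfl | omega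

/-- For a birack `(X, σ)` with `a·a = a⊛a` for all `a`, the
duplication degeneracies `s_i` satisfy, together with the boundaries
`d_i, d'_i` (and likewise with `d_i^⋆` in place of `d_i`), the cubical
relations listed. -/
theorem statement_6 {X : Type*} (σ : X × X → X × X)
    (hYB : s12 σ ∘ s23 σ ∘ s12 σ = s23 σ ∘ s12 σ ∘ s23 σ)
    (hbij : Function.Bijective σ)
    (hrnd : ∀ b : X, Function.Bijective (fun a => (σ (b, a)).1))
    (star : X → X → X)
    (hstar1 : ∀ a b : X, (σ (star b a, b)).2 = a)
    (hstar2 : ∀ a b : X, star b ((σ (a, b)).2) = a)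
    (dot : X → X → X)
    (hdot : ∀ a b : X, dot a b = (σ (star b a, b)).1)
    (hsq : ∀ a : X, dot a a = star a a) :
    (∀ (n i j : ℕ) (xs : List X), xs.length = n → 1 ≤ i → i ≤ j → j ≤ n →
        sDup i (sDup j xs) = sDup (j + 1) (sDup i xs)) ∧
    (∀ (n i j : ℕ) (xs : List X), xs.length = n → 1 ≤ i → i < j → j ≤ n →
        dBr star dot i (sDup j xs) = sDup (j - 1) (dBr star dot i xs) ∧
        dBr dot star i (sDup j xs) = sDup (j - 1) (dBr dot star i xs) ∧
        dErase i (sDup j xs) = sDup (j - 1) (dErase i xs)) ∧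
    (∀ (n i j : ℕ) (xs : List X), xs.length = n →
        1 ≤ j → j + 1 < i → i ≤ n + 1 →
        dBr star dot i (sDup j xs) = sDup j (dBr star dot (i - 1) xs) ∧
        dBr dot star i (sDup j xs) = sDup j (dBr dot star (i - 1) xs) ∧
        dErase i (sDup j xs) = sDup j (dErase (i - 1) xs)) ∧
    (∀ (n i : ℕ) (xs : List X), xs.length = n → 1 ≤ i → i ≤ n →
        dErase i (sDup i xs) = xs ∧
        dErase (i + 1) (sDup i xs) = xs ∧
        dBr star dot i (sDup i xs) = dBr star dot (i + 1) (sDup i xs) ∧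
        dBr dot star i (sDup i xs) = dBr dot star (i + 1) (sDup i xs)) := by
  refine ⟨?_, ?_, ?_, ?_⟩
  · intro n i j xs hn h1 h2 h3
    exact sDup_sDup i j xs h1 h2 (by omega)
  · intro n i j xs hn h1 h2 h3
    subst hn
    refine ⟨dBr_sDup_lt _ _ i j xs h1 h2 h3, dBr_sDup_lt _ _ i j xs h1 h2 h3, ?_⟩
    have hl := sDup_length j xs (by omega) h3
    rw [dErase_eq i _ h1 (by omega), dErase_eq i xs h1 (by omega)]
    exact dBr_sDup_lt _ _ i j xs h1 h2 h3
  · intro n i j xs hn h1 h2 h3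
    subst hn
    refine ⟨dBr_sDup_gt _ _ i j xs h1 h2 h3, dBr_sDup_gt _ _ i j xs h1 h2 h3, ?_⟩
    have hl := sDup_length j xs (by omega) (by omega)
    rw [dErase_eq i _ (by omega) (by omega), dErase_eq (i - 1) xs (by omega) (by omega)]
    exact dBr_sDup_gt _ _ i j xs h1 h2 h3
  · intro n i xs hn h1 h2
    subst hn
    have hl := sDup_length i xs h1 h2
    refine ⟨dErase_sDup_self i xs h1 h2, ?_,
      dBr_sDup_self _ _ (fun a => (hsq a).symm) i xs h1 h2, dBr_sDup_self _ _ hsq i xs h1 h2⟩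
    rw [dErase_eq (i + 1) _ (by omega) (by omega),
      ← dBr_sDup_self _ _ (fun _ => rfl) i xs h1 h2, ← dErase_eq i _ h1 (by omega)]
    exact dErase_sDup_self i xs h1 h2
end

section
/- Let (X, σ) be a left non-degenerate braided set and define a ◃ b := r(b·a, b). Then: (1) ◃ is self-distributive, i.e., (a◃b)◃c = (a◃c)◃(b◃c) for all a, b, c ∈ X; (2) every right translation a ↦ a◃b (b ∈ X fixed) is a bijection of X — that is, (X, ◃) is a rack — if and only if σ is bijective. -/
/-- For a left non-degenerate braided set `(X, σ)` (with `b⊛a` the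
inverse of `a ↦ r(a,b)`, `a·b := l(b⊛a, b)`, and `a ◃ b := r(b·a, b)`):
(1) `◃` is self-distributive; (2) all right translations of `◃` are bijective
(i.e. `(X, ◃)` is a rack) iff `σ` is bijective. -/
theorem statement_7 {X : Type*} (σ : X × X → X × X)
    (hYB : s12 σ ∘ s23 σ ∘ s12 σ = s23 σ ∘ s12 σ ∘ s23 σ)
    (star : X → X → X)
    (hstar1 : ∀ a b : X, (σ (star b a, b)).2 = a)
    (hstar2 : ∀ a b : X, star b ((σ (a, b)).2) = a)
    (dot : X → X → X)
    (hdot : ∀ a b : X, dot a b = (σ (star b a, b)).1)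
    (tri : X → X → X)
    (htri : ∀ a b : X, tri a b = (σ (dot b a, b)).2) :
    (∀ a b c : X, tri (tri a b) c = tri (tri a c) (tri b c)) ∧
    ((∀ b : X, Function.Bijective (fun a => tri a b))
      ↔ Function.Bijective σ) := by
  have yb : ∀ x y z : X, _ := fun x y z => congrFun hYB (x, y, z)
  simp only [Function.comp, s12, s23, Prod.mk.injEq, Prod.ext_iff] at yb
  obtain ⟨r, hr⟩ : ∃ r : X → X → X, ∀ a b, (σ (a, b)).2 = r a b := ⟨_, fun _ _ => rfl⟩
  have hl : ∀ a b, (σ (a, b)).1 = dot (r a b) b := by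
    intro a b
    rw [hdot, ← hr, hstar2]
  simp only [hr] at hstar1 hstar2 htri
  simp only [hl, hr] at yb
  have h3 : ∀ x b z, r (r x (dot (r b z) z)) (r b z) = r (r x b) z := by
    intro x b z
    exact (yb x b z).2.2.symm
  have h2 : ∀ p y z, r (dot p y) (dot (r p z) z) = dot (r p z) (r y z) := by
    intro p y z
    have h := (yb (star y p) y z).2.1
    rw [h3, hstar1] at h
    exact h
  have h1 : ∀ q u z, dot (dot q u) (dot q z) = dot (star u q) (dot u z) := by
    intro q u z
    have h := (yb (star (star z u) (star z q)) (star z u) z).1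
    have e : r (star (star z u) (star z q)) (dot u z) = star u q := by
      have := h3 (star (star z u) (star z q)) (star z u) z
      rw [hstar1, hstar1, hstar1] at this
      have k := hstar2 (r (star (star z u) (star z q)) (dot u z)) u
      rw [this] at k
      exact k.symm
    simp only [hstar1] at h
    rw [e] at h
    have h2' := h2 (star z q) (star z u) z
    simp only [hstar1] at h2'
    rw [h2'] at h
    exact h
  have A : ∀ a b z, tri (r a z) (r b z) = r (tri a b) z := by
    intro a b z
    rw [htri, htri, ← h2, h3]
  have B : ∀ a b c, dot c (tri a b) = tri (dot c a) (dot c b) := by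
    intro a b c
    have h := h2 (star b c) (dot b a) b
    rw [hstar1] at h
    rw [htri, ← h, ← h1, htri]
  refine ⟨?_, ?_⟩
  · intro a b c
    rw [htri (tri a b) c, B, ← A, ← htri, ← htri]
  · have rb : ∀ b, Function.Bijective (fun a => r a b) := fun b =>
      ⟨Function.LeftInverse.injective (g := star b) (fun a => hstar2 a b),
        Function.RightInverse.surjective (g := star b) (fun a => hstar1 a b)⟩
    have e1 : (∀ b, Function.Bijective (fun a => tri a b)) ↔
        ∀ b, Function.Bijective (dot b) := by
      refine forall_congr' fun b => ?_
      have : (fun a => tri a b) = (fun a => r a b) ∘ dot b := by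
        funext a; exact htri a b
      rw [this]
      exact (rb b).of_comp_iff' _
    have hσ : ∀ a b, σ (a, b) = (dot (r a b) b, r a b) := fun a b =>
      Prod.ext (hl a b) (hr a b)
    rw [e1]
    constructor
    · intro h
      constructor
      · rintro ⟨a, b⟩ ⟨c, d⟩ e
        rw [hσ, hσ, Prod.mk.injEq] at e
        obtain ⟨e, f⟩ := e
        rw [f] at e
        obtain rfl := (h _).1 e
        rw [(rb b).1 f]
      · rintro ⟨u, v⟩
        obtain ⟨b, hb⟩ := (h v).2 u
        exact ⟨(star b v, b), by rw [hσ, hstar1, hb]⟩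
    · intro h b
      constructor
      · intro x y e
        have : σ (star x b, x) = σ (star y b, y) := by
          rw [hσ, hσ, hstar1, hstar1, e]
        exact (Prod.mk.inj (h.1 this)).2
      · intro u
        obtain ⟨⟨x, y⟩, e⟩ := h.2 (u, b)
        rw [hσ, Prod.mk.injEq] at e
        obtain ⟨e, f⟩ := e
        rw [f] at e
        exact ⟨y, e⟩
end

section
/- Let (X, σ) be a left non-degenerate braided set and define a ◃ b := r(b·a, b). Then: (3) a◃b = a holds for all a, b ∈ X if and only if σ ∘ σ = id; (4) the following three conditions are equivalent: (a) a◃a = a for all a ∈ X; (b) there exists a map t : X → X with σ(t(a), a) = (t(a), a) for all a ∈ X; (c) a·a = a⊛a for all a ∈ X and σ(a·a, a) = (a·a, a) for all a ∈ X. -/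
/-- For a left non-degenerate braided set `(X, σ)` with associated
shelf operation `a ◃ b := r(b·a, b)`:
(3) `◃` is trivial iff `σ` is involutive;
(4) `◃` is idempotent iff `σ` is weakly RI-compatible, iff `σ` is weakly
RI-compatible with `t(a) = a·a = a⊛a`. -/
theorem statement_8 {X : Type*} (σ : X × X → X × X)
    (hYB : s12 σ ∘ s23 σ ∘ s12 σ = s23 σ ∘ s12 σ ∘ s23 σ)
    (star : X → X → X)
    (hstar1 : ∀ a b : X, (σ (star b a, b)).2 = a)
    (hstar2 : ∀ a b : X, star b ((σ (a, b)).2) = a)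
    (dot : X → X → X)
    (hdot : ∀ a b : X, dot a b = (σ (star b a, b)).1)
    (tri : X → X → X)
    (htri : ∀ a b : X, tri a b = (σ (dot b a, b)).2) :
    ((∀ a b : X, tri a b = a) ↔ σ ∘ σ = id) ∧
    ((∀ a : X, tri a a = a)
        ↔ ∃ t : X → X, ∀ a : X, σ (t a, a) = (t a, a)) ∧
    ((∀ a : X, tri a a = a)
        ↔ ((∀ a : X, dot a a = star a a) ∧
           (∀ a : X, σ (dot a a, a) = (dot a a, a)))) := by
  have hs : ∀ a b, σ (star b a, b) = (dot a b, a) := fun a b =>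
    Prod.ext (hdot a b).symm (hstar1 a b)
  -- `tri a b = a` forces `dot b a = star b a`
  have key : ∀ a b, tri a b = a → dot b a = star b a := by
    intro a b h
    have h2 := hstar2 (dot b a) b
    rw [← htri, h] at h2
    exact h2.symm
  have hac : (∀ a : X, tri a a = a) → ((∀ a : X, dot a a = star a a) ∧
      (∀ a : X, σ (dot a a, a) = (dot a a, a))) := by
    intro h
    refine ⟨fun a => key a a (h a), fun a => ?_⟩
    have h1 := hs a a
    rw [← key a a (h a)] at h1
    exact h1
  have hba : (∃ t : X → X, ∀ a : X, σ (t a, a) = (t a, a)) → ∀ a : X, tri a a = a := by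
    rintro ⟨t, ht⟩ a
    have h1 : star a a = t a := by
      have h2 := hstar2 (t a) a
      rw [ht] at h2
      exact h2
    have h3 : dot a a = t a := by rw [hdot, h1, ht]
    rw [htri, h3, ht]
  refine ⟨⟨fun h => ?_, fun h a b => ?_⟩, ⟨fun h => ⟨_, (hac h).2⟩, hba⟩,
    ⟨hac, fun h => hba ⟨_, h.2⟩⟩⟩
  · funext ⟨x, b⟩
    obtain ⟨a, rfl⟩ : ∃ a, x = star b a := ⟨_, (hstar2 x b).symm⟩
    simp only [Function.comp_apply, id]
    rw [hs, key b a (h b a), hs, key a b (h a b)]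
  · have h1 := congrFun h (star a b, a)
    simp only [Function.comp_apply, id] at h1
    rw [hs] at h1
    rw [htri, h1]
end

section
/- Let (X, σ) be a left non-degenerate braided set, let ◃ be its associated shelf operation a◃b := r(b·a, b), and define σ'(a,b) := (b◃a, a). Then for every n ≥ 1 the n-guitar map J : Xⁿ → Xⁿ is a bijection, and J ∘ σ_i = σ'_i ∘ J for all 1 ≤ i ≤ n−1, where σ_i (resp. σ'_i) denotes σ (resp. σ') applied at positions (i, i+1) of Xⁿ and the identity elsewhere. -/
/-- The guitar map `J`, with components `J_i = r(…r(r(x_i,x_{i+1}),x_{i+2})…,x_n)`. -/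
def guitar {X : Type*} (σ : X × X → X × X) : List X → List X
  | [] => []
  | x :: t => (t.foldl (fun a b => (σ (a, b)).2) x) :: guitar σ t

theorem guitar_length {X : Type*} (σ : X × X → X × X) (l : List X) :
    (guitar σ l).length = l.length := by
  induction l with
  | nil => rfl
  | cons x t ih => simp [guitar, ih]

theorem foldl_applyAt {X : Type*} (σ : X × X → X × X)
    (h3 : ∀ x y z, (σ ((σ (x, y)).2, z)).2 = (σ ((σ (x, (σ (y, z)).1)).2, (σ (y, z)).2)).2)
    (i : ℕ) (t : List X) : ∀ x : X,
    (applyAt σ i t).foldl (fun a b => (σ (a, b)).2) x = t.foldl (fun a b => (σ (a, b)).2) x := by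
  induction i, t using applyAt.induct with
  | case1 a b t => intro x; simp [applyAt, ← h3]
  | case2 n a t ih => intro x; simp [applyAt, ih]
  | case3 n l h1 h2 => intro x; rw [applyAt] <;> assumption

theorem foldl_inj {X : Type*} (σ : X × X → X × X) (star : X → X → X)
    (hstar2 : ∀ a b : X, star b ((σ (a, b)).2) = a) (t : List X) : ∀ x y : X,
    t.foldl (fun a b => (σ (a, b)).2) x = t.foldl (fun a b => (σ (a, b)).2) y → x = y := by
  induction t with
  | nil => intro x y h; exact h
  | cons c t ih =>
    intro x y h
    have : (σ (x, c)).2 = (σ (y, c)).2 := ih _ _ h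
    rw [← hstar2 x c, ← hstar2 y c, this]

theorem foldl_surj {X : Type*} (σ : X × X → X × X) (star : X → X → X)
    (hstar1 : ∀ a b : X, (σ (star b a, b)).2 = a) (t : List X) : ∀ y : X,
    ∃ x, t.foldl (fun a b => (σ (a, b)).2) x = y := by
  induction t with
  | nil => intro y; exact ⟨y, rfl⟩
  | cons c t ih =>
    intro y
    obtain ⟨x, hx⟩ := ih y
    exact ⟨star c x, by simp [hstar1, hx]⟩

/-- For a left non-degenerate braided set `(X, σ)` with associated
shelf `a ◃ b := r(b·a, b)` and `σ'(a,b) := (b◃a, a)`, the `n`-guitar map is a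
bijection `Xⁿ → Xⁿ` for every `n ≥ 1`, and it entwines `σ_i` and `σ'_i` for
`1 ≤ i ≤ n-1`. -/
theorem statement_9 {X : Type*} (σ : X × X → X × X)
    (hYB : s12 σ ∘ s23 σ ∘ s12 σ = s23 σ ∘ s12 σ ∘ s23 σ)
    (star : X → X → X)
    (hstar1 : ∀ a b : X, (σ (star b a, b)).2 = a)
    (hstar2 : ∀ a b : X, star b ((σ (a, b)).2) = a)
    (dot : X → X → X)
    (hdot : ∀ a b : X, dot a b = (σ (star b a, b)).1)
    (tri : X → X → X)
    (htri : ∀ a b : X, tri a b = (σ (dot b a, b)).2)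
    (σ' : X × X → X × X)
    (hσ' : ∀ a b : X, σ' (a, b) = (tri b a, a)) :
    (∀ n : ℕ, 1 ≤ n →
      Set.BijOn (guitar σ) {l : List X | l.length = n} {l : List X | l.length = n}) ∧
    (∀ (n i : ℕ) (xs : List X), xs.length = n → 1 ≤ i → i ≤ n - 1 →
      guitar σ (applyAt σ i xs) = applyAt σ' i (guitar σ xs)) := by
  have hY := fun x y z => congrFun hYB (x, y, z)
  simp only [s12, s23, Function.comp, Prod.mk.injEq, Prod.ext_iff] at hY
  have h3 : ∀ x y z, (σ ((σ (x, y)).2, z)).2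
      = (σ ((σ (x, (σ (y, z)).1)).2, (σ (y, z)).2)).2 := fun x y z => (hY x y z).2.2
  have h2 : ∀ x y z, (σ ((σ (x, y)).1, (σ ((σ (x, y)).2, z)).1)).2
      = (σ ((σ (x, (σ (y, z)).1)).2, (σ (y, z)).2)).1 := fun x y z => (hY x y z).2.1
  have ht : ∀ x y, tri y (σ (x, y)).2 = (σ (σ (x, y))).2 := by
    intro x y
    rw [htri, hdot, hstar2]
  have hm : ∀ a b z, (σ (tri a b, z)).2 = tri (σ (a, z)).2 (σ (b, z)).2 := by
    intro a b z
    obtain ⟨x, rfl⟩ : ∃ x, b = (σ (x, a)).2 := ⟨star a b, (hstar1 _ _).symm⟩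
    rw [ht, h3 x a z, ht]
    have e := h3 (σ (x, a)).1 (σ (x, a)).2 z
    rw [h2, h3 x a z] at e
    exact e
  have hf : ∀ (t : List X) (a b : X), t.foldl (fun a b => (σ (a, b)).2) (tri a b)
      = tri (t.foldl (fun a b => (σ (a, b)).2) a) (t.foldl (fun a b => (σ (a, b)).2) b) := by
    intro t
    induction t with
    | nil => intro a b; rfl
    | cons c t ih => intro a b; simp only [List.foldl_cons, hm, ih]
  constructor
  · intro n _
    refine ⟨fun l hl => (guitar_length σ l).trans hl, ?_, ?_⟩
    · intro l _ m _
      clear * - hstar2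
      induction l generalizing m with
      | nil => intro h; cases m with
        | nil => rfl
        | cons y m => simp [guitar] at h
      | cons x l ih => intro h; cases m with
        | nil => simp [guitar] at h
        | cons y m =>
          simp only [guitar, List.cons.injEq] at h
          obtain rfl := ih h.2
          rw [foldl_inj σ star hstar2 l _ _ h.1]
    · intro m hm'
      have : ∃ l, guitar σ l = m := by
        clear * - hstar1
        induction m with
        | nil => exact ⟨[], rfl⟩
        | cons y m ih =>
          obtain ⟨l, rfl⟩ := ih
          obtain ⟨x, hx⟩ := foldl_surj σ star hstar1 l y
          exact ⟨x :: l, by simp [guitar, hx]⟩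
      obtain ⟨l, rfl⟩ := this
      exact ⟨l, (guitar_length σ l).symm.trans hm', rfl⟩
  · intro n i xs hn h1 hi
    subst hn
    induction i, xs using applyAt.induct with
    | case1 a b t => simp [applyAt, guitar, hσ', ← hf, ht]
    | case2 n a t ih =>
      simp only [applyAt, guitar, foldl_applyAt σ h3]
      rw [ih (by omega) (by simp at hi; omega)]
    | case3 i l g1 g2 =>
      exfalso
      match i, l, h1, hi, g1, g2 with
      | 1, a :: b :: t, _, _, g1, _ => exact g1 a b t rfl rfl
      | k + 2, a :: t, _, _, _, g2 => exact g2 k a t rfl rfl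
      | 1, [a], _, hi, _, _ => simp at hi
      | _ + 1, [], _, hi, _, _ => simp at hi
end

section
/- Let (X, σ) be a left non-degenerate braided set satisfying a·a = a⊛a for all a ∈ X, and write t(a) := a·a. Let M be a solid right module over (X,σ) (each a ∈ X acts bijectively on M; write m ↦ m∙a^{−1} for the inverse) and N a left module over (X,σ). With C_k := M × X^k × N and the boundaries d_i, d'_i and maps χ_i as in [T:HomEquiv], define s_i(m, y₁,…,y_k, ν) := (m∙t(χ_i(ȳ))^{−1}, y₁, …, y_{i−1}, y_i, y_i, y_{i+1}, …, y_k, ν). Then (C_k, d'_i, d_i, s_i) — with d'_i playing the role of d⁺ and d_i of d⁻ — is a semi-strong skew cubical structure in Set. Consequently, for every abelian group A, the abelian groups C_k(A) := ⊕_{c ∈ M×X^k×N} A decompose as C_k(A) = C_k^D ⊕ C_k^N, where C_k^D is the subgroup generated by the images of the (linearized) s_i and C_k^N is the image of the linearization of η_k := (Id − s_1∘d'_2)∘⋯∘(Id − s_{k−1}∘d'_k), and for all α, β ∈ ℤ this decomposition is preserved by the differential ∂_k := α·∑_{i=1}^{k}(−1)^{i−1} d'_i + β·∑_{i=1}^{k}(−1)^{i−1}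 d_i (maps extended linearly). -/
/-- The map `χ_i(ȳ)`: the first component of
`J⁻¹(((y_i ◃ y_{i-1}) ◃ ⋯) ◃ y₁, y₁, …, y_{i-1}, y_{i+1}, …, y_k)`. -/
def chiL {X : Type*} (tri : X → X → X) (Jinv : List X → List X)
    (i : ℕ) (ys : List X) : Option X :=
  match ys[i - 1]? with
  | some x =>
      (Jinv ((((ys.take (i - 1)).reverse).foldl tri x)
        :: (ys.take (i - 1) ++ ys.drop i))).head?
  | none => none

/-- The boundary
`d_i(m, ȳ, ν) = (m, y_i⊛y₁,…,y_i⊛y_{i-1}, y_i·y_{i+1},…,y_i·y_k, y_i∙ν)`. -/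
def dCyc {X M N : Type*} (star dot : X → X → X) (actN : X → N → N) (i : ℕ) :
    M × List X × N → M × List X × N :=
  fun p =>
    match p.2.1[i - 1]? with
    | some x =>
        (p.1, ((p.2.1.take (i - 1)).map (fun a => star x a))
          ++ ((p.2.1.drop i).map (fun a => dot x a)), actN x p.2.2)
    | none => p

/-- The boundary `d'_i(m, ȳ, ν) = (m∙χ_i(ȳ), y₁,…,y_{i-1},y_{i+1},…,y_k, ν)`. -/
def dPrime {X M N : Type*} (tri : X → X → X) (Jinv : List X → List X)
    (actM : M → X → M) (i : ℕ) : M × List X × N → M × List X × N :=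
  fun p =>
    match chiL tri Jinv i p.2.1 with
    | some c => (actM p.1 c, p.2.1.eraseIdx (i - 1), p.2.2)
    | none => p

/-- The degeneracy
`s_i(m, y₁,…,y_k, ν) = (m∙t(χ_i(ȳ))⁻¹, y₁,…,y_{i-1}, y_i, y_i, y_{i+1},…,y_k, ν)`. -/
def sCyc {X M N : Type*} (tri : X → X → X) (Jinv : List X → List X)
    (tmap : X → X) (actMinv : M → X → M) (i : ℕ) :
    M × List X × N → M × List X × N :=
  fun p =>
    match chiL tri Jinv i p.2.1, p.2.1[i - 1]? with
    | some c, some x =>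
        (actMinv p.1 (tmap c), p.2.1.take i ++ x :: p.2.1.drop i, p.2.2)
    | _, _ => p

/-- The subgroup of `⊕_{c : I} A` supported on basis elements of level `k`. -/
noncomputable def levC {I A : Type*} [AddCommGroup A] (len : I → ℕ) (k : ℕ) :
    Submodule ℤ (I →₀ A) :=
  Finsupp.supported A ℤ {c : I | len c = k}

/-- The linearized differential
`∂ = α·∑_{i=1}^{k}(−1)^{i−1} d'_i + β·∑_{i=1}^{k}(−1)^{i−1} d_i`
(on a basis element of level `k`). -/
noncomputable def bdryC {I A : Type*} [AddCommGroup A] (len : I → ℕ)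
    (dP dM : ℕ → I → I) (α β : ℤ) : (I →₀ A) →ₗ[ℤ] (I →₀ A) :=
  Finsupp.lsum ℕ fun c => ∑ i ∈ Finset.range (len c),
    ((α * (-1 : ℤ) ^ i) • (Finsupp.lsingle (dP (i + 1) c) : A →ₗ[ℤ] (I →₀ A))
      + (β * (-1 : ℤ) ^ i) • (Finsupp.lsingle (dM (i + 1) c) : A →ₗ[ℤ] (I →₀ A)))

/-- The linearization of `η_k = (Id − s_1∘d'_2)∘⋯∘(Id − s_{k−1}∘d'_k)`. -/
noncomputable def etaC {I A : Type*} [AddCommGroup A] (sS dP : ℕ → I → I)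
    (k : ℕ) : (I →₀ A) →ₗ[ℤ] (I →₀ A) :=
  (List.range (k - 1)).foldl
    (fun acc i => acc.comp
      (LinearMap.id - Finsupp.lmapDomain A ℤ (fun c => sS (i + 1) (dP (i + 2) c))))
    LinearMap.id

/-- The degenerate part `C_k^D = ∑_{i=1}^{k-1} Im (s_i : C_{k-1}(A) → C_k(A))`. -/
noncomputable def degPart {I A : Type*} [AddCommGroup A] (len : I → ℕ)
    (sS : ℕ → I → I) (k : ℕ) : Submodule ℤ (I →₀ A) :=
  ⨆ i ∈ Finset.Icc 1 (k - 1),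
    Submodule.map (Finsupp.lmapDomain A ℤ (sS i)) (levC len (k - 1))

/-- The normalized part `C_k^N = Im η_k`. -/
noncomputable def normPart {I A : Type*} [AddCommGroup A] (len : I → ℕ)
    (sS dP : ℕ → I → I) (k : ℕ) : Submodule ℤ (I →₀ A) :=
  Submodule.map (etaC sS dP k) (levC len k)


/-- Algebraic identities of the operations `star` and `dot`. -/
structure AlgLaws {X : Type*} (star dot : X → X → X) : Prop where
  A : ∀ u v a, star (star v u) (star v a) = star (dot u v) (star u a)
  B : ∀ u v a, dot (star v u) (star v a) = star (dot u v) (dot u a)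
  C : ∀ u v a, dot (star v u) (dot v a) = dot (dot u v) (dot u a)

theorem algLaws_of_YB {X : Type*} (σ : X × X → X × X)
    (hYB : s12 σ ∘ s23 σ ∘ s12 σ = s23 σ ∘ s12 σ ∘ s23 σ)
    (star : X → X → X)
    (hstar1 : ∀ a b : X, (σ (star b a, b)).2 = a)
    (hstar2 : ∀ a b : X, star b ((σ (a, b)).2) = a)
    (dot : X → X → X)
    (hdot : ∀ a b : X, dot a b = (σ (star b a, b)).1) : AlgLaws star dot := by
  have h1 : ∀ a b c, (σ ((σ (a,b)).1, (σ ((σ (a,b)).2, c)).1)).1 = (σ (a, (σ (b,c)).1)).1 := by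
    intro a b c
    have := congrArg (fun p => p.1) (congrFun hYB (a,b,c))
    simpa [s12, s23] using this
  have h2 : ∀ a b c, (σ ((σ (a,b)).1, (σ ((σ (a,b)).2, c)).1)).2
      = (σ ((σ (a, (σ (b,c)).1)).2, (σ (b,c)).2)).1 := by
    intro a b c
    have := congrArg (fun p => p.2.1) (congrFun hYB (a,b,c))
    simpa [s12, s23] using this
  have h3 : ∀ a b c, (σ ((σ (a,b)).2, c)).2
      = (σ ((σ (a, (σ (b,c)).1)).2, (σ (b,c)).2)).2 := by
    intro a b c
    have := congrArg (fun p => p.2.2) (congrFun hYB (a,b,c))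
    simpa [s12, s23] using this
  have hA : ∀ u v a, star (star v u) (star v a) = star (dot u v) (star u a) := by
    intro u v a
    have h := h3 (star (star v u) (star v a)) (star v u) v
    rw [hstar1, hstar1, hstar1, ← hdot] at h
    have hh2 := congrArg (fun t => star (dot u v) (star u t)) h
    simp only [hstar2] at hh2
    exact hh2.symm
  have hr : ∀ u v a, (σ (star (star v u) (star v a), dot u v)).2 = star u a := by
    intro u v a
    rw [hA, hstar1]
  refine ⟨hA, ?_, ?_⟩
  · intro u v a
    have h := h2 (star (star v a) (star v u)) (star v a) v
    rw [hstar1, hstar1, ← hdot, ← hdot, ← hdot, hr, ← hdot] at h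
    rw [← h, hstar2]
  · intro u v a
    have h := h1 (star (star a v) (star a u)) (star a v) a
    have hh2 := h2 (star (star a v) (star a u)) (star a v) a
    rw [hstar1, hstar1, ← hdot, ← hdot, ← hdot, hr, ← hdot] at hh2
    rw [hstar1, ← hdot, ← hdot, ← hdot] at h
    rw [hdot (star v u), ← hA, ← h, ← hh2, hdot _ (dot u a), hstar2]

/-- The laws of the map `χ`. -/
structure ChiLaws {X : Type*} (star dot : X → X → X)
    (chi : List X → X → List X → X) : Prop where
  one : ∀ u, chi [] u [] = u
  left : ∀ A w B u C, chi (A ++ w :: B) u C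
    = chi (A.map (star w) ++ B.map (dot w)) (dot w u) (C.map (dot w))
  right : ∀ A u B w C, chi A u (B ++ w :: C)
    = chi (A.map (star w)) (star w u) (B.map (star w) ++ C.map (dot w))

theorem chiLaws_of_last {X : Type*} {star dot : X → X → X} (hL : AlgLaws star dot)
    (chi : List X → X → List X → X)
    (one : ∀ u, chi [] u [] = u)
    (lastL : ∀ A w u, chi (A ++ [w]) u [] = chi (A.map (star w)) (dot w u) [])
    (lastR : ∀ A u B w, chi A u (B ++ [w])
      = chi (A.map (star w)) (star w u) (B.map (star w))) : ChiLaws star dot chi := by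
  have right : ∀ n, ∀ A u B w C, C.length = n → chi A u (B ++ w :: C)
    = chi (A.map (star w)) (star w u) (B.map (star w) ++ C.map (dot w)) := by
    intro n
    induction n with
    | zero =>
      intro A u B w C hC
      obtain rfl := List.length_eq_zero_iff.mp hC
      simpa using lastR A u B w
    | succ n ih =>
      intro A u B w C hC
      obtain ⟨C, z, rfl⟩ : ∃ D z, C = D ++ [z] := by
        have : C ≠ [] := by rintro rfl; simp at hC
        exact ⟨_, _, (List.dropLast_append_getLast this).symm⟩
      have e1 : B ++ w :: (C ++ [z]) = (B ++ w :: C) ++ [z] := by simp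
      have e2 : B.map (star w) ++ (C ++ [z]).map (dot w)
        = (B.map (star w) ++ C.map (dot w)) ++ [dot w z] := by simp
      rw [e1, lastR, e2, lastR, List.map_append, List.map_cons, ih _ _ _ _ _ (by simpa using hC)]
      simp only [List.map_append, List.map_map, Function.comp_def, hL.A w z, hL.B w z]
  have leftnil : ∀ n, ∀ A w B u, B.length = n → chi (A ++ w :: B) u []
    = chi (A.map (star w) ++ B.map (dot w)) (dot w u) [] := by
    intro n
    induction n with
    | zero =>
      intro A w B u hC
      obtain rfl := List.length_eq_zero_iff.mp hC
      simpa using lastL A w u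
    | succ n ih =>
      intro A w B u hC
      obtain ⟨B, z, rfl⟩ : ∃ D z, B = D ++ [z] := by
        have : B ≠ [] := by rintro rfl; simp at hC
        exact ⟨_, _, (List.dropLast_append_getLast this).symm⟩
      have e1 : A ++ w :: (B ++ [z]) = (A ++ w :: B) ++ [z] := by simp
      have e2 : A.map (star w) ++ (B ++ [z]).map (dot w)
        = (A.map (star w) ++ B.map (dot w)) ++ [dot w z] := by simp
      rw [e1, lastL, e2, lastL, List.map_append, List.map_cons, ih _ _ _ _ (by simpa using hC)]
      simp only [List.map_append, List.map_map, Function.comp_def, hL.A w z, hL.B w z, hL.C w z]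
  have left : ∀ n, ∀ A w B u C, C.length = n → chi (A ++ w :: B) u C
    = chi (A.map (star w) ++ B.map (dot w)) (dot w u) (C.map (dot w)) := by
    intro n
    induction n with
    | zero =>
      intro A w B u C hC
      obtain rfl := List.length_eq_zero_iff.mp hC
      exact leftnil _ A w B u rfl
    | succ n ih =>
      intro A w B u C hC
      obtain ⟨C, z, rfl⟩ : ∃ D z, C = D ++ [z] := by
        have : C ≠ [] := by rintro rfl; simp at hC
        exact ⟨_, _, (List.dropLast_append_getLast this).symm⟩
      have e2 : (C ++ [z]).map (dot w) = C.map (dot w) ++ [dot w z] := by simp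
      rw [lastR, e2, lastR, List.map_append, List.map_cons, ih _ _ _ _ _ (by simpa using hC)]
      simp only [List.map_append, List.map_map, Function.comp_def, hL.A w z, hL.B w z]
  exact ⟨one, fun A w B u C => left _ A w B u C rfl, fun A u B w C => right _ A u B w C rfl⟩

/-- The concrete `χ`, on a list `A ++ u :: B` with marked element `u`. -/
def chiFn {X : Type*} (star tri : X → X → X) (Jinv : List X → List X)
    (A : List X) (u : X) (B : List X) : X :=
  (Jinv (A ++ B)).foldr star (A.foldr (fun a x => tri x a) u)

theorem guitar_append_singleton {X : Type*} (σ : X × X → X × X) (z : X) : ∀ L : List X,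
    guitar σ (L ++ [z]) = (guitar σ L).map (fun a => (σ (a, z)).2) ++ [z]
  | [] => by simp [guitar]
  | x :: L => by
    simp [guitar, guitar_append_singleton σ z L, List.foldl_append]

section
variable {X : Type*}

theorem Jinv_cons
    (σ : X × X → X × X) (star : X → X → X)
    (hstar1 : ∀ a b : X, (σ (star b a, b)).2 = a)
    (Jinv : List X → List X)
    (hJ1 : ∀ l : List X, guitar σ (Jinv l) = l)
    (hJ2 : ∀ l : List X, Jinv (guitar σ l) = l)
    (y : X) (L : List X) :
    Jinv (y :: L) = (Jinv L).foldr star y :: Jinv L := by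
  have key : ∀ (l : List X), l.foldl (fun a b => (σ (a, b)).2) (l.foldr star y) = y := by
    intro l
    induction l with
    | nil => rfl
    | cons x l ih => simp [hstar1, ih]
  have : guitar σ ((Jinv L).foldr star y :: Jinv L) = y :: L := by
    simp only [guitar, key, hJ1]
  rw [← this, hJ2]

theorem Jinv_last
    (σ : X × X → X × X) (star : X → X → X)
    (hstar1 : ∀ a b : X, (σ (star b a, b)).2 = a)
    (Jinv : List X → List X)
    (hJ1 : ∀ l : List X, guitar σ (Jinv l) = l)
    (hJ2 : ∀ l : List X, Jinv (guitar σ l) = l)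
    (z : X) (L : List X) :
    Jinv (L ++ [z]) = Jinv (L.map (star z)) ++ [z] := by
  have : guitar σ (Jinv (L.map (star z)) ++ [z]) = L ++ [z] := by
    rw [guitar_append_singleton, hJ1, List.map_map]
    simp [Function.comp_def, hstar1]
  rw [← this, hJ2]

theorem chiL_eq
    (σ : X × X → X × X) (star : X → X → X)
    (hstar1 : ∀ a b : X, (σ (star b a, b)).2 = a)
    (Jinv : List X → List X)
    (hJ1 : ∀ l : List X, guitar σ (Jinv l) = l)
    (hJ2 : ∀ l : List X, Jinv (guitar σ l) = l)
    (tri : X → X → X) (A : List X) (u : X) (B : List X) :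
    chiL tri Jinv (A.length + 1) (A ++ u :: B) = some (chiFn star tri Jinv A u B) := by
  have h : A ++ u :: B = (A ++ [u]) ++ B := by simp
  have e : (A ++ u :: B).drop (A.length + 1) = B := by
    rw [h]; exact List.drop_left' (by simp)
  simp only [chiL, chiFn, Nat.add_sub_cancel]
  rw [e]
  simp [Jinv_cons σ star hstar1 Jinv hJ1 hJ2]

theorem chiFn_laws
    (σ : X × X → X × X) (star : X → X → X)
    (hstar1 : ∀ a b : X, (σ (star b a, b)).2 = a)
    (Jinv : List X → List X)
    (hJ1 : ∀ l : List X, guitar σ (Jinv l) = l)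
    (hJ2 : ∀ l : List X, Jinv (guitar σ l) = l)
    (hstar2 : ∀ a b : X, star b ((σ (a, b)).2) = a)
    (dot : X → X → X) (hL : AlgLaws star dot) (tri : X → X → X)
    (htri : ∀ a b : X, tri a b = (σ (dot b a, b)).2) :
    ChiLaws star dot (chiFn star tri Jinv) := by
  have hnil : Jinv [] = [] := by
    have := hJ2 []
    simpa [guitar] using this
  have tri1 : ∀ a b, star b (tri a b) = dot b a := by
    intro a b; rw [htri, hstar2]
  have auto : ∀ z a b, star z (tri a b) = tri (star z a) (star z b) := by
    intro z a b
    have h : star (star z b) (star z (tri a b)) = dot (star z b) (star z a) := by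
      rw [hL.A, tri1, hL.B]
    rw [htri (star z a), ← h, hstar1]
  have autof : ∀ z (A : List X) u, star z (A.foldr (fun a x => tri x a) u)
      = (A.map (star z)).foldr (fun a x => tri x a) (star z u) := by
    intro z A u
    induction A with
    | nil => rfl
    | cons a A ih => simp [auto, ih]
  apply chiLaws_of_last hL
  · intro u; simp [chiFn, hnil]
  · intro A w u
    simp only [chiFn, List.append_nil]
    rw [Jinv_last σ star hstar1 Jinv hJ1 hJ2]
    simp [autof, tri1]
  · intro A u B w
    simp only [chiFn]
    rw [← List.append_assoc, Jinv_last σ star hstar1 Jinv hJ1 hJ2]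
    simp [autof]
end

namespace ChiLaws
variable {X : Type*} {star dot : X → X → X} {chi : List X → X → List X → X}

theorem left0 (h : ChiLaws star dot chi) (w : X) (B : List X) (u : X) (C : List X) :
    chi (w :: B) u C = chi (B.map (dot w)) (dot w u) (C.map (dot w)) := by
  simpa using h.left [] w B u C

theorem left1 (h : ChiLaws star dot chi) (a w : X) (B : List X) (u : X) (C : List X) :
    chi (a :: w :: B) u C
      = chi (star w a :: B.map (dot w)) (dot w u) (C.map (dot w)) := by
  simpa using h.left [a] w B u C

theorem left2 (h : ChiLaws star dot chi) (a b w : X) (B : List X) (u : X) (C : List X) :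
    chi (a :: b :: w :: B) u C
      = chi (star w a :: star w b :: B.map (dot w)) (dot w u) (C.map (dot w)) := by
  simpa using h.left [a, b] w B u C

theorem right0 (h : ChiLaws star dot chi) (A : List X) (u w : X) (C : List X) :
    chi A u (w :: C) = chi (A.map (star w)) (star w u) (C.map (dot w)) := by
  simpa using h.right A u [] w C

theorem right1 (h : ChiLaws star dot chi) (A : List X) (u a w : X) (C : List X) :
    chi A u (a :: w :: C)
      = chi (A.map (star w)) (star w u) (star w a :: C.map (dot w)) := by
  simpa using h.right A u [a] w C

theorem right2 (h : ChiLaws star dot chi) (A : List X) (u a b w : X) (C : List X) :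
    chi A u (a :: b :: w :: C)
      = chi (A.map (star w)) (star w u) (star w a :: star w b :: C.map (dot w)) := by
  simpa using h.right A u [a, b] w C
end ChiLaws

/-- Reduction principle with one marked element. -/
theorem red1 {X : Type*} {star dot : X → X → X} (P : List X → X → List X → Prop)
    (base : ∀ u, P [] u [])
    (hA : ∀ w A u B, P (A.map (dot w)) (dot w u) (B.map (dot w)) → P (w :: A) u B)
    (hB : ∀ w u B, P [] (star w u) (B.map (dot w)) → P [] u (w :: B)) :
    ∀ A u B, P A u B := by
  have : ∀ n, ∀ A u B, A.length + B.length = n → P A u B := by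
    intro n
    induction n with
    | zero =>
      intro A u B h
      obtain rfl : A = [] := List.length_eq_zero_iff.mp (by omega)
      obtain rfl : B = [] := List.length_eq_zero_iff.mp (by omega)
      exact base u
    | succ n ih =>
      intro A u B h
      rcases A with _ | ⟨w, A⟩
      · rcases B with _ | ⟨w, B⟩
        · exact base u
        · exact hB _ _ _ (ih _ _ _ (by simp at h ⊢; omega))
      · exact hA _ _ _ _ (ih _ _ _ (by simp at h ⊢; omega))
  exact fun A u B => this _ A u B rfl

/-- Reduction principle with two marked elements. -/
theorem red2 {X : Type*} {star dot : X → X → X}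
    (P : List X → X → List X → X → List X → Prop)
    (base : ∀ u v, P [] u [] v [])
    (hA : ∀ w A u B v C, P (A.map (dot w)) (dot w u) (B.map (dot w)) (dot w v) (C.map (dot w))
      → P (w :: A) u B v C)
    (hB : ∀ w u B v C, P [] (star w u) (B.map (dot w)) (dot w v) (C.map (dot w))
      → P [] u (w :: B) v C)
    (hC : ∀ w u v C, P [] (star w u) [] (star w v) (C.map (dot w)) → P [] u [] v (w :: C)) :
    ∀ A u B v C, P A u B v C := by
  have : ∀ n, ∀ A u B v C, A.length + B.length + C.length = n → P A u B v C := by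
    intro n
    induction n with
    | zero =>
      intro A u B v C h
      obtain rfl : A = [] := List.length_eq_zero_iff.mp (by omega)
      obtain rfl : B = [] := List.length_eq_zero_iff.mp (by omega)
      obtain rfl : C = [] := List.length_eq_zero_iff.mp (by omega)
      exact base u v
    | succ n ih =>
      intro A u B v C h
      rcases A with _ | ⟨w, A⟩
      · rcases B with _ | ⟨w, B⟩
        · rcases C with _ | ⟨w, C⟩
          · exact base u v
          · exact hC _ _ _ _ (ih _ _ _ _ _ (by simp at h ⊢; omega))
        · exact hB _ _ _ _ _ (ih _ _ _ _ _ (by simp at h ⊢; omega))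
      · exact hA _ _ _ _ _ _ (ih _ _ _ _ _ (by simp at h ⊢; omega))
  exact fun A u B v C => this _ A u B v C rfl

/-- All algebraic data used for the `M`-components. -/
structure ModLaws {X M : Type*} (star dot : X → X → X) (chi : List X → X → List X → X)
    (tmap : X → X) (actM actMinv : M → X → M) : Prop where
  alg : AlgLaws star dot
  chi : ChiLaws star dot chi
  ri : ∀ a, dot a a = star a a
  tm : ∀ a, tmap a = dot a a
  act : ∀ m u v, actM (actM m (star v u)) v = actM (actM m (dot u v)) u
  inv1 : ∀ m a, actM (actMinv m a) a = m
  inv2 : ∀ m a, actMinv (actM m a) a = m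

set_option linter.unusedSimpArgs false

namespace ModLaws
variable {X M : Type*} {star dot : X → X → X} {chi : List X → X → List X → X}
    {tmap : X → X} {actM actMinv : M → X → M}

theorem dup_left (h : ModLaws star dot chi tmap actM actMinv) :
    ∀ A u C, chi A u (u :: C) = tmap (chi A u C) := by
  apply red1 (star := star) (dot := dot)
  · intro u; rw [h.chi.right0]; simp [h.chi.one, h.tm, h.ri]
  · intro w A u B ih; rw [h.chi.left0, h.chi.left0]; exact ih
  · intro w u B ih; rw [h.chi.right1, h.chi.right0 _ _ w]; exact ih

theorem dup_right (h : ModLaws star dot chi tmap actM actMinv) :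
    ∀ A u C, chi (A ++ [u]) u C = tmap (chi A u C) := by
  apply red1 (star := star) (dot := dot)
  · intro u; rw [List.nil_append, h.chi.left0]; simp [h.chi.one, h.tm]
  · intro w A u B ih
    rw [List.cons_append, h.chi.left0, h.chi.left0]; simpa using ih
  · intro w u B ih
    rw [List.nil_append, h.chi.right0, h.chi.right0]; exact ih

theorem dd (h : ModLaws star dot chi tmap actM actMinv) (m : M) : ∀ A u B v C,
    actM (actM m (chi (A ++ u :: B) v C)) (chi A u (B ++ C))
      = actM (actM m (chi A u (B ++ v :: C))) (chi (A ++ B) v C) := by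
  apply red2 (star := star) (dot := dot)
  · intro u v
    simp only [List.nil_append]
    rw [h.chi.left0, h.chi.right0]
    simp [h.chi.one, h.act]
  · intro w A u B v C ih
    simp only [List.cons_append, h.chi.left0 w, List.map_append, List.map_cons]
    exact ih
  · intro w u B v C ih
    simp only [List.cons_append, List.nil_append, h.chi.left2 _ _ w, h.chi.left1 _ w,
      h.chi.left0 w, h.chi.right2 _ _ _ _ w, h.chi.right1 _ _ _ w, h.chi.right0 _ _ w,
      List.map_append, List.map_cons, List.map_nil]
    exact ih
  · intro w u v C ih
    simp only [List.cons_append, List.nil_append, h.chi.left2 _ _ w, h.chi.left1 _ w,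
      h.chi.left0 w, h.chi.right2 _ _ _ _ w, h.chi.right1 _ _ _ w, h.chi.right0 _ _ w,
      List.map_append, List.map_cons, List.map_nil]
    exact ih

theorem ds_lt (h : ModLaws star dot chi tmap actM actMinv) (m : M) : ∀ A u B v C,
    actM (actMinv m (tmap (chi (A ++ u :: B) v C))) (chi A u (B ++ v :: v :: C))
      = actMinv (actM m (chi A u (B ++ v :: C))) (tmap (chi (A ++ B) v C)) := by
  apply red2 (star := star) (dot := dot)
  · intro u v
    simp only [List.nil_append]
    rw [h.chi.left0, h.chi.right0, h.chi.right0 _ _ v []]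
    simp only [h.chi.one, h.chi.right0, List.map_nil, List.map_cons]
    have key : actM (actM (actMinv m (tmap (dot u v))) (star (dot v v) (star v u))) (dot v v)
      = actM m (star v u) := by
      rw [h.act, h.alg.C, ← h.tm, h.inv1]
    rw [← key, h.tm v, h.inv2]
  · intro w A u B v C ih
    simp only [List.cons_append, h.chi.left0 w, List.map_append, List.map_cons]
    exact ih
  · intro w u B v C ih
    simp only [List.cons_append, List.nil_append, h.chi.left2 _ _ w, h.chi.left1 _ w,
      h.chi.left0 w, h.chi.right2 _ _ _ _ w, h.chi.right1 _ _ _ w, h.chi.right0 _ _ w,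
      List.map_append, List.map_cons, List.map_nil]
    exact ih
  · intro w u v C ih
    simp only [List.cons_append, List.nil_append, h.chi.left2 _ _ w, h.chi.left1 _ w,
      h.chi.left0 w, h.chi.right2 _ _ _ _ w, h.chi.right1 _ _ _ w, h.chi.right0 _ _ w,
      List.map_append, List.map_cons, List.map_nil]
    exact ih

theorem ds_gt (h : ModLaws star dot chi tmap actM actMinv) (m : M) : ∀ A u B v C,
    actM (actMinv m (tmap (chi A u (B ++ v :: C)))) (chi (A ++ u :: u :: B) v C)
      = actMinv (actM m (chi (A ++ u :: B) v C)) (tmap (chi A u (B ++ C))) := by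
  apply red2 (star := star) (dot := dot)
  · intro u v
    simp only [List.nil_append]
    rw [h.chi.right0, h.chi.left0, h.chi.left0 u []]
    simp only [h.chi.one, h.chi.left0, List.map_nil, List.map_cons]
    have key : actM (actM (actMinv m (tmap (star v u))) (dot (dot u u) (dot u v))) (dot u u)
      = actM m (dot u v) := by
      rw [← h.act, h.ri u, ← h.alg.A, ← h.ri, ← h.tm, h.inv1]
    rw [← key, h.tm u, h.inv2]
  · intro w A u B v C ih
    simp only [List.cons_append, h.chi.left0 w, List.map_append, List.map_cons]
    exact ih
  · intro w u B v C ih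
    simp only [List.cons_append, List.nil_append, h.chi.left2 _ _ w, h.chi.left1 _ w,
      h.chi.left0 w, h.chi.right2 _ _ _ _ w, h.chi.right1 _ _ _ w, h.chi.right0 _ _ w,
      List.map_append, List.map_cons, List.map_nil]
    exact ih
  · intro w u v C ih
    simp only [List.cons_append, List.nil_append, h.chi.left2 _ _ w, h.chi.left1 _ w,
      h.chi.left0 w, h.chi.right2 _ _ _ _ w, h.chi.right1 _ _ _ w, h.chi.right0 _ _ w,
      List.map_append, List.map_cons, List.map_nil]
    exact ih

theorem ss_lt (h : ModLaws star dot chi tmap actM actMinv) (m : M) : ∀ A u B v C,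
    actMinv (actMinv m (tmap (chi (A ++ u :: B) v C))) (tmap (chi A u (B ++ v :: v :: C)))
      = actMinv (actMinv m (tmap (chi A u (B ++ v :: C))))
          (tmap (chi (A ++ u :: u :: B) v C)) := by
  apply red2 (star := star) (dot := dot)
  · intro u v
    simp only [List.nil_append]
    rw [h.chi.left0, h.chi.right0, h.chi.right0 _ _ v [], h.chi.left0]
    simp only [h.chi.one, h.chi.left0, h.chi.right0, List.map_nil, List.map_cons]
    have hP : tmap (star (dot v v) (star v u)) = star (tmap (dot u v)) (tmap (star v u)) := by
      rw [h.tm, h.ri, h.alg.A, h.alg.C, ← h.tm, ← h.ri, ← h.tm]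
    have hPr : tmap (dot (dot u u) (dot u v)) = dot (tmap (star v u)) (tmap (dot u v)) := by
      rw [h.tm, ← h.alg.C, h.ri u, ← h.alg.A, ← h.ri (star v u), ← h.tm, ← h.tm]
    rw [hP, hPr]
    have inj : ∀ (a : X) (x y : M), actM x a = actM y a → x = y := by
      intro a x y hxy
      rw [← h.inv2 x a, hxy, h.inv2]
    apply inj (star (tmap (dot u v)) (tmap (star v u)))
    apply inj (tmap (dot u v))
    rw [h.inv1, h.inv1, h.act, h.inv1, h.inv1]
  · intro w A u B v C ih
    simp only [List.cons_append, h.chi.left0 w, List.map_append, List.map_cons]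
    exact ih
  · intro w u B v C ih
    simp only [List.cons_append, List.nil_append, h.chi.left2 _ _ w, h.chi.left1 _ w,
      h.chi.left0 w, h.chi.right2 _ _ _ _ w, h.chi.right1 _ _ _ w, h.chi.right0 _ _ w,
      List.map_append, List.map_cons, List.map_nil]
    exact ih
  · intro w u v C ih
    simp only [List.cons_append, List.nil_append, h.chi.left2 _ _ w, h.chi.left1 _ w,
      h.chi.left0 w, h.chi.right2 _ _ _ _ w, h.chi.right1 _ _ _ w, h.chi.right0 _ _ w,
      List.map_append, List.map_cons, List.map_nil]
    exact ih
end ModLaws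

/-- Semi-strong skew cubical structures, with all levels put together. -/
structure SemiStrong {I : Type*} (len : I → ℕ) (dP dM sS : ℕ → I → I) : Prop where
  lenP : ∀ i p, 1 ≤ i → i ≤ len p → len (dP i p) = len p - 1
  lenM : ∀ i p, 1 ≤ i → i ≤ len p → len (dM i p) = len p - 1
  lenS : ∀ i p, 1 ≤ i → i ≤ len p → len (sS i p) = len p + 1
  PP : ∀ i j p, 1 ≤ i → i < j → j ≤ len p → dP i (dP j p) = dP (j - 1) (dP i p)
  PM : ∀ i j p, 1 ≤ i → i < j → j ≤ len p → dP i (dM j p) = dM (j - 1) (dP i p)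
  MP : ∀ i j p, 1 ≤ i → i < j → j ≤ len p → dM i (dP j p) = dP (j - 1) (dM i p)
  MM : ∀ i j p, 1 ≤ i → i < j → j ≤ len p → dM i (dM j p) = dM (j - 1) (dM i p)
  PSlt : ∀ i j p, 1 ≤ i → i < j → j ≤ len p → dP i (sS j p) = sS (j - 1) (dP i p)
  MSlt : ∀ i j p, 1 ≤ i → i < j → j ≤ len p → dM i (sS j p) = sS (j - 1) (dM i p)
  PSgt : ∀ i j p, 1 ≤ j → j + 1 < i → i ≤ len p + 1 → dP i (sS j p) = sS j (dP (i - 1) p)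
  MSgt : ∀ i j p, 1 ≤ j → j + 1 < i → i ≤ len p + 1 → dM i (sS j p) = sS j (dM (i - 1) p)
  MS : ∀ i p, 1 ≤ i → i ≤ len p → dM i (sS i p) = dM (i + 1) (sS i p)
  SS : ∀ i j p, 1 ≤ i → i ≤ j → j ≤ len p → sS i (sS j p) = sS (j + 1) (sS i p)
  PS1 : ∀ i p, 1 ≤ i → i ≤ len p → dP i (sS i p) = p
  PS2 : ∀ i p, 1 ≤ i → i ≤ len p → dP (i + 1) (sS i p) = p

theorem split1 {X : Type*} (L : List X) (i : ℕ) (h1 : 1 ≤ i) (h2 : i ≤ L.length) :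
    ∃ A u B, L = A ++ u :: B ∧ i = A.length + 1 := by
  refine ⟨L.take (i - 1), L[i - 1]'(by omega), L.drop i, ?_, ?_⟩
  · have h := List.drop_eq_getElem_cons (l := L) (i := i - 1) (by omega)
    rw [show i - 1 + 1 = i by omega] at h
    rw [← h, List.take_append_drop]
  · rw [List.length_take]; omega

theorem split2 {X : Type*} (L : List X) (i j : ℕ) (h1 : 1 ≤ i) (hij : i < j)
    (h2 : j ≤ L.length) :
    ∃ A u B v C, L = A ++ u :: (B ++ v :: C) ∧ i = A.length + 1 ∧
      j = A.length + B.length + 2 := by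
  obtain ⟨A, u, R, rfl, hi⟩ := split1 L i h1 (by omega)
  simp only [List.length_append, List.length_cons] at h2
  obtain ⟨B, v, C, rfl, hj⟩ := split1 R (j - i) (by omega) (by omega)
  exact ⟨A, u, B, v, C, rfl, hi, by omega⟩

section
variable {X M N : Type*} {star dot tri : X → X → X} {chi : List X → X → List X → X}
    {tmap : X → X} {actM actMinv : M → X → M} {actN : X → N → N} {Jinv : List X → List X}

theorem drop_mid (A : List X) (u : X) (B : List X) :
    (A ++ u :: B).drop (A.length + 1) = B := by
  rw [show A ++ u :: B = (A ++ [u]) ++ B by simp]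
  exact List.drop_left' (by simp)

theorem take_mid (A : List X) (u : X) (B : List X) :
    (A ++ u :: B).take (A.length + 1) = A ++ [u] := by
  rw [show A ++ u :: B = (A ++ [u]) ++ B by simp]
  exact List.take_left' (by simp)

theorem dPrime_eq
    (hc : ∀ A u B, chiL tri Jinv (A.length + 1) (A ++ u :: B) = some (chi A u B))
    (A : List X) (u : X) (B : List X) {i : ℕ} {L : List X} (m : M) (n : N)
    (hL : L = A ++ u :: B) (hi : i = A.length + 1) :
    dPrime tri Jinv actM i (m, L, n) = (actM m (chi A u B), A ++ B, n) := by
  subst hL hi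
  simp [dPrime, hc, List.eraseIdx_append_of_length_le]

theorem sCyc_eq
    (hc : ∀ A u B, chiL tri Jinv (A.length + 1) (A ++ u :: B) = some (chi A u B))
    (A : List X) (u : X) (B : List X) {i : ℕ} {L : List X} (m : M) (n : N)
    (hL : L = A ++ u :: B) (hi : i = A.length + 1) :
    sCyc tri Jinv tmap actMinv i (m, L, n)
      = (actMinv m (tmap (chi A u B)), A ++ u :: u :: B, n) := by
  subst hL hi
  have : (A ++ u :: B)[A.length + 1 - 1]? = some u := by simp
  simp only [sCyc, hc, this, drop_mid, take_mid]
  simp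

theorem dCyc_eq
    (A : List X) (u : X) (B : List X) {i : ℕ} {L : List X} (m : M) (n : N)
    (hL : L = A ++ u :: B) (hi : i = A.length + 1) :
    dCyc star dot actN i (m, L, n)
      = (m, A.map (star u) ++ B.map (dot u), actN u n) := by
  subst hL hi
  have : (A ++ u :: B)[A.length + 1 - 1]? = some u := by simp
  simp only [dCyc, this, drop_mid]
  simp

theorem semiStrong_main
    (hc : ∀ A u B, chiL tri Jinv (A.length + 1) (A ++ u :: B) = some (chi A u B))
    (h : ModLaws star dot chi tmap actM actMinv)
    (hN : ∀ u v n, actN (star v u) (actN v n) = actN (dot u v) (actN u n)) :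
    SemiStrong (fun p : M × List X × N => p.2.1.length) (dPrime tri Jinv actM)
      (dCyc star dot actN) (sCyc tri Jinv tmap actMinv) where
  lenP := by
    rintro i ⟨m, L, n⟩ h1 h2
    obtain ⟨A, u, B, rfl, rfl⟩ := split1 L i h1 h2
    rw [dPrime_eq hc A u B m n rfl rfl]; simp
  lenM := by
    rintro i ⟨m, L, n⟩ h1 h2
    obtain ⟨A, u, B, rfl, rfl⟩ := split1 L i h1 h2
    rw [dCyc_eq A u B m n rfl rfl]; simp
  lenS := by
    rintro i ⟨m, L, n⟩ h1 h2
    obtain ⟨A, u, B, rfl, rfl⟩ := split1 L i h1 h2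
    rw [sCyc_eq hc A u B m n rfl rfl]; simp; omega
  PP := by
    rintro i j ⟨m, L, n⟩ h1 hij h2
    obtain ⟨A, u, B, v, C, rfl, rfl, rfl⟩ := split2 L i j h1 hij h2
    rw [dPrime_eq hc (A ++ u :: B) v C m n (by simp) (by simp; omega),
      dPrime_eq hc A u (B ++ C) _ n (by simp) (by simp),
      dPrime_eq hc A u (B ++ v :: C) m n (by simp) (by simp),
      dPrime_eq hc (A ++ B) v C _ n (by simp) (by simp; try omega), h.dd, List.append_assoc]
  PM := by
    rintro i j ⟨m, L, n⟩ h1 hij h2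
    obtain ⟨A, u, B, v, C, rfl, rfl, rfl⟩ := split2 L i j h1 hij h2
    rw [dCyc_eq (A ++ u :: B) v C m n (by simp) (by simp; omega),
      dPrime_eq hc (A.map (star v)) (star v u) (B.map (star v) ++ C.map (dot v)) _ _
        (by simp) (by simp),
      dPrime_eq hc A u (B ++ v :: C) m n (by simp) (by simp),
      dCyc_eq (A ++ B) v C _ n (by simp) (by simp; try omega), h.chi.right]
    simp
  MP := by
    rintro i j ⟨m, L, n⟩ h1 hij h2
    obtain ⟨A, u, B, v, C, rfl, rfl, rfl⟩ := split2 L i j h1 hij h2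
    rw [dPrime_eq hc (A ++ u :: B) v C m n (by simp) (by simp; omega),
      dCyc_eq A u (B ++ C) _ n (by simp) (by simp),
      dCyc_eq A u (B ++ v :: C) m n (by simp) (by simp),
      dPrime_eq hc (A.map (star u) ++ B.map (dot u)) (dot u v) (C.map (dot u)) _ _
        (by simp) (by simp; try omega), h.chi.left]
    simp
  MM := by
    rintro i j ⟨m, L, n⟩ h1 hij h2
    obtain ⟨A, u, B, v, C, rfl, rfl, rfl⟩ := split2 L i j h1 hij h2
    rw [dCyc_eq (A ++ u :: B) v C m n (by simp) (by simp; omega),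
      dCyc_eq (A.map (star v)) (star v u) (B.map (star v) ++ C.map (dot v)) _ _
        (by simp) (by simp),
      dCyc_eq A u (B ++ v :: C) m n (by simp) (by simp),
      dCyc_eq (A.map (star u) ++ B.map (dot u)) (dot u v) (C.map (dot u)) _ _
        (by simp) (by simp; try omega), hN]
    simp only [List.map_append, List.map_map, Function.comp_def, h.alg.A u v, h.alg.B u v,
      h.alg.C u v, List.append_assoc]
  PSlt := by
    rintro i j ⟨m, L, n⟩ h1 hij h2
    obtain ⟨A, u, B, v, C, rfl, rfl, rfl⟩ := split2 L i j h1 hij h2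
    rw [sCyc_eq hc (A ++ u :: B) v C m n (by simp) (by simp; omega),
      dPrime_eq hc A u (B ++ v :: v :: C) _ n (by simp) (by simp),
      dPrime_eq hc A u (B ++ v :: C) m n (by simp) (by simp),
      sCyc_eq hc (A ++ B) v C _ n (by simp) (by simp; try omega), h.ds_lt, List.append_assoc]
  MSlt := by
    rintro i j ⟨m, L, n⟩ h1 hij h2
    obtain ⟨A, u, B, v, C, rfl, rfl, rfl⟩ := split2 L i j h1 hij h2
    rw [sCyc_eq hc (A ++ u :: B) v C m n (by simp) (by simp; omega),
      dCyc_eq A u (B ++ v :: v :: C) _ n (by simp) (by simp),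
      dCyc_eq A u (B ++ v :: C) m n (by simp) (by simp),
      sCyc_eq hc (A.map (star u) ++ B.map (dot u)) (dot u v) (C.map (dot u)) _ _
        (by simp) (by simp; try omega), h.chi.left]
    simp
  PSgt := by
    rintro i j ⟨m, L, n⟩ h1 hij h2
    obtain ⟨A, u, B, v, C, rfl, rfl, hi⟩ := split2 L j (i - 1) h1 (by omega)
      (by simp only at h2; omega)
    rw [sCyc_eq hc A u (B ++ v :: C) m n (by simp) (by simp),
      dPrime_eq hc (A ++ u :: u :: B) v C _ n (by simp) (by simp; omega),
      dPrime_eq hc (A ++ u :: B) v C _ n (by simp) (by simp; omega),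
      sCyc_eq hc A u (B ++ C) _ n (by simp) (by simp), h.ds_gt]
    simp
  MSgt := by
    rintro i j ⟨m, L, n⟩ h1 hij h2
    obtain ⟨A, u, B, v, C, rfl, rfl, hi⟩ := split2 L j (i - 1) h1 (by omega)
      (by simp only at h2; omega)
    rw [sCyc_eq hc A u (B ++ v :: C) m n (by simp) (by simp),
      dCyc_eq (A ++ u :: u :: B) v C _ n (by simp) (by simp; omega),
      dCyc_eq (A ++ u :: B) v C _ n (by simp) (by simp; omega),
      sCyc_eq hc (A.map (star v)) (star v u) (B.map (star v) ++ C.map (dot v)) m _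
        (by simp) (by simp), h.chi.right]
    simp
  MS := by
    rintro i ⟨m, L, n⟩ h1 h2
    obtain ⟨A, u, B, rfl, rfl⟩ := split1 L i h1 h2
    rw [sCyc_eq hc A u B m n rfl rfl, dCyc_eq A u (u :: B) _ n rfl rfl,
      dCyc_eq (A ++ [u]) u B _ n (by simp) (by simp)]
    simp [h.ri]
  SS := by
    rintro i j ⟨m, L, n⟩ h1 hij h2
    rcases hij.eq_or_lt with rfl | hij
    · obtain ⟨A, u, B, rfl, rfl⟩ := split1 L i h1 h2
      rw [sCyc_eq hc A u B m n rfl rfl, sCyc_eq hc A u (u :: B) _ n rfl rfl,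
        sCyc_eq hc (A ++ [u]) u B _ n (by simp) (by simp), h.dup_left, h.dup_right]
      simp
    · obtain ⟨A, u, B, v, C, rfl, rfl, rfl⟩ := split2 L i j h1 hij h2
      rw [sCyc_eq hc (A ++ u :: B) v C m n (by simp) (by simp; omega),
        sCyc_eq hc A u (B ++ v :: v :: C) _ n (by simp) (by simp),
        sCyc_eq hc A u (B ++ v :: C) m n (by simp) (by simp),
        sCyc_eq hc (A ++ u :: u :: B) v C _ n (by simp) (by simp; omega), h.ss_lt]
      simp
  PS1 := by
    rintro i ⟨m, L, n⟩ h1 h2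
    obtain ⟨A, u, B, rfl, rfl⟩ := split1 L i h1 h2
    rw [sCyc_eq hc A u B m n rfl rfl, dPrime_eq hc A u (u :: B) _ n rfl rfl, h.dup_left, h.inv1]
  PS2 := by
    rintro i ⟨m, L, n⟩ h1 h2
    obtain ⟨A, u, B, rfl, rfl⟩ := split1 L i h1 h2
    rw [sCyc_eq hc A u B m n rfl rfl, dPrime_eq hc (A ++ [u]) u B _ n (by simp) (by simp),
      h.dup_right, h.inv1]
    simp
end

section
variable {I A : Type*} [AddCommGroup A] {len : I → ℕ} {dP dM sS : ℕ → I → I}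

theorem levC_le {k : ℕ} {S : Submodule ℤ (I →₀ A)}
    (h : ∀ c, len c = k → ∀ a : A, Finsupp.single c a ∈ S) : levC (A := A) len k ≤ S := by
  intro x hx
  rw [← Finsupp.sum_single x]
  refine Submodule.sum_mem _ fun c hc => h c ?_ _
  exact (Finsupp.mem_supported ℤ x).mp hx hc

theorem levC_eq {k : ℕ} {f g : (I →₀ A) →ₗ[ℤ] (I →₀ A)}
    (h : ∀ c, len c = k → ∀ a : A, f (Finsupp.single c a) = g (Finsupp.single c a))
    {x : I →₀ A} (hx : x ∈ levC (A := A) len k) : f x = g x :=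
  levC_le (S := LinearMap.eqLocus f g) h hx

theorem single_mem_levC (c : I) (a : A) {k : ℕ} (h : len c = k) :
    Finsupp.single c a ∈ levC (A := A) len k :=
  Finsupp.single_mem_supported ℤ a h

/-- Linearization of a map. -/
noncomputable abbrev linz (A : Type*) [AddCommGroup A] (f : I → I) :
    (I →₀ A) →ₗ[ℤ] (I →₀ A) :=
  Finsupp.lmapDomain A ℤ f

theorem linz_single (f : I → I) (c : I) (a : A) :
    linz A f (Finsupp.single c a) = Finsupp.single (f c) a := by
  simp [linz]

theorem linz_mem {f : I → I} {k l : ℕ} (h : ∀ c, len c = k → len (f c) = l)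
    {x : I →₀ A} (hx : x ∈ levC (A := A) len k) : linz A f x ∈ levC (A := A) len l := by
  refine levC_le (S := (levC (A := A) len l).comap (linz A f)) ?_ hx
  intro c hc a
  rw [Submodule.mem_comap, linz_single]
  exact single_mem_levC _ _ (h c hc)

theorem linz_comp_eq {f g f2 g2 : I → I} {k : ℕ} (h : ∀ c, len c = k → f (g c) = f2 (g2 c))
    {x : I →₀ A} (hx : x ∈ levC (A := A) len k) :
    linz A f (linz A g x) = linz A f2 (linz A g2 x) := by
  refine levC_eq (f := (linz A f).comp (linz A g)) (g := (linz A f2).comp (linz A g2)) ?_ hx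
  intro c hc a
  simp only [LinearMap.comp_apply, linz_single, h c hc]

theorem linz_comp_id {f g : I → I} {k : ℕ} (h : ∀ c, len c = k → f (g c) = c)
    {x : I →₀ A} (hx : x ∈ levC (A := A) len k) :
    linz A f (linz A g x) = x := by
  refine levC_eq (f := (linz A f).comp (linz A g)) (g := LinearMap.id) ?_ hx
  intro c hc a
  simp only [LinearMap.comp_apply, linz_single, h c hc, LinearMap.id_apply]

/-- Partial products of `η`. -/
noncomputable def etaN (A : Type*) [AddCommGroup A] (sS dP : ℕ → I → I) (n : ℕ) :
    (I →₀ A) →ₗ[ℤ] (I →₀ A) :=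
  (List.range n).foldl
    (fun acc i => acc.comp
      (LinearMap.id - Finsupp.lmapDomain A ℤ (fun c => sS (i + 1) (dP (i + 2) c))))
    LinearMap.id

theorem etaN_zero (x : I →₀ A) : etaN A sS dP 0 x = x := by simp [etaN]

theorem etaN_succ (n : ℕ) (x : I →₀ A) : etaN A sS dP (n + 1) x
    = etaN A sS dP n (x - linz A (sS (n + 1)) (linz A (dP (n + 2)) x)) := by
  have : Finsupp.lmapDomain A ℤ (fun c => sS (n + 1) (dP (n + 2) c)) x
    = linz A (sS (n + 1)) (linz A (dP (n + 2)) x) := by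
    simp only [linz, Finsupp.lmapDomain_apply, ← Finsupp.mapDomain_comp]
    rfl
  simp only [etaN, List.range_succ, List.foldl_append, List.foldl_cons, List.foldl_nil,
    LinearMap.comp_apply, LinearMap.sub_apply, LinearMap.id_apply, this]

theorem mem_degPart {k i : ℕ} (h1 : 1 ≤ i) (h2 : i + 1 ≤ k) {z : I →₀ A}
    (hz : z ∈ levC (A := A) len (k - 1)) : linz A (sS i) z ∈ degPart (A := A) len sS k := by
  unfold degPart
  refine Submodule.mem_iSup_of_mem i (Submodule.mem_iSup_of_mem ?_ ⟨z, hz, rfl⟩)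
  exact Finset.mem_Icc.mpr ⟨h1, by omega⟩

theorem degPart_le {k : ℕ} {S : Submodule ℤ (I →₀ A)}
    (h : ∀ i, 1 ≤ i → i + 1 ≤ k → ∀ z ∈ levC (A := A) len (k - 1), linz A (sS i) z ∈ S) :
    degPart (A := A) len sS k ≤ S := by
  unfold degPart
  refine iSup₂_le fun i hi => ?_
  rw [Finset.mem_Icc] at hi
  rintro _ ⟨z, hz, rfl⟩
  exact h i hi.1 (by omega) z hz

namespace SemiStrong

theorem P_mem (H : SemiStrong len dP dM sS) {k i : ℕ} (h1 : 1 ≤ i) (h2 : i ≤ k)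
    {x : I →₀ A} (hx : x ∈ levC (A := A) len k) :
    linz A (dP i) x ∈ levC (A := A) len (k - 1) :=
  linz_mem (fun c hc => by rw [H.lenP i c h1 (by omega), hc]) hx

theorem M_mem (H : SemiStrong len dP dM sS) {k i : ℕ} (h1 : 1 ≤ i) (h2 : i ≤ k)
    {x : I →₀ A} (hx : x ∈ levC (A := A) len k) :
    linz A (dM i) x ∈ levC (A := A) len (k - 1) :=
  linz_mem (fun c hc => by rw [H.lenM i c h1 (by omega), hc]) hx

theorem S_mem (H : SemiStrong len dP dM sS) {k i : ℕ} (h1 : 1 ≤ i) (h2 : i + 1 ≤ k)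
    {x : I →₀ A} (hx : x ∈ levC (A := A) len (k - 1)) :
    linz A (sS i) x ∈ levC (A := A) len k :=
  linz_mem (fun c hc => by rw [H.lenS i c h1 (by omega), hc]; omega) hx

theorem p_mem (H : SemiStrong len dP dM sS) {k n : ℕ} (h2 : n + 2 ≤ k)
    {x : I →₀ A} (hx : x ∈ levC (A := A) len k) :
    linz A (sS (n + 1)) (linz A (dP (n + 2)) x) ∈ levC (A := A) len k :=
  H.S_mem (by omega) (by omega) (H.P_mem (by omega) h2 hx)

theorem eta_sub (H : SemiStrong len dP dM sS) {k : ℕ} : ∀ n, n + 1 ≤ k →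
    ∀ x ∈ levC (A := A) len k, x - etaN A sS dP n x ∈ degPart (A := A) len sS k := by
  intro n
  induction n with
  | zero => intro _ x _; rw [etaN_zero, sub_self]; exact zero_mem _
  | succ n ih =>
    intro hn x hx
    rw [etaN_succ]
    have hp := H.p_mem (n := n) (by omega) hx
    have := ih (by omega) _ (sub_mem hx hp)
    have h2 : linz A (sS (n + 1)) (linz A (dP (n + 2)) x) ∈ degPart (A := A) len sS k :=
      mem_degPart (by omega) (by omega) (H.P_mem (by omega) (by omega) hx)
    convert add_mem this h2 using 1
    abel

theorem degPart_le_levC (H : SemiStrong len dP dM sS) (k : ℕ) :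
    degPart (A := A) len sS k ≤ levC (A := A) len k :=
  degPart_le fun _ h1 h2 _ hz => H.S_mem h1 h2 hz

theorem eta_kills (H : SemiStrong len dP dM sS) {k : ℕ} : ∀ n, n + 1 ≤ k →
    ∀ x ∈ levC (A := A) len k, (∀ j, n + 2 ≤ j → j ≤ k → linz A (dP j) x = 0) →
    ∀ j, 2 ≤ j → j ≤ k → linz A (dP j) (etaN A sS dP n x) = 0 := by
  intro n
  induction n with
  | zero => intro _ x _ h j h2 hj; rw [etaN_zero]; exact h j (by omega) hj
  | succ n ih =>
    intro hn x hx h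
    rw [etaN_succ]
    have hp := H.p_mem (n := n) (by omega) hx
    have hP := H.P_mem (i := n + 2) (by omega) (by omega) hx
    refine ih (by omega) _ (sub_mem hx hp) ?_
    intro j hj hjk
    rw [map_sub]
    rcases hj.eq_or_lt with rfl | hj
    · rw [linz_comp_id (fun c hc => H.PS2 (n + 1) c (by omega) (by omega)) hP, sub_self]
    · rw [linz_comp_eq (fun c hc => H.PSgt j (n + 1) c (by omega) (by omega) (by omega)) hP,
        ← linz_comp_eq (fun c hc => H.PP (n + 2) j c (by omega) hj (by omega)) hx,
        h j hj hjk]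
      simp

theorem eta_fix {k : ℕ} : ∀ n, n + 1 ≤ k →
    ∀ x : I →₀ A, (∀ j, 2 ≤ j → j ≤ k → linz A (dP j) x = 0) → etaN A sS dP n x = x := by
  intro n
  induction n with
  | zero => intro _ x _; rw [etaN_zero]
  | succ n ih =>
    intro hn x h
    rw [etaN_succ, h (n + 2) (by omega) (by omega), map_zero, sub_zero]
    exact ih (by omega) x h

theorem eta_deg (H : SemiStrong len dP dM sS) {k : ℕ} : ∀ n, n + 1 ≤ k →
    ∀ i, 1 ≤ i → i ≤ n → ∀ z ∈ levC (A := A) len (k - 1),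
    etaN A sS dP n (linz A (sS i) z) = 0 := by
  intro n
  induction n with
  | zero => intro _ i h1 h2; omega
  | succ n ih =>
    intro hn i h1 hi z hz
    rw [etaN_succ]
    rcases hi.eq_or_lt with rfl | hi
    · rw [linz_comp_id (fun c hc => H.PS2 (n + 1) c (by omega) (by omega)) hz, sub_self, map_zero]
    · obtain ⟨n, rfl⟩ : ∃ l, n = l + 1 := ⟨n - 1, by omega⟩
      have hP := H.P_mem (i := n + 2) (by omega) (by omega) hz
      rw [linz_comp_eq (fun c hc => H.PSgt (n + 1 + 2) i c (by omega) (by omega) (by omega)) hz,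
        show n + 1 + 2 - 1 = n + 2 by omega, ← linz_comp_eq (f := sS i) (g := sS (n + 1))
          (fun c hc => H.SS i (n + 1) c (by omega) (by omega) (by omega)) hP, ← map_sub]
      exact ih (by omega) i h1 (by omega) _ (sub_mem hz (H.p_mem (by omega) hz))

theorem mem_normPart (H : SemiStrong len dP dM sS) {k : ℕ} {x : I →₀ A} :
    x ∈ normPart (A := A) len sS dP k ↔
      x ∈ levC (A := A) len k ∧ ∀ j, 2 ≤ j → j ≤ k → linz A (dP j) x = 0 := by
  have he : etaC (A := A) sS dP k = etaN A sS dP (k - 1) := rfl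
  rcases Nat.eq_zero_or_pos k with rfl | hk
  · constructor
    · rintro ⟨y, hy, rfl⟩
      rw [he, etaN_zero]
      exact ⟨hy, fun j h1 h2 => by omega⟩
    · rintro ⟨hx, -⟩
      exact ⟨x, hx, by rw [he, etaN_zero]⟩
  constructor
  · rintro ⟨y, hy, rfl⟩
    rw [he]
    refine ⟨?_, H.eta_kills (k - 1) (by omega) y hy fun j h1 h2 => by omega⟩
    have := H.degPart_le_levC k (H.eta_sub (k - 1) (by omega) y hy)
    simpa using sub_mem hy this
  · rintro ⟨hx, h⟩
    exact ⟨x, hx, by rw [he]; exact eta_fix (k := k) (k - 1) (by omega) x h⟩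

theorem sup_eq (H : SemiStrong len dP dM sS) (k : ℕ) :
    degPart (A := A) len sS k ⊔ normPart (A := A) len sS dP k = levC len k := by
  apply le_antisymm
  · exact sup_le (H.degPart_le_levC k) fun x hx => (H.mem_normPart.mp hx).1
  · intro x hx
    have he : etaC (A := A) sS dP k = etaN A sS dP (k - 1) := rfl
    have hn : etaN A sS dP (k - 1) x ∈ normPart (A := A) len sS dP k := ⟨x, hx, by rw [he]⟩
    rcases Nat.eq_zero_or_pos k with rfl | hk
    · rw [etaN_zero] at hn
      exact Submodule.mem_sup_right hn
    · have := Submodule.add_mem_sup (H.eta_sub (k - 1) (by omega) x hx) hn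
      simpa using this

theorem inf_eq (H : SemiStrong len dP dM sS) (k : ℕ) :
    degPart (A := A) len sS k ⊓ normPart (A := A) len sS dP k = ⊥ := by
  rw [eq_bot_iff]
  rintro x ⟨hd, hn⟩
  have h0 : degPart (A := A) len sS k ≤ LinearMap.ker (etaN A sS dP (k - 1)) :=
    degPart_le fun i h1 h2 z hz => H.eta_deg (k - 1) (by omega) i h1 (by omega) z hz
  have h1 := h0 hd
  rw [LinearMap.mem_ker] at h1
  rw [Submodule.mem_bot]
  rcases Nat.eq_zero_or_pos k with rfl | hk
  · rwa [etaN_zero] at h1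
  · rwa [eta_fix (k := k) (k - 1) (by omega) x (H.mem_normPart.mp hn).2] at h1

theorem bdry_eq (α β : ℤ) {k : ℕ} {x : I →₀ A} (hx : x ∈ levC (A := A) len k) :
    bdryC (A := A) len dP dM α β x
      = α • ∑ i ∈ Finset.range k, (-1 : ℤ) ^ i • linz A (dP (i + 1)) x
      + β • ∑ i ∈ Finset.range k, (-1 : ℤ) ^ i • linz A (dM (i + 1)) x := by
  have := levC_eq (len := len) (k := k) (f := bdryC (A := A) len dP dM α β)
    (g := α • ∑ i ∈ Finset.range k, (-1 : ℤ) ^ i • linz A (dP (i + 1))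
      + β • ∑ i ∈ Finset.range k, (-1 : ℤ) ^ i • linz A (dM (i + 1))) ?_ hx
  · rw [this]
    simp only [LinearMap.add_apply, LinearMap.smul_apply, LinearMap.sum_apply]
  · intro c hc a
    simp only [bdryC, Finsupp.lsum_single, hc, LinearMap.add_apply, LinearMap.sum_apply,
      LinearMap.smul_apply, linz_single, Finsupp.lsingle_apply, Finset.sum_add_distrib,
      Finset.smul_sum, mul_smul]

theorem alt_sum_mem {V : Type*} [AddCommGroup V] (S : Submodule ℤ V) (F : ℕ → V) (k r : ℕ)
    (hr : r + 1 < k) (heq : F r = F (r + 1))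
    (h : ∀ l, l < k → l ≠ r → l ≠ r + 1 → F l ∈ S) :
    ∑ l ∈ Finset.range k, (-1 : ℤ) ^ l • F l ∈ S := by
  rw [← Finset.add_sum_erase _ _ (Finset.mem_range.mpr (show r < k by omega)),
    ← Finset.add_sum_erase _ _ (show r + 1 ∈ (Finset.range k).erase r by
      simp; omega), ← add_assoc, heq, pow_succ]
  have : (-1 : ℤ) ^ r • F (r + 1) + ((-1 : ℤ) ^ r * -1) • F (r + 1) = 0 := by
    rw [← add_smul]; simp
  rw [this, zero_add]
  refine Submodule.sum_mem _ fun l hl => Submodule.smul_mem _ _ ?_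
  simp only [Finset.mem_erase, Finset.mem_range] at hl
  exact h l hl.2.2 hl.2.1 hl.1

theorem bdry_deg (H : SemiStrong len dP dM sS) (α β : ℤ) (k : ℕ) :
    Submodule.map (bdryC (A := A) len dP dM α β) (degPart (A := A) len sS k)
      ≤ degPart (A := A) len sS (k - 1) := by
  rw [Submodule.map_le_iff_le_comap]
  refine degPart_le fun i h1 h2 z hz => ?_
  rw [Submodule.mem_comap, bdry_eq α β (H.S_mem h1 h2 hz)]
  refine add_mem (Submodule.smul_mem _ _ ?_) (Submodule.smul_mem _ _ ?_)
  · refine alt_sum_mem _ (fun l => linz A (dP (l + 1)) (linz A (sS i) z)) k (i - 1)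
      (by omega) ?_ ?_
    · simp only [show i - 1 + 1 = i by omega]
      rw [linz_comp_id (fun c hc => H.PS1 i c (by omega) (by omega)) hz,
        linz_comp_id (fun c hc => H.PS2 i c (by omega) (by omega)) hz]
    · intro l hl ha hb
      rcases Nat.lt_or_ge (l + 1) i with h | h
      · rw [linz_comp_eq (fun c hc => H.PSlt (l + 1) i c (by omega) h (by omega)) hz]
        exact mem_degPart (by omega) (by omega) (H.P_mem (by omega) (by omega) hz)
      · rw [linz_comp_eq (fun c hc => H.PSgt (l + 1) i c (by omega) (by omega) (by omega)) hz]
        exact mem_degPart (by omega) (by omega) (H.P_mem (by omega) (by omega) hz)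
  · refine alt_sum_mem _ (fun l => linz A (dM (l + 1)) (linz A (sS i) z)) k (i - 1)
      (by omega) ?_ ?_
    · simp only [show i - 1 + 1 = i by omega]
      exact linz_comp_eq (fun c hc => H.MS i c (by omega) (by omega)) hz
    · intro l hl ha hb
      rcases Nat.lt_or_ge (l + 1) i with h | h
      · rw [linz_comp_eq (fun c hc => H.MSlt (l + 1) i c (by omega) h (by omega)) hz]
        exact mem_degPart (by omega) (by omega) (H.M_mem (by omega) (by omega) hz)
      · rw [linz_comp_eq (fun c hc => H.MSgt (l + 1) i c (by omega) (by omega) (by omega)) hz]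
        exact mem_degPart (by omega) (by omega) (H.M_mem (by omega) (by omega) hz)

theorem bdry_norm (H : SemiStrong len dP dM sS) (α β : ℤ) (k : ℕ) :
    Submodule.map (bdryC (A := A) len dP dM α β) (normPart (A := A) len sS dP k)
      ≤ normPart (A := A) len sS dP (k - 1) := by
  rintro _ ⟨x, hx, rfl⟩
  obtain ⟨hx, h0⟩ := H.mem_normPart.mp hx
  rw [H.mem_normPart, bdry_eq α β hx]
  constructor
  · refine add_mem (Submodule.smul_mem _ _ (Submodule.sum_mem _ fun l hl => ?_))
      (Submodule.smul_mem _ _ (Submodule.sum_mem _ fun l hl => ?_)) <;>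
    rw [Finset.mem_range] at hl
    · exact Submodule.smul_mem _ _ (H.P_mem (by omega) (by omega) hx)
    · exact Submodule.smul_mem _ _ (H.M_mem (by omega) (by omega) hx)
  · intro j hj hjk
    rw [map_add, map_smul, map_smul, map_sum, map_sum, Finset.sum_eq_zero, Finset.sum_eq_zero,
      smul_zero, smul_zero, add_zero]
    · intro l hl
      rw [Finset.mem_range] at hl
      rw [map_smul]
      rcases Nat.lt_or_ge j (l + 1) with h | h
      · rw [linz_comp_eq (fun c hc => H.PM j (l + 1) c (by omega) h (by omega)) hx,
          h0 j hj (by omega), map_zero, smul_zero]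
      · have e := linz_comp_eq (A := A)
          (fun c hc => H.MP (l + 1) (j + 1) c (by omega) (by omega) (by omega)) hx
        rw [h0 (j + 1) (by omega) (by omega), map_zero, Nat.add_sub_cancel] at e
        rw [← e, smul_zero]
    · intro l hl
      rw [Finset.mem_range] at hl
      rw [map_smul]
      rcases Nat.eq_zero_or_pos l with rfl | h
      · have e := linz_comp_eq (A := A)
          (fun c hc => H.PP (0 + 1) (j + 1) c (by omega) (by omega) (by omega)) hx
        rw [h0 (j + 1) (by omega) (by omega), map_zero, Nat.add_sub_cancel] at e
        rw [← e, smul_zero]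
      · rw [h0 (l + 1) (by omega) (by omega), map_zero, smul_zero]
end SemiStrong
end

/-- For a weakly RI-compatible left non-degenerate braided set
`(X, σ)`, a solid right module `M` and a left module `N`, the data
`(M × X^k × N, d'_i, d_i, s_i)` is a semi-strong skew cubical structure in Set,
and for every abelian group `A` the linearized chain groups split as
`C_k(A) = C_k^D ⊕ C_k^N`, the splitting being preserved by all differentials
`∂^{(α,β)}`. -/
theorem statement_11 {X M N : Type*} (σ : X × X → X × X)
    (hYB : s12 σ ∘ s23 σ ∘ s12 σ = s23 σ ∘ s12 σ ∘ s23 σ)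
    (star : X → X → X)
    (hstar1 : ∀ a b : X, (σ (star b a, b)).2 = a)
    (hstar2 : ∀ a b : X, star b ((σ (a, b)).2) = a)
    (dot : X → X → X)
    (hdot : ∀ a b : X, dot a b = (σ (star b a, b)).1)
    (tri : X → X → X)
    (htri : ∀ a b : X, tri a b = (σ (dot b a, b)).2)
    (hRI : ∀ a : X, dot a a = star a a)
    (tmap : X → X) (htmap : ∀ a : X, tmap a = dot a a)
    (actM : M → X → M)
    (hM : ∀ (m : M) (a b : X),
      actM (actM m a) b = actM (actM m (σ (a, b)).1) (σ (a, b)).2)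
    (actMinv : M → X → M)
    (hsolid : ∀ (m : M) (a : X),
      actM (actMinv m a) a = m ∧ actMinv (actM m a) a = m)
    (actN : X → N → N)
    (hN : ∀ (a b : X) (n : N),
      actN a (actN b n) = actN (σ (a, b)).1 (actN (σ (a, b)).2 n))
    (Jinv : List X → List X)
    (hJ1 : ∀ l : List X, guitar σ (Jinv l) = l)
    (hJ2 : ∀ l : List X, Jinv (guitar σ l) = l) :
    -- (I) semi-strong skew cubical structure in Set:
    ((∀ (k i j : ℕ) (p : M × List X × N), p.2.1.length = k →
        1 ≤ i → i < j → j ≤ k →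
        dPrime tri Jinv actM i (dPrime tri Jinv actM j p)
          = dPrime tri Jinv actM (j - 1) (dPrime tri Jinv actM i p) ∧
        dPrime tri Jinv actM i (dCyc star dot actN j p)
          = dCyc star dot actN (j - 1) (dPrime tri Jinv actM i p) ∧
        dCyc star dot actN i (dPrime tri Jinv actM j p)
          = dPrime tri Jinv actM (j - 1) (dCyc star dot actN i p) ∧
        dCyc star dot actN i (dCyc star dot actN j p)
          = dCyc star dot actN (j - 1) (dCyc star dot actN i p)) ∧
      (∀ (k i j : ℕ) (p : M × List X × N), p.2.1.length = k →
        1 ≤ i → i < j → j ≤ k →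
        dPrime tri Jinv actM i (sCyc tri Jinv tmap actMinv j p)
          = sCyc tri Jinv tmap actMinv (j - 1) (dPrime tri Jinv actM i p) ∧
        dCyc star dot actN i (sCyc tri Jinv tmap actMinv j p)
          = sCyc tri Jinv tmap actMinv (j - 1) (dCyc star dot actN i p)) ∧
      (∀ (k i j : ℕ) (p : M × List X × N), p.2.1.length = k →
        1 ≤ j → j + 1 < i → i ≤ k + 1 →
        dPrime tri Jinv actM i (sCyc tri Jinv tmap actMinv j p)
          = sCyc tri Jinv tmap actMinv j (dPrime tri Jinv actM (i - 1) p) ∧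
        dCyc star dot actN i (sCyc tri Jinv tmap actMinv j p)
          = sCyc tri Jinv tmap actMinv j (dCyc star dot actN (i - 1) p)) ∧
      (∀ (k i : ℕ) (p : M × List X × N), p.2.1.length = k → 1 ≤ i → i ≤ k →
        dCyc star dot actN i (sCyc tri Jinv tmap actMinv i p)
          = dCyc star dot actN (i + 1) (sCyc tri Jinv tmap actMinv i p)) ∧
      (∀ (k i j : ℕ) (p : M × List X × N), p.2.1.length = k →
        1 ≤ i → i ≤ j → j ≤ k →
        sCyc tri Jinv tmap actMinv i (sCyc tri Jinv tmap actMinv j p)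
          = sCyc tri Jinv tmap actMinv (j + 1) (sCyc tri Jinv tmap actMinv i p)) ∧
      (∀ (k i : ℕ) (p : M × List X × N), p.2.1.length = k → 1 ≤ i → i ≤ k →
        dPrime tri Jinv actM i (sCyc tri Jinv tmap actMinv i p) = p ∧
        dPrime tri Jinv actM (i + 1) (sCyc tri Jinv tmap actMinv i p) = p)) ∧
    -- (II) the linearized splitting, preserved by all differentials:
    (∀ (A : Type) (_ : AddCommGroup A)
        (len : M × List X × N → ℕ)
        (sS dP dM : ℕ → (M × List X × N → M × List X × N)),
      (∀ p : M × List X × N, len p = p.2.1.length) →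
      (∀ i, sS i = sCyc tri Jinv tmap actMinv i) →
      (∀ i, dP i = dPrime tri Jinv actM i) →
      (∀ i, dM i = dCyc star dot actN i) →
      (∀ k : ℕ,
        degPart (A := A) len sS k ⊔ normPart (A := A) len sS dP k
          = levC len k ∧
        degPart (A := A) len sS k ⊓ normPart (A := A) len sS dP k = ⊥) ∧
      (∀ (α β : ℤ) (k : ℕ),
        Submodule.map (bdryC (A := A) len dP dM α β)
            (degPart (A := A) len sS k)
          ≤ degPart (A := A) len sS (k - 1) ∧
        Submodule.map (bdryC (A := A) len dP dM α β)
            (normPart (A := A) len sS dP k)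
          ≤ normPart (A := A) len sS dP (k - 1))) := by
  have hL := algLaws_of_YB σ hYB star hstar1 hstar2 dot hdot
  have hchi := chiFn_laws σ star hstar1 Jinv hJ1 hJ2 hstar2 dot hL tri htri
  have hc := chiL_eq σ star hstar1 Jinv hJ1 hJ2 tri
  have hmod : ModLaws star dot (chiFn star tri Jinv) tmap actM actMinv :=
    { alg := hL
      chi := hchi
      ri := hRI
      tm := htmap
      act := fun m u v => by rw [hM, hstar1, ← hdot]
      inv1 := fun m a => (hsolid m a).1
      inv2 := fun m a => (hsolid m a).2 }
  have hNs : ∀ u v n, actN (star v u) (actN v n) = actN (dot u v) (actN u n) := by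
    intro u v n
    rw [hN, hstar1, ← hdot]
  have H := semiStrong_main (tri := tri) (Jinv := Jinv) hc hmod hNs
  refine ⟨⟨?_, ?_, ?_, ?_, ?_, ?_⟩, ?_⟩
  · rintro k i j p rfl h1 h2 h3
    exact ⟨H.PP i j p h1 h2 h3, H.PM i j p h1 h2 h3, H.MP i j p h1 h2 h3, H.MM i j p h1 h2 h3⟩
  · rintro k i j p rfl h1 h2 h3
    exact ⟨H.PSlt i j p h1 h2 h3, H.MSlt i j p h1 h2 h3⟩
  · rintro k i j p rfl h1 h2 h3
    exact ⟨H.PSgt i j p h1 h2 h3, H.MSgt i j p h1 h2 h3⟩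
  · rintro k i p rfl h1 h2
    exact H.MS i p h1 h2
  · rintro k i j p rfl h1 h2 h3
    exact H.SS i j p h1 h2 h3
  · rintro k i p rfl h1 h2
    exact ⟨H.PS1 i p h1 h2, H.PS2 i p h1 h2⟩
  · intro A _ len sS dP dM hlen hs hp hm
    obtain rfl : len = fun p => p.2.1.length := funext hlen
    obtain rfl : sS = sCyc tri Jinv tmap actMinv := funext hs
    obtain rfl : dP = dPrime tri Jinv actM := funext hp
    obtain rfl : dM = dCyc star dot actN := funext hm
    exact ⟨fun k => ⟨H.sup_eq k, H.inf_eq k⟩,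
      fun α β k => ⟨H.bdry_deg α β k, H.bdry_norm α β k⟩⟩
end

section
/- Let (X, ·) be a cycle set, A an abelian group, and f : X × X → A any map. Endow the set A × X with the operation (α, x)·(β, y) := (β + f(x,y), x·y). Then A × X with this operation is a cycle set if and only if f is a 2-cocycle, i.e., f(x,z) + f(x·y, x·z) = f(y,z) + f(y·x, y·z) for all x, y, z ∈ X. -/
/-- For a cycle set `(X, ·)`, an abelian group `A`, and a map
`f : X × X → A`, the operation `(α,x)·(β,y) = (β + f(x,y), x·y)` makes `A × X`
a cycle set if and only if `f` is a 2-cocycle. -/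
theorem statement_12 {X A : Type*} [AddCommGroup A]
    (op : X → X → X)
    (hbij : ∀ a : X, Function.Bijective (op a))
    (hcyc : ∀ a b c : X, op (op a b) (op a c) = op (op b a) (op b c))
    (f : X × X → A)
    (mul : A × X → A × X → A × X)
    (hmul : ∀ u v : A × X, mul u v = (v.1 + f (u.2, v.2), op u.2 v.2)) :
    ((∀ u : A × X, Function.Bijective (mul u)) ∧
      (∀ u v w : A × X, mul (mul u v) (mul u w) = mul (mul v u) (mul v w)))
    ↔ (∀ x y z : X,
        f (x, z) + f (op x y, op x z) = f (y, z) + f (op y x, op y z)) := by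
  constructor
  · rintro ⟨-, h⟩ x y z
    have h1 := congrArg Prod.fst (h (0, x) (0, y) (0, z))
    simpa [hmul] using h1
  · intro h
    refine ⟨fun u => ⟨?_, ?_⟩, ?_⟩
    · rintro ⟨a, x⟩ ⟨b, y⟩ hxy
      rw [hmul, hmul, Prod.mk.injEq] at hxy
      obtain ⟨h1, h2⟩ := hxy
      have h3 : x = y := (hbij u.2).1 h2
      subst h3
      have h4 : a = b := add_right_cancel h1
      rw [h4]
    · rintro ⟨b, y⟩
      obtain ⟨x, hx⟩ := (hbij u.2).2 y
      refine ⟨(b - f (u.2, x), x), ?_⟩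
      rw [hmul, Prod.mk.injEq]
      exact ⟨sub_add_cancel _ _, hx⟩
    · rintro ⟨a, x⟩ ⟨b, y⟩ ⟨c, z⟩
      simp only [hmul, Prod.mk.injEq]
      exact ⟨by rw [add_assoc, add_assoc, h], hcyc x y z⟩
end

section
/- Let (X, ·) be a cycle set, A an abelian group, and (Y, p) an extension of X by A. For any set-theoretic section s : X → Y of p (i.e., p ∘ s = id_X), there is a unique map f : X × X → A satisfying f(x₁,x₂) • s(x₁·x₂) = s(x₁)·s(x₂) for all x₁, x₂ ∈ X (where • is the A-action on Y), and this f is a 2-cocycle of X with values in A. Moreover, if s' : X → Y is another section with associated 2-cocycle f', then f and f' are cohomologous. -/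
/-- Given an extension `(Y, p)` of a cycle set `(X, ·)` by an
abelian group `A` and a set-theoretic section `s` of `p`, there is a unique map
`f : X × X → A` with `f(x₁,x₂) • s(x₁·x₂) = s(x₁)·s(x₂)`; this `f` is a
2-cocycle, and the cocycles associated to two sections are cohomologous. -/
theorem statement_13 {X Y A : Type*} [AddCommGroup A]
    (opX : X → X → X)
    (hXbij : ∀ a : X, Function.Bijective (opX a))
    (hXcyc : ∀ a b c : X, opX (opX a b) (opX a c) = opX (opX b a) (opX b c))
    (opY : Y → Y → Y)
    (hYbij : ∀ y : Y, Function.Bijective (opY y))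
    (hYcyc : ∀ y z w : Y, opY (opY y z) (opY y w) = opY (opY z y) (opY z w))
    (p : Y → X) (hsurj : Function.Surjective p)
    (hhom : ∀ y z : Y, p (opY y z) = opX (p y) (p z))
    (act : A → Y → Y)
    (hact0 : ∀ y : Y, act 0 y = y)
    (hactadd : ∀ (α β : A) (y : Y), act (α + β) y = act α (act β y))
    (hreg : ∀ y z : Y, p y = p z → ∃! α : A, act α z = y)
    (hfib : ∀ (α : A) (y : Y), p (act α y) = p y)
    (hcompat1 : ∀ (α : A) (y z : Y), opY (act α y) z = opY y z)
    (hcompat2 : ∀ (α : A) (y z : Y), opY y (act α z) = act α (opY y z))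
    (s : X → Y) (hs : ∀ x : X, p (s x) = x) :
    (∃! f : X × X → A,
        ∀ x₁ x₂ : X, act (f (x₁, x₂)) (s (opX x₁ x₂)) = opY (s x₁) (s x₂)) ∧
    (∀ f : X × X → A,
      (∀ x₁ x₂ : X, act (f (x₁, x₂)) (s (opX x₁ x₂)) = opY (s x₁) (s x₂)) →
      ((∀ x y z : X,
          f (x, z) + f (opX x y, opX x z) = f (y, z) + f (opX y x, opX y z)) ∧
       (∀ (s' : X → Y) (f' : X × X → A), (∀ x : X, p (s' x) = x) →
         (∀ x₁ x₂ : X, act (f' (x₁, x₂)) (s' (opX x₁ x₂)) = opY (s' x₁) (s' x₂)) →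
         ∃ γ : X → A, ∀ x y : X, f' (x, y) - f (x, y) = γ (opX x y) - γ y))) := by
  have inj : ∀ (α β : A) (y : Y), act α y = act β y → α = β := fun α β y h =>
    (hreg (act β y) y (hfib β y)).unique h rfl
  refine ⟨?_, ?_⟩
  · have hp : ∀ q : X × X, p (opY (s q.1) (s q.2)) = p (s (opX q.1 q.2)) := by
      intro q
      rw [hhom, hs, hs, hs]
    choose f hf using fun q : X × X => (hreg _ _ (hp q)).exists
    refine ⟨f, fun x₁ x₂ => hf (x₁, x₂), ?_⟩
    intro g hg
    funext q
    exact inj _ _ _ ((hg q.1 q.2).trans (hf q).symm)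
  · intro f hf
    refine ⟨?_, ?_⟩
    · have key : ∀ x y z : X, opY (opY (s x) (s y)) (opY (s x) (s z)) =
          act (f (x, z) + f (opX x y, opX x z)) (s (opX (opX x y) (opX x z))) := by
        intro x y z
        rw [← hf x y, ← hf x z, hcompat1, hcompat2, ← hf, hactadd]
      intro x y z
      apply inj _ _ (s (opX (opX x y) (opX x z)))
      rw [← key, hYcyc, key, hXcyc]
    · intro s' f' hs' hf'
      have hp : ∀ x : X, p (s x) = p (s' x) := fun x => by rw [hs, hs']
      choose γ hγ using fun x : X => (hreg _ _ (hp x)).exists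
      refine ⟨γ, fun x y => ?_⟩
      have h : f (x, y) + γ (opX x y) = γ y + f' (x, y) := by
        apply inj _ _ (s' (opX x y))
        rw [hactadd, hactadd, hγ, hf, hf', ← hcompat2, hγ, ← hγ x, hcompat1]
      rw [sub_eq_sub_iff_add_eq_add, add_comm (f' _), ← h, add_comm]
end

section
/- Let (X, ·) be a cycle set and A an abelian group. Every extension (Y, p) of X by A is equivalent to the extension (A ×_f X, p_X) for some 2-cocycle f ∈ Z²(X, A); that is, there exist a 2-cocycle f and a cycle-set isomorphism F : A ×_f X → Y with p ∘ F = p_X and F(α • (β, x)) = α • F(β, x) for all α, β ∈ A, x ∈ X. -/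
/-- Every extension `(Y, p)` of a cycle set `(X, ·)` by an abelian
group `A` is equivalent to the extension `(A ×_f X, p_X)` for some 2-cocycle `f`. -/
theorem statement_14 {X Y A : Type*} [AddCommGroup A]
    (opX : X → X → X)
    (hXbij : ∀ a : X, Function.Bijective (opX a))
    (hXcyc : ∀ a b c : X, opX (opX a b) (opX a c) = opX (opX b a) (opX b c))
    (opY : Y → Y → Y)
    (hYbij : ∀ y : Y, Function.Bijective (opY y))
    (hYcyc : ∀ y z w : Y, opY (opY y z) (opY y w) = opY (opY z y) (opY z w))
    (p : Y → X) (hsurj : Function.Surjective p)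
    (hhom : ∀ y z : Y, p (opY y z) = opX (p y) (p z))
    (act : A → Y → Y)
    (hact0 : ∀ y : Y, act 0 y = y)
    (hactadd : ∀ (α β : A) (y : Y), act (α + β) y = act α (act β y))
    (hreg : ∀ y z : Y, p y = p z → ∃! α : A, act α z = y)
    (hfib : ∀ (α : A) (y : Y), p (act α y) = p y)
    (hcompat1 : ∀ (α : A) (y z : Y), opY (act α y) z = opY y z)
    (hcompat2 : ∀ (α : A) (y z : Y), opY y (act α z) = act α (opY y z)) :
    ∃ f : X × X → A,
      (∀ x y z : X,
        f (x, z) + f (opX x y, opX x z) = f (y, z) + f (opX y x, opX y z)) ∧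
      ∃ F : A × X → Y, Function.Bijective F ∧
        (∀ u v : A × X,
          F (v.1 + f (u.2, v.2), opX u.2 v.2) = opY (F u) (F v)) ∧
        (∀ u : A × X, p (F u) = u.2) ∧
        (∀ (α β : A) (x : X), F (α + β, x) = act α (F (β, x))) := by
  choose s hs using hsurj
  have key : ∀ q : X × X, ∃ α : A, act α (s (opX q.1 q.2)) = opY (s q.1) (s q.2) := by
    intro q
    obtain ⟨α, hα, -⟩ := hreg (opY (s q.1) (s q.2)) (s (opX q.1 q.2)) (by
      rw [hhom, hs, hs, hs])
    exact ⟨α, hα⟩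
  choose f hf using key
  have hf' : ∀ x z : X, opY (s x) (s z) = act (f (x, z)) (s (opX x z)) :=
    fun x z => (hf (x, z)).symm
  have hinj : ∀ (α β : A) (y : Y), act α y = act β y → α = β := by
    intro α β y h
    exact (hreg (act β y) y (hfib β y)).unique h rfl
  have expand : ∀ x y z : X, opY (opY (s x) (s y)) (opY (s x) (s z)) =
      act (f (x, z) + f (opX x y, opX x z)) (s (opX (opX x y) (opX x z))) := by
    intro x y z
    rw [hf' x y, hf' x z, hcompat1, hcompat2, hf', hactadd]
  refine ⟨f, ?_, fun u => act u.1 (s u.2), ⟨?_, ?_⟩, ?_, ?_, ?_⟩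
  · intro x y z
    have h := hYcyc (s x) (s y) (s z)
    rw [expand, expand, hXcyc x y z] at h
    exact hinj _ _ _ h
  · rintro ⟨α, x⟩ ⟨β, y⟩ h
    have hxy : x = y := by
      have := congrArg p h
      simpa [hfib, hs] using this
    subst hxy
    rw [hinj α β (s x) h]
  · intro y
    obtain ⟨α, hα, -⟩ := hreg y (s (p y)) (hs _).symm
    exact ⟨(α, p y), hα⟩
  · rintro ⟨α, x⟩ ⟨β, y⟩
    simp only [hcompat1, hcompat2, hf', hactadd]
  · intro u
    simp only [hfib, hs]
  · intro α β x
    exact hactadd _ _ _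
end

section
/- Let (X, ·) be a cycle set, A an abelian group, and f, g ∈ Z²(X, A). The extensions (A ×_f X, p_X) and (A ×_g X, p_X) are equivalent — i.e., there is a cycle-set isomorphism F : A ×_f X → A ×_g X with p_X ∘ F = p_X and F(α • (β, x)) = α • F(β, x) — if and only if f and g are cohomologous. -/
/-- Two extensions `A ×_f X` and `A ×_g X` built from 2-cocycles
`f, g` are equivalent if and only if `f` and `g` are cohomologous. -/
theorem statement_15 {X A : Type*} [AddCommGroup A]
    (op : X → X → X)
    (hbij : ∀ a : X, Function.Bijective (op a))
    (hcyc : ∀ a b c : X, op (op a b) (op a c) = op (op b a) (op b c))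
    (f g : X × X → A)
    (hf : ∀ x y z : X,
      f (x, z) + f (op x y, op x z) = f (y, z) + f (op y x, op y z))
    (hg : ∀ x y z : X,
      g (x, z) + g (op x y, op x z) = g (y, z) + g (op y x, op y z)) :
    (∃ F : A × X → A × X, Function.Bijective F ∧
        (∀ u v : A × X,
          F (v.1 + f (u.2, v.2), op u.2 v.2)
            = ((F v).1 + g ((F u).2, (F v).2), op (F u).2 (F v).2)) ∧
        (∀ u : A × X, (F u).2 = u.2) ∧
        (∀ (α β : A) (x : X), F (α + β, x) = (α + (F (β, x)).1, (F (β, x)).2)))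
    ↔ ∃ γ : X → A, ∀ x y : X, g (x, y) - f (x, y) = γ (op x y) - γ y := by
  constructor
  · rintro ⟨F, -, hF, h2, hA⟩
    refine ⟨fun x => (F (0, x)).1, fun x y => ?_⟩
    have h1 := congrArg Prod.fst (hF (0, x) (0, y))
    have h3 := congrArg Prod.fst (hA (f (x, y)) 0 (op x y))
    simp only [h2, zero_add, add_zero] at h1 h3
    rw [h3] at h1
    rw [sub_eq_sub_iff_add_eq_add, add_comm (g (x, y)), ← h1, add_comm]
  · rintro ⟨γ, hγ⟩
    refine ⟨fun u => (u.1 + γ u.2, u.2), ⟨?_, ?_⟩, ?_, fun _ => rfl, ?_⟩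
    · rintro ⟨a, x⟩ ⟨b, y⟩ h
      simp only [Prod.mk.injEq] at h
      obtain ⟨h, rfl⟩ := h
      rw [add_right_cancel h]
    · rintro ⟨a, x⟩
      exact ⟨(a - γ x, x), by simp⟩
    · rintro ⟨a, x⟩ ⟨b, y⟩
      have h := hγ x y
      rw [sub_eq_sub_iff_add_eq_add] at h
      simp only [Prod.mk.injEq, and_true]
      rw [add_assoc, add_assoc, add_comm (f (x, y)), ← h, add_comm (g (x, y))]
    · intro α β x
      simp [add_assoc]
end

section
/- Let (X, ·) be a square-free cycle set which is multipermutation of level m, with cardinality N. Define f : X × X → ℤ/2ℤ by f(x,y) = 0 if x = y and f(x,y) = 1 if x ≠ y. Then f is a 2-cocycle, and the cycle set Y := ℤ/2ℤ ×_f X (with operation (α,x)·(β,y) = (β + f(x,y), x·y)) is a square-free cycle set of cardinality 2N which is multipermutation of level m+1; moreover the projection (α, x) ↦ x induces a cycle-set isomorphism Ret(Y) ≅ X. -/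
universe u

/-- The retraction equivalence relation on a cycle set:
`a ≈ a'` iff `a·b = a'·b` for all `b`. -/
def retSetoid {X : Type u} (op : X → X → X) : Setoid X :=
  ⟨fun a a' => ∀ b, op a b = op a' b,
    ⟨fun _ _ => rfl, fun h b => (h b).symm, fun h1 h2 b => (h1 b).trans (h2 b)⟩⟩

/-- The induced operation on the retraction quotient (defined via choice of
representatives; for non-degenerate cycle sets it is well defined on classes
and satisfies `retOp op ⟦a⟧ ⟦b⟧ = ⟦op a b⟧`). -/
noncomputable def retOp {X : Type u} (op : X → X → X) :
    Quotient (retSetoid op) → Quotient (retSetoid op) → Quotient (retSetoid op) :=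
  fun q q' => Quotient.mk (retSetoid op) (op q.out q'.out)

/-- The `n`-fold iterated retraction `Retⁿ(X)`, as a pair (carrier, operation). -/
noncomputable def retIter (X : Type u) (op : X → X → X) :
    ℕ → (Y : Type u) × (Y → Y → Y)
  | 0 => ⟨X, op⟩
  | n + 1 =>
      ⟨Quotient (retSetoid (retIter X op n).2), retOp (retIter X op n).2⟩

/-- `(X, op)` is multipermutation of level `m`: `m` is the minimal number of
retractions turning `X` into a one-element set. -/
def IsMPLevel (X : Type u) (op : X → X → X) (m : ℕ) : Prop :=
  (Nonempty (retIter X op m).1 ∧ Subsingleton (retIter X op m).1) ∧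
  ∀ n : ℕ, (Nonempty (retIter X op n).1 ∧ Subsingleton (retIter X op n).1) →
    m ≤ n

/-- Left translations are surjective and the cycle set equation holds. -/
def RetGood {A : Type u} (op : A → A → A) : Prop :=
  (∀ a, Function.Surjective (op a)) ∧
  ∀ a b c : A, op (op a b) (op a c) = op (op b a) (op b c)

theorem retOp_mk {A : Type u} {op : A → A → A} (h : RetGood op) (a b : A) :
    retOp op (Quotient.mk (retSetoid op) a) (Quotient.mk (retSetoid op) b)
      = Quotient.mk (retSetoid op) (op a b) := by
  have ha : ∀ c, op (Quotient.mk (retSetoid op) a).out c = op a c :=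
    Quotient.exact (Quotient.out_eq (Quotient.mk (retSetoid op) a))
  have hb : ∀ c, op (Quotient.mk (retSetoid op) b).out c = op b c :=
    Quotient.exact (Quotient.out_eq (Quotient.mk (retSetoid op) b))
  apply Quotient.sound
  intro c
  rw [ha]
  obtain ⟨d, rfl⟩ := h.1 a c
  rw [h.2, h.2 a b d, hb, hb]

theorem RetGood.ret {A : Type u} {op : A → A → A} (h : RetGood op) : RetGood (retOp op) := by
  constructor
  · intro a b
    induction a using Quotient.inductionOn with | _ a =>
    induction b using Quotient.inductionOn with | _ b =>
    obtain ⟨d, rfl⟩ := h.1 a b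
    exact ⟨Quotient.mk _ d, retOp_mk h a d⟩
  · intro a b c
    induction a using Quotient.inductionOn with | _ a =>
    induction b using Quotient.inductionOn with | _ b =>
    induction c using Quotient.inductionOn with | _ c =>
    simp only [retOp_mk h]
    rw [h.2]

theorem RetGood.iter {A : Type u} {op : A → A → A} (h : RetGood op) (n : ℕ) :
    RetGood (retIter A op n).2 := by
  induction n with
  | zero => exact h
  | succ n ih => exact ih.ret

theorem ret_iso {A B : Type u} {op : A → A → A} {op' : B → B → B} (h : RetGood op)
    (h' : RetGood op') (e : A ≃ B) (he : ∀ a b, e (op a b) = op' (e a) (e b)) :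
    ∃ e' : Quotient (retSetoid op) ≃ Quotient (retSetoid op'),
      ∀ a b, e' (retOp op a b) = retOp op' (e' a) (e' b) := by
  refine ⟨Quotient.congr e ?_, ?_⟩
  · intro a b
    constructor
    · intro hab c
      obtain ⟨d, rfl⟩ := e.surjective c
      rw [← he, ← he]
      exact congrArg e (hab d)
    · intro hab c
      apply e.injective
      rw [he, he]
      exact hab (e c)
  · intro a b
    induction a using Quotient.inductionOn with | _ a =>
    induction b using Quotient.inductionOn with | _ b =>
    rw [retOp_mk h]
    simp only [Quotient.congr_mk]
    rw [retOp_mk h', he]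

theorem iter_iso {A B : Type u} {op : A → A → A} {op' : B → B → B} (h : RetGood op)
    (h' : RetGood op') (e : Quotient (retSetoid op) ≃ B)
    (he : ∀ a b, e (retOp op a b) = op' (e a) (e b)) (n : ℕ) :
    ∃ e' : (retIter A op (n + 1)).1 ≃ (retIter B op' n).1,
      ∀ a b, e' ((retIter A op (n + 1)).2 a b) = (retIter B op' n).2 (e' a) (e' b) := by
  induction n with
  | zero => exact ⟨e, he⟩
  | succ n ih =>
    obtain ⟨e', he'⟩ := ih
    exact ret_iso (h.iter (n + 1)) (h'.iter n) e' he'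

/-- A square-free multipermutation cycle set of level `m` and
size `N` admits, via the 2-cocycle `f(x,y) = δ_{x≠y} ∈ ℤ/2ℤ`, an extension
`ℤ/2ℤ ×_f X` of size `2N` which is a square-free multipermutation cycle set of
level `m+1`, and whose retraction is isomorphic (via the projection) to `X`. -/
theorem statement_16 {X : Type u} [Finite X] (op : X → X → X)
    (hbij : ∀ a : X, Function.Bijective (op a))
    (hcyc : ∀ a b c : X, op (op a b) (op a c) = op (op b a) (op b c))
    (hsqfree : ∀ a : X, op a a = a)
    (N m : ℕ) (hN : Nat.card X = N)
    (hMP : IsMPLevel X op m)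
    (f : X × X → ZMod 2)
    (hf1 : ∀ x : X, f (x, x) = 0)
    (hf2 : ∀ x y : X, x ≠ y → f (x, y) = 1)
    (opY : ZMod 2 × X → ZMod 2 × X → ZMod 2 × X)
    (hopY : ∀ u v : ZMod 2 × X, opY u v = (v.1 + f (u.2, v.2), op u.2 v.2)) :
    (∀ x y z : X,
      f (x, z) + f (op x y, op x z) = f (y, z) + f (op y x, op y z)) ∧
    (∀ u : ZMod 2 × X, Function.Bijective (opY u)) ∧
    (∀ u v w : ZMod 2 × X,
      opY (opY u v) (opY u w) = opY (opY v u) (opY v w)) ∧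
    (∀ u : ZMod 2 × X, opY u u = u) ∧
    Nat.card (ZMod 2 × X) = 2 * N ∧
    IsMPLevel (ZMod 2 × X) opY (m + 1) ∧
    ∃ e : Quotient (retSetoid opY) ≃ X,
      (∀ u : ZMod 2 × X, e (Quotient.mk (retSetoid opY) u) = u.2) ∧
      (∀ q q', e (retOp opY q q') = op (e q) (e q')) := by
  have hco : ∀ x y z : X,
      f (x, z) + f (op x y, op x z) = f (y, z) + f (op y x, op y z) := by
    have key : ∀ x y z : X, f (op x y, op x z) = f (y, z) := by
      intro x y z
      by_cases hyz : y = z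
      · subst hyz; rw [hf1, hf1]
      · rw [hf2 _ _ hyz, hf2 _ _ (fun h => hyz ((hbij x).1 h))]
    intro x y z
    rw [key, key, add_comm]
  have hcy : ∀ u v w : ZMod 2 × X,
      opY (opY u v) (opY u w) = opY (opY v u) (opY v w) := by
    rintro ⟨a, x⟩ ⟨b, y⟩ ⟨c, z⟩
    simp only [hopY]
    rw [hcyc x y z, add_assoc, add_assoc, hco x y z]
  have hbY : ∀ u : ZMod 2 × X, Function.Bijective (opY u) := by
    rintro ⟨a, x⟩
    constructor
    · rintro ⟨b, y⟩ ⟨c, z⟩ h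
      simp only [hopY, Prod.mk.injEq] at h
      have hyz := (hbij x).1 h.2
      subst hyz
      rw [add_right_cancel h.1]
    · rintro ⟨c, z⟩
      obtain ⟨y, rfl⟩ := (hbij x).2 z
      exact ⟨(c - f (x, y), y), by simp [hopY]⟩
  have gX : RetGood op := ⟨fun a => (hbij a).2, hcyc⟩
  have gY : RetGood opY := ⟨fun a => (hbY a).2, hcy⟩
  have hrel : ∀ u v : ZMod 2 × X, (retSetoid opY).r u v ↔ u.2 = v.2 := by
    rintro ⟨a, x⟩ ⟨b, y⟩
    constructor
    · intro h
      have h1 := congrArg Prod.fst (h (0, x))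
      simp only [hopY, zero_add, hf1] at h1
      by_contra hne
      rw [hf2 y x (fun h => hne h.symm)] at h1
      exact absurd h1 (by decide)
    · intro h c
      simp only at h
      simp only [hopY, h]
  have hE : ∃ e : Quotient (retSetoid opY) ≃ X,
      (∀ u : ZMod 2 × X, e (Quotient.mk (retSetoid opY) u) = u.2) ∧
      (∀ q q', e (retOp opY q q') = op (e q) (e q')) := by
    refine ⟨⟨Quotient.lift Prod.snd (fun u v h => (hrel u v).1 h),
      fun x => Quotient.mk _ (0, x), ?_, ?_⟩, ?_, ?_⟩
    · intro q
      induction q using Quotient.inductionOn with | _ u =>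
      exact Quotient.sound ((hrel _ _).2 rfl)
    · intro x
      rfl
    · intro u
      rfl
    · intro q q'
      induction q using Quotient.inductionOn with | _ u =>
      induction q' using Quotient.inductionOn with | _ v =>
      rw [retOp_mk gY]
      change (opY u v).2 = op u.2 v.2
      rw [hopY]
  refine ⟨hco, hbY, hcy, ?_, ?_, ?_, hE⟩
  · rintro ⟨a, x⟩
    simp [hopY, hf1, hsqfree]
  · rw [Nat.card_prod, hN, Nat.card_zmod]
  · obtain ⟨e, -, he⟩ := hE
    refine ⟨?_, ?_⟩
    · obtain ⟨e', -⟩ := iter_iso gY gX e he m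
      obtain ⟨⟨h1, h2⟩, -⟩ := hMP
      exact ⟨e'.nonempty_congr.2 h1, e'.subsingleton_congr.2 h2⟩
    · rintro (_ | n) ⟨h1, h2⟩
      · exfalso
        obtain ⟨a, x⟩ : ZMod 2 × X := h1.some
        have h3 : ((0 : ZMod 2), x) = (1, x) := h2.elim _ _
        exact absurd (congrArg Prod.fst h3) (by simp)
      · obtain ⟨e', -⟩ := iter_iso gY gX e he n
        exact Nat.succ_le_succ
          (hMP.2 n ⟨e'.nonempty_congr.1 h1, e'.subsingleton_congr.1 h2⟩)
end
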